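/- Let k be a commutative unital ring and ε ∈ k invertible. The morphism Tor_q^{BR_{n-1}(ε)}(𝟙,𝟙) → Tor_q^{BR_n(ε)}(𝟙,𝟙) induced by the inclusion BR_{n-1}(ε) → BR_n(ε) is an isomorphism for n ≥ 2q+1. -/

import Mathlib

open scoped TensorProduct

noncomputable section

/-! ### Bar-complex homology of an augmented algebra

For a `k`-algebra `A` with augmentation `ε : A →ₐ[k] k` (the algebra map corresponding to
the trivial module `𝟙 = k`), we form the (unnormalized) bar complex `C_q = A^{⊗ q}`
(tensors over `k`), with the usual differential
`d(a₁⊗…⊗a_q) = ε(a₁)(a₂⊗…) + Σ (-1)^i (…a_i a_{i+1}…) + (-1)^q ε(a_q)(a₁⊗…)`,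
whose homology is `Tor_*^A(𝟙,𝟙)`. -/

/-- The modules `A^{⊗ q}` of the bar complex. -/
def barC (k : Type) [CommRing k] (A : Type) [Ring A] [Algebra k A] : ℕ → ModuleCat k
  | 0 => ModuleCat.of k k
  | (q + 1) => ModuleCat.of k (A ⊗[k] (barC k A q))

variable (k : Type) [CommRing k] (A : Type) [Ring A] [Algebra k A] (ε : A →ₐ[k] k)

/-- Left multiplication of `A` on the leftmost bar factor (via `ε` in degree `0`). -/
def barAct : ∀ q : ℕ, A →ₗ[k] ((barC k A q : Type) →ₗ[k] (barC k A q : Type))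
  | 0 => (LinearMap.lsmul k k).comp ε.toLinearMap
  | (q + 1) =>
    show A →ₗ[k] ((A ⊗[k] (barC k A q : Type)) →ₗ[k] (A ⊗[k] (barC k A q : Type))) from
    { toFun := fun a => TensorProduct.map (LinearMap.mulLeft k a) LinearMap.id
      map_add' := by
        intro a b
        refine TensorProduct.ext' fun x y => ?_
        simp [add_mul, TensorProduct.add_tmul]
      map_smul' := by
        intro c a
        refine TensorProduct.ext' fun x y => ?_
        simp [TensorProduct.smul_tmul', smul_mul_assoc] }

/-- All terms of the bar differential except the first face. -/
def barB : ∀ q : ℕ, ((A ⊗[k] (barC k A q : Type)) →ₗ[k] (barC k A q : Type))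
  | 0 => - TensorProduct.lift ((LinearMap.lsmul k (barC k A 0 : Type)).comp ε.toLinearMap)
  | (q + 1) =>
    show (A ⊗[k] (A ⊗[k] (barC k A q : Type))) →ₗ[k] (A ⊗[k] (barC k A q : Type)) from
    TensorProduct.lift (LinearMap.mk₂ k
      (fun (a : A) (x : A ⊗[k] (barC k A q : Type)) =>
        -((show A →ₗ[k] ((A ⊗[k] (barC k A q : Type)) →ₗ[k] (A ⊗[k] (barC k A q : Type))) from
            barAct k A ε (q + 1)) a x) - a ⊗ₜ[k] (barB q x))
      (by intro a b x
          have key : ∀ (f : A →ₗ[k] ((A ⊗[k] (barC k A q : Type)) →ₗ[k] (A ⊗[k] (barC k A q : Type))))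
              (g : (A ⊗[k] (barC k A q : Type)) →ₗ[k] (barC k A q : Type)),
              -(f (a + b) x) - (a + b) ⊗ₜ[k] (g x)
                = (-(f a x) - a ⊗ₜ[k] (g x)) + (-(f b x) - b ⊗ₜ[k] (g x)) := by
            intro f g
            simp only [map_add, LinearMap.add_apply, TensorProduct.add_tmul]
            abel
          exact key (barAct k A ε (q + 1)) (barB q))
      (by intro c a x
          have key : ∀ (f : A →ₗ[k] ((A ⊗[k] (barC k A q : Type)) →ₗ[k] (A ⊗[k] (barC k A q : Type))))
              (g : (A ⊗[k] (barC k A q : Type)) →ₗ[k] (barC k A q : Type)),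
              -(f (c • a) x) - (c • a) ⊗ₜ[k] (g x)
                = c • (-(f a x) - a ⊗ₜ[k] (g x)) := by
            intro f g
            simp only [map_smul, LinearMap.smul_apply, smul_sub, smul_neg,
              TensorProduct.smul_tmul']
          exact key (barAct k A ε (q + 1)) (barB q))
      (by intro a x y
          simp only [map_add, LinearMap.map_add, TensorProduct.tmul_add]
          try abel)
      (by intro c a x
          simp only [map_smul, LinearMap.map_smul, TensorProduct.tmul_smul, smul_sub, smul_neg]
          try abel))

/-- The bar differential `C_{q+1} = A ⊗ C_q → C_q`. -/
def bard (q : ℕ) : (A ⊗[k] (barC k A q : Type)) →ₗ[k] (barC k A q : Type) :=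
  TensorProduct.lift ((LinearMap.lsmul k (barC k A q : Type)).comp ε.toLinearMap)
  + barB k A ε q

/-- Cycles of the bar complex. -/
def barCycles : ∀ q : ℕ, Submodule k (barC k A q : Type)
  | 0 => ⊤
  | (q + 1) =>
    show Submodule k (barC k A (q + 1) : Type) from LinearMap.ker (bard k A ε q)

/-- `Tor_q^A(𝟙, 𝟙)`, the homology of the algebra `A` with augmentation (trivial module) `ε`,
computed by the bar complex. -/
def barTor (q : ℕ) : Type :=
  (barCycles k A ε q) ⧸
    (Submodule.comap (barCycles k A ε q).subtype (LinearMap.range (bard k A ε q)))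

instance (q : ℕ) : AddCommGroup (barTor k A ε q) :=
  inferInstanceAs (AddCommGroup ((barCycles k A ε q) ⧸
    (Submodule.comap (barCycles k A ε q).subtype (LinearMap.range (bard k A ε q)))))

instance (q : ℕ) : Module k (barTor k A ε q) :=
  inferInstanceAs (Module k ((barCycles k A ε q) ⧸
    (Submodule.comap (barCycles k A ε q).subtype (LinearMap.range (bard k A ε q)))))

/-- The augmentation of a group algebra `k[G]`, corresponding to the trivial action of `G`
on `k`. -/
def groupAug (G : Type) [Group G] : MonoidAlgebra k G →ₐ[k] k :=
  MonoidAlgebra.lift k k G 1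

/-- Group homology `H_*(G; k) = Tor_*^{k[G]}(k, k)` (with the trivial action on `k`). -/
abbrev groupTor (G : Type) [Group G] (q : ℕ) : Type :=
  barTor k (MonoidAlgebra k G) (groupAug k G) q

section TorFunctoriality

variable (k : Type) [CommRing k]

/-- `barAct` in positive degrees, with its domain and codomain presented as tensor
products. -/
noncomputable abbrev barActT (A : Type) [Ring A] [Algebra k A] (ε : A →ₐ[k] k) (q : ℕ) :
    A →ₗ[k] ((A ⊗[k] (barC k A q : Type)) →ₗ[k] (A ⊗[k] (barC k A q : Type))) :=
  barAct k A ε (q + 1)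

theorem barActT_tmul (A : Type) [Ring A] [Algebra k A] (ε : A →ₐ[k] k) (q : ℕ)
    (a b : A) (x : (barC k A q : Type)) :
    barActT k A ε q a (b ⊗ₜ[k] x) = (a * b) ⊗ₜ[k] x := rfl

theorem barB_zero_apply (A : Type) [Ring A] [Algebra k A] (ε : A →ₐ[k] k)
    (a : A) (c : (barC k A 0 : Type)) :
    barB k A ε 0 (a ⊗ₜ[k] c) = -(ε a • c) := rfl

theorem barB_succ_apply (A : Type) [Ring A] [Algebra k A] (ε : A →ₐ[k] k) (q : ℕ)
    (a : A) (x : A ⊗[k] (barC k A q : Type)) :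
    barB k A ε (q + 1) (a ⊗ₜ[k] x)
      = -(barActT k A ε q a x) - a ⊗ₜ[k] (barB k A ε q x) := by
  rfl

variable {A₁ A₂ : Type} [Ring A₁] [Algebra k A₁] [Ring A₂] [Algebra k A₂]

/-- The chain map between bar complexes induced by an algebra map. -/
noncomputable def barMap (φ : A₁ →ₐ[k] A₂) :
    ∀ q : ℕ, (barC k A₁ q : Type) →ₗ[k] (barC k A₂ q : Type)
  | 0 => LinearMap.id
  | (q + 1) =>
    show (A₁ ⊗[k] (barC k A₁ q : Type)) →ₗ[k] (A₂ ⊗[k] (barC k A₂ q : Type)) from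
      TensorProduct.map φ.toLinearMap (barMap φ q)

theorem barActT_comm (ε₁ : A₁ →ₐ[k] k) (ε₂ : A₂ →ₐ[k] k) (φ : A₁ →ₐ[k] A₂)
    (q : ℕ) (a : A₁) :
    (barActT k A₂ ε₂ q (φ a)).comp (TensorProduct.map φ.toLinearMap (barMap k φ q))
      = (TensorProduct.map φ.toLinearMap (barMap k φ q)).comp (barActT k A₁ ε₁ q a) := by
  refine TensorProduct.ext' fun b y => ?_
  simp only [LinearMap.coe_comp, Function.comp_apply, TensorProduct.map_tmul]
  rw [barActT_tmul, barActT_tmul, TensorProduct.map_tmul]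
  simp [map_mul]

theorem barB_comm (ε₁ : A₁ →ₐ[k] k) (ε₂ : A₂ →ₐ[k] k) (φ : A₁ →ₐ[k] A₂)
    (hφ : ε₂.comp φ = ε₁) : ∀ q : ℕ,
    (barB k A₂ ε₂ q).comp (TensorProduct.map φ.toLinearMap (barMap k φ q))
      = (barMap k φ q).comp (barB k A₁ ε₁ q)
  | 0 => by
    have key : ∀ a : A₁, ε₂ (φ a) = ε₁ a := fun a => by
      have := AlgHom.congr_fun hφ a
      simpa using this
    refine TensorProduct.ext' fun a c => ?_
    simp only [LinearMap.coe_comp, Function.comp_apply, TensorProduct.map_tmul]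
    rw [barB_zero_apply]
    show -(ε₂ (φ.toLinearMap a) • (barMap k φ 0 c)) = barMap k φ 0 (barB k A₁ ε₁ 0 (a ⊗ₜ[k] c))
    rw [barB_zero_apply]
    show -(ε₂ (φ a) • c) = -(ε₁ a • c)
    rw [key a]
  | (q + 1) => by
    refine TensorProduct.ext' fun a (x : A₁ ⊗[k] (barC k A₁ q : Type)) => ?_
    have h1 := LinearMap.congr_fun (barActT_comm k ε₁ ε₂ φ q a) x
    simp only [LinearMap.coe_comp, Function.comp_apply] at h1
    have h2 := LinearMap.congr_fun (barB_comm ε₁ ε₂ φ hφ q) x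
    simp only [LinearMap.coe_comp, Function.comp_apply] at h2
    refine (barB_succ_apply k A₂ ε₂ q (φ.toLinearMap a)
      (TensorProduct.map φ.toLinearMap (barMap k φ q) x)).trans ?_
    refine Eq.trans ?_ (congrArg (barMap k φ (q + 1)) (barB_succ_apply k A₁ ε₁ q a x)).symm
    show -(barActT k A₂ ε₂ q (φ.toLinearMap a)
            ((TensorProduct.map φ.toLinearMap (barMap k φ q)) x))
        - (φ.toLinearMap a) ⊗ₜ[k]
            (barB k A₂ ε₂ q ((TensorProduct.map φ.toLinearMap (barMap k φ q)) x))
      = TensorProduct.map φ.toLinearMap (barMap k φ q)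
          (-(barActT k A₁ ε₁ q a x) - a ⊗ₜ[k] (barB k A₁ ε₁ q x))
    rw [map_sub, map_neg, TensorProduct.map_tmul]
    simp only [AlgHom.toLinearMap_apply]
    rw [h1, h2]

/-- The chain map induced by an augmentation-preserving algebra map commutes with the
bar differential. -/
theorem barMap_comm (ε₁ : A₁ →ₐ[k] k) (ε₂ : A₂ →ₐ[k] k) (φ : A₁ →ₐ[k] A₂)
    (hφ : ε₂.comp φ = ε₁) (q : ℕ) :
    (bard k A₂ ε₂ q).comp (TensorProduct.map φ.toLinearMap (barMap k φ q))
      = (barMap k φ q).comp (bard k A₁ ε₁ q) := by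
  have key : ∀ a : A₁, ε₂ (φ a) = ε₁ a := fun a => by
    have := AlgHom.congr_fun hφ a
    simpa using this
  unfold bard
  rw [LinearMap.add_comp, LinearMap.comp_add, barB_comm k ε₁ ε₂ φ hφ q]
  congr 1
  refine TensorProduct.ext' fun a x => ?_
  simp only [LinearMap.coe_comp, Function.comp_apply, TensorProduct.map_tmul,
    TensorProduct.lift.tmul, LinearMap.lsmul_apply, AlgHom.toLinearMap_apply,
    LinearMap.map_smul]
  rw [key a]

theorem barMap_cycles (ε₁ : A₁ →ₐ[k] k) (ε₂ : A₂ →ₐ[k] k) (φ : A₁ →ₐ[k] A₂)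
    (hφ : ε₂.comp φ = ε₁) (q : ℕ) :
    ∀ x ∈ barCycles k A₁ ε₁ q, barMap k φ q x ∈ barCycles k A₂ ε₂ q := by
  intro x hx
  cases q with
  | zero => trivial
  | succ q =>
    show barMap k φ (q+1) x ∈ LinearMap.ker (bard k A₂ ε₂ q)
    have hx' : bard k A₁ ε₁ q x = 0 := hx
    have h := LinearMap.congr_fun (barMap_comm k ε₁ ε₂ φ hφ q) x
    simp only [LinearMap.coe_comp, Function.comp_apply] at h
    show bard k A₂ ε₂ q (TensorProduct.map φ.toLinearMap (barMap k φ q) x) = 0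
    exact h.trans ((congrArg (barMap k φ q) hx').trans (map_zero _))

/-- The map on `Tor_q(𝟙,𝟙)` induced by an augmentation-preserving algebra map. -/
noncomputable def torMap (ε₁ : A₁ →ₐ[k] k) (ε₂ : A₂ →ₐ[k] k) (φ : A₁ →ₐ[k] A₂)
    (hφ : ε₂.comp φ = ε₁) (q : ℕ) :
    barTor k A₁ ε₁ q →ₗ[k] barTor k A₂ ε₂ q := by
  refine Submodule.mapQ _ _
    ((barMap k φ q).restrict (barMap_cycles k ε₁ ε₂ φ hφ q)) ?_
  intro x hx
  simp only [Submodule.mem_comap, LinearMap.mem_range] at hx ⊢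
  obtain ⟨y, hy⟩ := hx
  refine ⟨TensorProduct.map φ.toLinearMap (barMap k φ q) y, ?_⟩
  have h := LinearMap.congr_fun (barMap_comm k ε₁ ε₂ φ hφ q) y
  simp only [LinearMap.coe_comp, Function.comp_apply] at h
  rw [h, hy]
  rfl

end TorFunctoriality

section BRsection

/-! The braided rook algebra `BR_n(ε)`: generators `b i`/`bi i` (positive/negative
crossings of strands `i, i+1`) and `p j` (the identity diagram with strand `j` deleted);
an isolated middle vertex arising in a composition is a contractible component and
contributes the factor `ε`. -/

inductive BRGen (n : ℕ) : Type
  | b : Fin (n - 1) → BRGen n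
  | bi : Fin (n - 1) → BRGen n
  | p : Fin n → BRGen n

variable (k : Type) [CommRing k] (n : ℕ) (ε : k)

abbrev BRb (i : Fin (n - 1)) : FreeAlgebra k (BRGen n) := FreeAlgebra.ι k (BRGen.b i)
abbrev BRbi (i : Fin (n - 1)) : FreeAlgebra k (BRGen n) := FreeAlgebra.ι k (BRGen.bi i)
abbrev BRp (j : Fin n) : FreeAlgebra k (BRGen n) := FreeAlgebra.ι k (BRGen.p j)

/-- The diagrammatic relations. -/
inductive BRRel : FreeAlgebra k (BRGen n) → FreeAlgebra k (BRGen n) → Prop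
  | b_inv_r (i : Fin (n - 1)) :
      BRRel (BRb k n i * BRbi k n i) (1)
  | b_inv_l (i : Fin (n - 1)) :
      BRRel (BRbi k n i * BRb k n i) (1)
  | b_braid (i j : Fin (n - 1)) (h : (j : ℕ) = (i : ℕ) + 1) :
      BRRel (BRb k n i * BRb k n j * BRb k n i) (BRb k n j * BRb k n i * BRb k n j)
  | bb_comm (i j : Fin (n - 1)) (h : (i : ℕ) + 1 < (j : ℕ)) :
      BRRel (BRb k n i * BRb k n j) (BRb k n j * BRb k n i)
  | p_sq (j : Fin n) :
      BRRel (BRp k n j * BRp k n j) (ε • BRp k n j)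
  | pp_comm (j l : Fin n) (h : (j : ℕ) < (l : ℕ)) :
      BRRel (BRp k n j * BRp k n l) (BRp k n l * BRp k n j)
  | bp_comm (i : Fin (n - 1)) (l : Fin n) (h : (l : ℕ) ≠ (i : ℕ) ∧ (l : ℕ) ≠ (i : ℕ) + 1) :
      BRRel (BRb k n i * BRp k n l) (BRp k n l * BRb k n i)
  | bp_slide (i : Fin (n - 1)) (j j' : Fin n) (h : (j : ℕ) = (i : ℕ)) (h' : (j' : ℕ) = (i : ℕ) + 1) :
      BRRel (BRb k n i * BRp k n j) (BRp k n j' * BRb k n i)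
  | bp_slide' (i : Fin (n - 1)) (j j' : Fin n) (h : (j : ℕ) = (i : ℕ)) (h' : (j' : ℕ) = (i : ℕ) + 1) :
      BRRel (BRb k n i * BRp k n j') (BRp k n j * BRb k n i)
  | pbp (i : Fin (n - 1)) (j j' : Fin n) (h : (j : ℕ) = (i : ℕ)) (h' : (j' : ℕ) = (i : ℕ) + 1) :
      BRRel (BRp k n j * BRb k n i * BRp k n j) (BRp k n j * BRp k n j')
  | pbb (i : Fin (n - 1)) (j : Fin n) (h : (j : ℕ) = (i : ℕ)) :
      BRRel (BRp k n j * BRb k n i * BRb k n i) (BRp k n j)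
  | pbb' (i : Fin (n - 1)) (j' : Fin n) (h' : (j' : ℕ) = (i : ℕ) + 1) :
      BRRel (BRp k n j' * BRb k n i * BRb k n i) (BRp k n j')

/-- The diagram algebra: the quotient of the free algebra on the diagram generators by
the diagrammatic relations. -/
abbrev BRAlg : Type := RingQuot (BRRel k n ε)

/-- The augmentation corresponding to the trivial module `𝟙`: a diagram acts by `1`
if it has `n` left-to-right connections, and by `0` otherwise. -/
noncomputable def BRaug : BRAlg k n ε →ₐ[k] k :=
  RingQuot.liftAlgHom k ⟨FreeAlgebra.lift k
      (fun x => match x with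
        | BRGen.b _ => (1 : k)
        | BRGen.bi _ => (1 : k)
        | BRGen.p _ => (0 : k)),
    by rintro x y h
       induction h <;>
         simp [BRb, BRbi, BRp, FreeAlgebra.lift_ι_apply]⟩

end BRsection

section BRinclsection

variable (k : Type) [CommRing k] (n : ℕ) (ε : k)

/-- Extending a diagram by an extra horizontal strand at the bottom, on generators. -/
def BRGenMap : BRGen (n - 1) → BRGen n
  | .b i => .b (Fin.castLE (by omega) i)
  | .bi i => .bi (Fin.castLE (by omega) i)
  | .p i => .p (Fin.castLE (by omega) i)

/-- The diagrammatic relations are preserved by the extension of diagrams. -/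
theorem BRRel_map {x y : FreeAlgebra k (BRGen (n - 1))} (h : BRRel k (n - 1) ε x y) :
    BRRel k n ε
      ((FreeAlgebra.lift k fun g => FreeAlgebra.ι k (BRGenMap n g)) x)
      ((FreeAlgebra.lift k fun g => FreeAlgebra.ι k (BRGenMap n g)) y) := by
  induction h with
  | b_inv_r i =>
    simp only [map_mul, map_one, map_smul, FreeAlgebra.lift_ι_apply, BRGenMap]
    exact BRRel.b_inv_r _
  | b_inv_l i =>
    simp only [map_mul, map_one, map_smul, FreeAlgebra.lift_ι_apply, BRGenMap]
    exact BRRel.b_inv_l _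
  | b_braid i j h =>
    simp only [map_mul, map_one, map_smul, FreeAlgebra.lift_ι_apply, BRGenMap]
    exact BRRel.b_braid _ _ (by simp_all [Fin.ext_iff, Fin.coe_castLE] <;> omega)
  | bb_comm i j h =>
    simp only [map_mul, map_one, map_smul, FreeAlgebra.lift_ι_apply, BRGenMap]
    exact BRRel.bb_comm _ _ (by simp_all [Fin.ext_iff, Fin.coe_castLE] <;> omega)
  | p_sq j =>
    simp only [map_mul, map_one, map_smul, FreeAlgebra.lift_ι_apply, BRGenMap]
    exact BRRel.p_sq _
  | pp_comm j l h =>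
    simp only [map_mul, map_one, map_smul, FreeAlgebra.lift_ι_apply, BRGenMap]
    exact BRRel.pp_comm _ _ (by simp_all [Fin.ext_iff, Fin.coe_castLE] <;> omega)
  | bp_comm i l h =>
    simp only [map_mul, map_one, map_smul, FreeAlgebra.lift_ι_apply, BRGenMap]
    exact BRRel.bp_comm _ _ (by simp_all [Fin.ext_iff, Fin.coe_castLE] <;> omega)
  | bp_slide i j j' h h' =>
    simp only [map_mul, map_one, map_smul, FreeAlgebra.lift_ι_apply, BRGenMap]
    exact BRRel.bp_slide _ _ _ (by simp_all [Fin.ext_iff, Fin.coe_castLE] <;> omega) (by simp_all [Fin.ext_iff, Fin.coe_castLE] <;> omega)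
  | bp_slide' i j j' h h' =>
    simp only [map_mul, map_one, map_smul, FreeAlgebra.lift_ι_apply, BRGenMap]
    exact BRRel.bp_slide' _ _ _ (by simp_all [Fin.ext_iff, Fin.coe_castLE] <;> omega) (by simp_all [Fin.ext_iff, Fin.coe_castLE] <;> omega)
  | pbp i j j' h h' =>
    simp only [map_mul, map_one, map_smul, FreeAlgebra.lift_ι_apply, BRGenMap]
    exact BRRel.pbp _ _ _ (by simp_all [Fin.ext_iff, Fin.coe_castLE] <;> omega) (by simp_all [Fin.ext_iff, Fin.coe_castLE] <;> omega)
  | pbb i j h =>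
    simp only [map_mul, map_one, map_smul, FreeAlgebra.lift_ι_apply, BRGenMap]
    exact BRRel.pbb _ _ (by simp_all [Fin.ext_iff, Fin.coe_castLE] <;> omega)
  | pbb' i j' h' =>
    simp only [map_mul, map_one, map_smul, FreeAlgebra.lift_ι_apply, BRGenMap]
    exact BRRel.pbb' _ _ (by simp_all [Fin.ext_iff, Fin.coe_castLE] <;> omega)

/-- The inclusion of diagram algebras given by adding an extra horizontal strand
(labelled by `1 ∈ G` in the equivariant case) at the bottom of a diagram. -/
noncomputable def BRincl : BRAlg k (n - 1) ε →ₐ[k] BRAlg k n ε :=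
  RingQuot.liftAlgHom k ⟨(RingQuot.mkAlgHom k (BRRel k n ε)).comp
      (FreeAlgebra.lift k (fun x => FreeAlgebra.ι k (BRGenMap n x))),
    by intro x y h
       simp only [AlgHom.coe_comp, Function.comp_apply]
       exact RingQuot.mkAlgHom_rel k (BRRel_map k n ε h)⟩

/-- The inclusion is compatible with the augmentations (trivial modules). -/
theorem BRaug_incl : (BRaug k n ε).comp (BRincl k n ε) = BRaug k (n - 1) ε := by
  apply RingQuot.ringQuot_ext'
  apply FreeAlgebra.hom_ext
  funext x
  cases x <;>
    simp [BRincl, BRaug, BRGenMap, Function.comp, RingQuot.liftAlgHom_mkAlgHom_apply,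
      FreeAlgebra.lift_ι_apply]

end BRinclsection

namespace BRS

/-- Braid relations on words. -/
inductive brel : FreeMonoid ℕ → FreeMonoid ℕ → Prop
  | comm (i j : ℕ) (h : i + 1 < j) :
      brel (FreeMonoid.of i * FreeMonoid.of j) (FreeMonoid.of j * FreeMonoid.of i)
  | braid (i : ℕ) :
      brel (FreeMonoid.of i * FreeMonoid.of (i + 1) * FreeMonoid.of i)
        (FreeMonoid.of (i + 1) * FreeMonoid.of i * FreeMonoid.of (i + 1))

/-- The positive braid monoid on infinitely many strands. -/
abbrev BM : Type := PresentedMonoid brel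

def am (i : ℕ) : BM := PresentedMonoid.of brel i

/-- The class of a word. -/
def cl (w : FreeMonoid ℕ) : BM := PresentedMonoid.mk brel w

theorem cl_mul (u v : FreeMonoid ℕ) : cl (u * v) = cl u * cl v := map_mul _ _ _
theorem cl_of (i : ℕ) : cl (FreeMonoid.of i) = am i := rfl
theorem cl_one : cl 1 = 1 := map_one _
theorem cl_surj (x : BM) : ∃ w, cl w = x := PresentedMonoid.surjective_mk x

def far (i j : ℕ) : Prop := i + 1 < j ∨ j + 1 < i
def adj (i j : ℕ) : Prop := j = i + 1 ∨ i = j + 1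

theorem am_comm {i j : ℕ} (h : far i j) : am i * am j = am j * am i := by
  rcases h with h | h
  · exact PresentedMonoid.mk_eq_mk_of_rel (brel.comm i j h)
  · exact (PresentedMonoid.mk_eq_mk_of_rel (brel.comm j i h)).symm

theorem am_braid {i j : ℕ} (h : adj i j) : am i * am j * am i = am j * am i * am j := by
  rcases h with h | h
  · subst h; exact PresentedMonoid.mk_eq_mk_of_rel (brel.braid i)
  · subst h; exact (PresentedMonoid.mk_eq_mk_of_rel (brel.braid j)).symm

/-- Length. -/
def len : BM →* Multiplicative ℕ :=
  PresentedMonoid.lift (fun _ => Multiplicative.ofAdd 1) (by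
    intro a b h
    cases h <;> simp)

def ln (x : BM) : ℕ := (len x).toAdd
theorem ln_am (i : ℕ) : ln (am i) = 1 := rfl
theorem ln_mul (x y : BM) : ln (x * y) = ln x + ln y := by simp [ln]
theorem ln_one : ln 1 = 0 := by simp [ln]

def Step (u v : FreeMonoid ℕ) : Prop :=
  ∃ p s l r, brel l r ∧ u = p * l * s ∧ v = p * r * s

theorem Step.mul_left {u v : FreeMonoid ℕ} (h : Step u v) (w) : Step (w * u) (w * v) := by
  obtain ⟨p, s, l, r, h, rfl, rfl⟩ := h
  exact ⟨w * p, s, l, r, h, by simp [mul_assoc], by simp [mul_assoc]⟩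

theorem Step.mul_right {u v : FreeMonoid ℕ} (h : Step u v) (w) : Step (u * w) (v * w) := by
  obtain ⟨p, s, l, r, h, rfl, rfl⟩ := h
  exact ⟨p, s * w, l, r, h, by simp [mul_assoc], by simp [mul_assoc]⟩

theorem eqv_map {f : FreeMonoid ℕ → FreeMonoid ℕ} (hf : ∀ u v, Step u v → Step (f u) (f v))
    {u v : FreeMonoid ℕ} (h : Relation.EqvGen Step u v) : Relation.EqvGen Step (f u) (f v) := by
  induction h with
  | rel _ _ h => exact .rel _ _ (hf _ _ h)
  | refl _ => exact .refl _
  | symm _ _ _ ih => exact .symm _ _ ih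
  | trans _ _ _ _ _ ih1 ih2 => exact .trans _ _ _ ih1 ih2

theorem eqv_of_cl_eq {u v : FreeMonoid ℕ} (h : cl u = cl v) : Relation.EqvGen Step u v := by
  have h' : conGen brel u v := PresentedMonoid.mk_eq_mk_iff.1 h
  have h'' : ConGen.Rel brel u v := h'
  clear h h'
  induction h'' with
  | of x y h => exact .rel _ _ ⟨1, 1, x, y, h, by simp, by simp⟩
  | refl x => exact .refl _
  | symm _ ih => exact .symm _ _ ih
  | trans _ _ ih1 ih2 => exact .trans _ _ _ ih1 ih2
  | @mul w x y z _ _ ih1 ih2 =>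
    exact .trans _ (x * y) _ (eqv_map (f := fun t => t * y) (fun _ _ h => h.mul_right _) ih1)
      (eqv_map (f := fun t => x * t) (fun _ _ h => h.mul_left _) ih2)

theorem cl_eq_of_step {u v : FreeMonoid ℕ} (h : Step u v) : cl u = cl v := by
  obtain ⟨p, s, l, r, h, rfl, rfl⟩ := h
  have : cl l = cl r := PresentedMonoid.mk_eq_mk_of_rel h
  simp [cl_mul, this]

theorem cl_eq_of_eqv {u v : FreeMonoid ℕ} (h : Relation.EqvGen Step u v) : cl u = cl v := by
  induction h with
  | rel _ _ h => exact cl_eq_of_step h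
  | refl _ => rfl
  | symm _ _ _ ih => exact ih.symm
  | trans _ _ _ _ _ ih1 ih2 => exact ih1.trans ih2

/-- The lcm condition. -/
def C (i j : ℕ) (x y : BM) : Prop :=
  (i = j ∧ x = y) ∨ (far i j ∧ ∃ z, x = z * am j ∧ y = z * am i) ∨
    (adj i j ∧ ∃ z, x = z * am i * am j ∧ y = z * am j * am i)

theorem far.symm {i j} (h : far i j) : far j i := Or.symm h
theorem adj.symm {i j} (h : adj i j) : adj j i := Or.symm h

theorem C.symm {i j x y} (h : C i j x y) : C j i y x := by
  rcases h with ⟨rfl, rfl⟩ | ⟨h, z, rfl, rfl⟩ | ⟨h, z, rfl, rfl⟩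
  · exact Or.inl ⟨rfl, rfl⟩
  · exact Or.inr (Or.inl ⟨h.symm, z, rfl, rfl⟩)
  · exact Or.inr (Or.inr ⟨h.symm, z, rfl, rfl⟩)

theorem C_far {i j x y} (h : far i j) (hc : C i j x y) : ∃ z, x = z * am j ∧ y = z * am i := by
  rcases hc with ⟨rfl, rfl⟩ | ⟨h, z, rfl, rfl⟩ | ⟨h', z, rfl, rfl⟩
  · exfalso; unfold far at h; omega
  · exact ⟨z, rfl, rfl⟩
  · exfalso; unfold far at h; unfold adj at h'; omega

theorem C_adj {i j x y} (h : adj i j) (hc : C i j x y) :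
    ∃ z, x = z * am i * am j ∧ y = z * am j * am i := by
  rcases hc with ⟨rfl, rfl⟩ | ⟨h', z, rfl, rfl⟩ | ⟨h', z, rfl, rfl⟩
  · exfalso; unfold adj at h; omega
  · exfalso; unfold far at h'; unfold adj at h; omega
  · exact ⟨z, rfl, rfl⟩

theorem C_eq {i x y} (hc : C i i x y) : x = y := by
  rcases hc with ⟨_, h⟩ | ⟨h', z, rfl, rfl⟩ | ⟨h', z, rfl, rfl⟩
  · exact h
  · exfalso; unfold far at h'; omega
  · exfalso; unfold adj at h'; omega

theorem C_ln {i j x y} (h : C i j x y) : ln x = ln y := by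
  rcases h with ⟨rfl, rfl⟩ | ⟨h, z, rfl, rfl⟩ | ⟨h, z, rfl, rfl⟩ <;> simp [ln_mul, ln_am]

theorem tri (i j : ℕ) : i = j ∨ far i j ∨ adj i j := by
  unfold far adj; omega

/-- Inductive hypothesis for the lcm theorem. -/
def IHyp (N : ℕ) : Prop := ∀ x y i j, ln x < N → x * am i = y * am j → C i j x y

theorem C_trans_ff {N : ℕ} (IH : IHyp N) {i j k : ℕ} {x w y : BM} (hN : ln x ≤ N) (h1 : far i k) (h2 : far k j)
    (c1 : C i k x w) (c2 : C k j w y) : C i j x y := by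
  obtain ⟨Z, rfl, rfl⟩ := C_far h1 c1
  obtain ⟨U, hU, rfl⟩ := C_far h2 c2
  have hl : ln Z < N := by simp [ln_mul, ln_am] at hN; omega
  have c := IH _ _ _ _ hl hU
  rcases tri i j with rfl | h | h
  · rw [C_eq c]; exact Or.inl ⟨rfl, rfl⟩
  · obtain ⟨z, rfl, rfl⟩ := C_far h c
    exact Or.inr (Or.inl ⟨h, z * am k, by simp only [mul_assoc, am_comm h2],
      by simp only [mul_assoc, am_comm h1]⟩)
  · obtain ⟨z, rfl, rfl⟩ := C_adj h c
    refine Or.inr (Or.inr ⟨h, z * am k, ?_, ?_⟩)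
    · simp only [mul_assoc, ← am_comm h2]
      rw [← mul_assoc (am i) (am k), am_comm h1]; simp only [mul_assoc]
    · simp only [mul_assoc, am_comm h1]
      rw [← mul_assoc (am j) (am k), ← am_comm h2]; simp only [mul_assoc]

theorem C_trans_af {N : ℕ} (IH : IHyp N) {i j k : ℕ} {x w y : BM} (hN : ln x ≤ N) (h1 : adj i k) (h2 : far k j)
    (c1 : C i k x w) (c2 : C k j w y) : C i j x y := by
  obtain ⟨Z, rfl, rfl⟩ := C_adj h1 c1
  obtain ⟨Z', hU0, rfl⟩ := C_far h2 c2
  have hl : ln Z + 1 < N := by simp [ln_mul, ln_am] at hN; omega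
  have c := IH (Z * am k) Z' i j (by simp only [ln_mul, ln_am]; omega) hU0
  rcases tri i j with rfl | h | h
  · exfalso; unfold far at h2; unfold adj at h1; omega
  · obtain ⟨U, hU, rfl⟩ := C_far h c
    have c' := IH _ _ _ _ (by omega) hU
    obtain ⟨V, rfl, rfl⟩ := C_far h2 c'
    refine Or.inr (Or.inl ⟨h, V * am i * am k, ?_, ?_⟩)
    · simp only [mul_assoc]
      rw [am_comm h2, ← mul_assoc (am j), ← am_comm h]; simp only [mul_assoc]
    · have := am_braid h1.symm
      simp only [mul_assoc] at this ⊢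
      rw [this]
  · obtain ⟨U, hU, rfl⟩ := C_adj h c
    have c' := IH _ _ _ _ (by omega) hU
    obtain ⟨V, rfl, hV⟩ := C_far h2 c'
    have hl2 : ln U < N := by
      have := congrArg ln hU; simp [ln_mul, ln_am] at this hl; omega
    have c'' := IH _ _ _ _ hl2 hV
    obtain ⟨T, rfl, rfl⟩ := C_adj h1 c''
    refine Or.inr (Or.inr ⟨h, T * am j * am i * am k, ?_, ?_⟩)
    · -- T k i j i k = T j i k i j
      have e1 := am_braid h
      have e2 := am_braid h1
      have e3 := am_comm h2
      calc T * am k * am i * am j * am i * am k = T * am k * (am i * am j * am i) * am k := by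
            simp only [mul_assoc]
        _ = T * (am k * am j) * am i * (am j * am k) := by rw [e1]; simp only [mul_assoc]
        _ = T * am j * (am k * am i * am k) * am j := by simp only [mul_assoc]; rw [← e3, ← mul_assoc (am k) (am j), e3]; simp only [mul_assoc]
        _ = _ := by rw [← e2]; simp only [mul_assoc]
    · have e1 := am_braid h
      have e2 := am_braid h1
      have e3 := am_comm h2
      calc T * am i * am k * am j * am i * am k = T * am i * (am k * am j) * am i * am k := by
            simp only [mul_assoc]
        _ = T * am i * am j * (am k * am i * am k) := by rw [e3]; simp only [mul_assoc]
        _ = T * (am i * am j * am i) * am k * am i := by rw [← e2]; simp only [mul_assoc]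
        _ = T * am j * am i * (am j * am k) * am i := by rw [e1]; simp only [mul_assoc]
        _ = _ := by rw [← e3]; simp only [mul_assoc]

theorem C_trans_aa {N : ℕ} (IH : IHyp N) {i j k : ℕ} {x w y : BM} (hN : ln x ≤ N) (h1 : adj i k) (h2 : adj k j)
    (c1 : C i k x w) (c2 : C k j w y) : C i j x y := by
  obtain ⟨Z, rfl, rfl⟩ := C_adj h1 c1
  obtain ⟨Z', hU, rfl⟩ := C_adj h2 c2
  have hl : ln Z + 1 < N := by simp [ln_mul, ln_am] at hN; omega
  have c := IH (Z * am k) (Z' * am k) i j (by simp only [ln_mul, ln_am]; omega) hU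
  have hln : ln Z = ln Z' := by simpa [ln_mul, ln_am] using congrArg ln hU
  rcases tri i j with rfl | h | h
  · have := IH _ _ _ _ (by omega) (C_eq c)
    rw [C_eq this]; exact Or.inl ⟨rfl, rfl⟩
  · obtain ⟨U, hU1, hU2⟩ := C_far h c
    obtain ⟨V, rfl, rfl⟩ := C_adj h2 (IH _ _ _ _ (by omega) hU1)
    obtain ⟨V', rfl, hV⟩ := C_adj h1.symm (IH _ _ _ _ (by omega) hU2)
    have hl3 : ln (V * am j) < N := by simp [ln_mul, ln_am] at hl ⊢; omega
    have := C_eq (IH _ _ _ _ hl3 hV)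
    have := IH _ _ _ _ (by simp [ln_mul, ln_am] at hl ⊢; omega) this
    obtain ⟨Q, rfl, rfl⟩ := C_far h.symm this
    have e1 := am_braid h1
    have e2 := am_braid h2
    have e3 := am_comm h
    refine Or.inr (Or.inl ⟨h, Q * am k * am i * am j * am k, ?_, ?_⟩)
    · -- Q i k j i k = Q k i j k j
      calc Q * am i * am k * am j * am i * am k = Q * am i * am k * (am j * am i) * am k := by
            simp only [mul_assoc]
        _ = Q * (am i * am k * am i) * am j * am k := by rw [← e3]; simp only [mul_assoc]
        _ = Q * am k * am i * (am k * am j * am k) := by rw [e1]; simp only [mul_assoc]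
        _ = _ := by rw [e2]; simp only [mul_assoc]
    · calc Q * am j * am k * am i * am j * am k = Q * am j * am k * (am i * am j) * am k := by
            simp only [mul_assoc]
        _ = Q * (am j * am k * am j) * am i * am k := by rw [e3]; simp only [mul_assoc]
        _ = Q * am k * am j * (am k * am i * am k) := by rw [← e2]; simp only [mul_assoc]
        _ = Q * am k * (am j * am i) * am k * am i := by rw [← e1]; simp only [mul_assoc]
        _ = _ := by rw [← e3]; simp only [mul_assoc]
  · exfalso; unfold adj at h1 h2 h; omega

theorem C_trans {N : ℕ} (IH : IHyp N) {i j k : ℕ} {x w y : BM} (hN : ln x ≤ N)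
    (c1 : C i k x w) (c2 : C k j w y) : C i j x y := by
  rcases tri i k with rfl | h1 | h1
  · rw [C_eq c1]; exact c2
  · rcases tri k j with rfl | h2 | h2
    · rw [← C_eq c2]; exact c1
    · exact C_trans_ff IH hN h1 h2 c1 c2
    · refine (C_trans_af IH ?_ h2.symm h1.symm c2.symm c1.symm).symm
      rw [← C_ln c2, ← C_ln c1]; exact hN
  · rcases tri k j with rfl | h2 | h2
    · rw [← C_eq c2]; exact c1
    · exact C_trans_af IH hN h1 h2 c1 c2
    · exact C_trans_aa IH hN h1 h2 c1 c2

theorem word_cases (w : FreeMonoid ℕ) : w = 1 ∨ ∃ u i, w = u * FreeMonoid.of i :=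
  List.eq_nil_or_concat (FreeMonoid.toList w) |>.imp id (fun ⟨u, i, h⟩ => ⟨FreeMonoid.ofList u, i, by
    have h' : FreeMonoid.toList w = u ++ [i] := by simpa using h
    exact h'⟩)

theorem word_inj {u v : FreeMonoid ℕ} {i j : ℕ}
    (h : u * FreeMonoid.of i = v * FreeMonoid.of j) : u = v ∧ i = j := by
  have h' : FreeMonoid.toList u ++ [i] = FreeMonoid.toList v ++ [j] := h
  have := List.append_inj' h' rfl
  exact ⟨FreeMonoid.toList.injective this.1, by simpa using this.2⟩

theorem C_step {u v : FreeMonoid ℕ} (h : Step u v) (u' v' : FreeMonoid ℕ) (i j : ℕ)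
    (hu : u = u' * FreeMonoid.of i) (hv : v = v' * FreeMonoid.of j) :
    C i j (cl u') (cl v') := by
  obtain ⟨p, s, l, r, h, rfl, rfl⟩ := h
  rcases word_cases s with rfl | ⟨s', t, rfl⟩
  · simp only [mul_one] at hu hv
    cases h with
    | comm a b hab =>
      rw [← mul_assoc] at hu hv
      obtain ⟨rfl, rfl⟩ := word_inj hu
      obtain ⟨rfl, rfl⟩ := word_inj hv
      refine Or.inr (Or.inl ⟨Or.inr hab, cl p, ?_, ?_⟩) <;> simp [cl_mul, cl_of]
    | braid a =>
      rw [← mul_assoc, ← mul_assoc] at hu hv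
      obtain ⟨rfl, rfl⟩ := word_inj hu
      obtain ⟨rfl, rfl⟩ := word_inj hv
      refine Or.inr (Or.inr ⟨Or.inl rfl, cl p, ?_, ?_⟩) <;> simp [cl_mul, cl_of, mul_assoc]
  · rw [← mul_assoc] at hu hv
    obtain ⟨rfl, rfl⟩ := word_inj hu
    obtain ⟨rfl, rfl⟩ := word_inj hv
    refine Or.inl ⟨rfl, ?_⟩
    exact cl_eq_of_step ⟨p, s', l, r, h, rfl, rfl⟩

theorem garside_aux (N : ℕ) : ∀ x y i j, ln x < N → x * am i = y * am j → C i j x y := by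
  induction N with
  | zero => intro x y i j h; omega
  | succ N IH =>
    intro x y i j hx hxy
    obtain ⟨u', rfl⟩ := cl_surj x
    obtain ⟨v', rfl⟩ := cl_surj y
    have he : Relation.EqvGen Step (u' * FreeMonoid.of i) (v' * FreeMonoid.of j) :=
      eqv_of_cl_eq (by simpa only [cl_mul, cl_of] using hxy)
    have key : ∀ u v, Relation.EqvGen Step u v → ∀ u' v' i j, u = u' * FreeMonoid.of i →
        v = v' * FreeMonoid.of j → ln (cl u') ≤ N → C i j (cl u') (cl v') := by
      intro u v h
      induction h with
      | rel u v h => intro u' v' i j hu hv _; exact C_step h u' v' i j hu hv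
      | refl u =>
        intro u' v' i j hu hv _
        obtain ⟨rfl, rfl⟩ := word_inj (hu.symm.trans hv)
        exact Or.inl ⟨rfl, rfl⟩
      | symm u v h ih =>
        intro u' v' i j hu hv hN
        refine (ih v' u' j i hv hu ?_).symm
        have := congrArg ln (cl_eq_of_eqv h)
        rw [hu, hv] at this
        simp only [cl_mul, cl_of, ln_mul, ln_am] at this
        omega
      | trans u w v h1 h2 ih1 ih2 =>
        intro u' v' i j hu hv hN
        have := congrArg ln (cl_eq_of_eqv h1)
        rcases word_cases w with rfl | ⟨w', t, rfl⟩
        · rw [hu] at this; simp [cl_mul, cl_of, ln_mul, ln_am, ln_one, cl_one] at this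
        · rw [hu] at this
          simp only [cl_mul, cl_of, ln_mul, ln_am] at this
          exact C_trans IH hN (ih1 u' w' i t hu rfl hN) (ih2 w' v' t j rfl hv (by omega))
    exact key _ _ he _ _ _ _ rfl rfl (by omega)

theorem garside {x y : BM} {i j : ℕ} (h : x * am i = y * am j) : C i j x y :=
  garside_aux (ln x + 1) x y i j (by omega) h

theorem am_right_cancel {x y : BM} {i : ℕ} (h : x * am i = y * am i) : x = y := C_eq (garside h)

theorem BM_induction {P : BM → Prop} (h1 : P 1) (h2 : ∀ x i, P x → P (x * am i)) (x : BM) : P x := by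
  obtain ⟨w, rfl⟩ := cl_surj x
  have : ∀ N, ∀ w : FreeMonoid ℕ, w.length = N → P (cl w) := by
    intro N
    induction N with
    | zero => intro w hw; rw [FreeMonoid.length_eq_zero.1 hw]; exact h1
    | succ N ih =>
      intro w hw
      rcases word_cases w with rfl | ⟨u, i, rfl⟩
      · exact h1
      · rw [cl_mul, cl_of]; apply h2; apply ih; simpa using hw
  exact this _ w rfl

theorem BM_right_cancel {x y z : BM} : x * z = y * z → x = y := by
  induction z using BM_induction with
  | h1 => simp
  | h2 z i ih => intro h; rw [← mul_assoc, ← mul_assoc] at h; exact ih (am_right_cancel h)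

/-- The reversing anti-automorphism. -/
def rev : BM →* BMᵐᵒᵖ :=
  PresentedMonoid.lift (fun i => MulOpposite.op (am i)) (by
    intro a b h
    cases h with
    | comm i j h =>
      simp only [map_mul, FreeMonoid.lift_eval_of, ← MulOpposite.op_mul]
      rw [am_comm (Or.inl h)]
    | braid i =>
      simp only [map_mul, FreeMonoid.lift_eval_of, ← MulOpposite.op_mul, ← mul_assoc]
      rw [am_braid (Or.inl rfl)])

def rv (x : BM) : BM := (rev x).unop
theorem rv_mul (x y : BM) : rv (x * y) = rv y * rv x := by simp [rv]
theorem rv_one : rv 1 = 1 := by simp [rv]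
theorem rv_am (i : ℕ) : rv (am i) = am i := rfl
theorem rv_rv (x : BM) : rv (rv x) = x := by
  induction x using BM_induction with
  | h1 => simp [rv_one]
  | h2 x i ih => rw [rv_mul, rv_mul, ih, rv_am, rv_am]

theorem BM_left_cancel {x y z : BM} (h : z * x = z * y) : x = y := by
  have := congrArg rv h
  rw [rv_mul, rv_mul] at this
  rw [← rv_rv x, BM_right_cancel this, rv_rv]

end BRS

namespace BRS

/-- A right action of the positive braid monoid. -/
structure BrAct (X : Type) where
  r : ℕ → X → X
  comm : ∀ {i j}, far i j → ∀ x, r i (r j x) = r j (r i x)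
  braid : ∀ {i j}, adj i j → ∀ x, r i (r j (r i x)) = r j (r i (r j x))

/-- A set on which the braid monoid acts with Garside-type lcm properties. -/
structure GS (X : Type) extends BrAct X where
  ln : X → ℕ
  ln_r : ∀ i x, ln (r i x) = ln x + 1
  inj : ∀ {i x y}, r i x = r i y → x = y
  lcmfar : ∀ {i j x y}, far i j → r i x = r j y → ∃ z, x = r j z ∧ y = r i z
  lcmadj : ∀ {i j x y}, adj i j → r i x = r j y → ∃ z, x = r j (r i z) ∧ y = r i (r j z)

section ops
variable (F : Type) [CommRing F] {X : Type} (S : BrAct X)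

/-- The operator on chains induced by `r i`. -/
def RR (i : ℕ) : (X →₀ F) →ₗ[F] (X →₀ F) := Finsupp.lmapDomain F F (S.r i)

theorem RR_single (i : ℕ) (x : X) (c : F) :
    RR F S i (Finsupp.single x c) = Finsupp.single (S.r i x) c := by
  simp [RR, Finsupp.mapDomain_single]

theorem RR_comm {i j : ℕ} (h : far i j) (z : X →₀ F) :
    RR F S i (RR F S j z) = RR F S j (RR F S i z) := by
  induction z using Finsupp.induction_linear with
  | zero => simp
  | add f g hf hg => simp only [map_add, hf, hg]
  | single x c => simp only [RR_single, S.comm h]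

theorem RR_braid {i j : ℕ} (h : adj i j) (z : X →₀ F) :
    RR F S i (RR F S j (RR F S i z)) = RR F S j (RR F S i (RR F S j z)) := by
  induction z using Finsupp.induction_linear with
  | zero => simp
  | add f g hf hg => simp only [map_add, hf, hg]
  | single x c => simp only [RR_single, S.braid h]

/-- The alternating sums giving the differential of the complex of cosets. -/
def Sig (B : ℕ) : ℕ → ((X →₀ F) →ₗ[F] (X →₀ F))
  | 0 => LinearMap.id
  | (p + 1) => LinearMap.id - (RR F S (B - 1 - p)).comp (Sig B p)

theorem Sig_zero (B : ℕ) (z : X →₀ F) : Sig F S B 0 z = z := rfl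
theorem Sig_succ (B p : ℕ) (z : X →₀ F) :
    Sig F S B (p + 1) z = z - RR F S (B - 1 - p) (Sig F S B p z) := rfl

/-- The relations submodule of the coinvariants. -/
def LL (b : ℕ) : Submodule F (X →₀ F) :=
  Submodule.span F {v | ∃ i, i < b ∧ ∃ x, v = RR F S i x - x}

theorem LL_mono {b c : ℕ} (h : b ≤ c) : LL F S b ≤ LL F S c := by
  apply Submodule.span_mono
  rintro v ⟨i, hi, x, rfl⟩
  exact ⟨i, by omega, x, rfl⟩

theorem mem_LL {b i : ℕ} (h : i < b) (x : X →₀ F) : RR F S i x - x ∈ LL F S b :=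
  Submodule.subset_span ⟨i, h, x, rfl⟩

theorem mem_LL' {b i : ℕ} (h : i < b) (x : X →₀ F) : x - RR F S i x ∈ LL F S b := by
  rw [← neg_sub]; exact neg_mem (mem_LL F S h x)

theorem LL_le_of {b : ℕ} {P : Submodule F (X →₀ F)}
    (h : ∀ i, i < b → ∀ x, RR F S i x - x ∈ P) : LL F S b ≤ P := by
  apply Submodule.span_le.2
  rintro v ⟨i, hi, x, rfl⟩
  exact h i hi x

/-- maps commuting with the action preserve `LL` -/
theorem LL_map {Y : Type} (S' : BrAct Y) {b : ℕ} (f : (X →₀ F) →ₗ[F] (Y →₀ F))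
    (h : ∀ i, i < b → ∀ x, f (RR F S i x) = RR F S' i (f x)) {z : X →₀ F}
    (hz : z ∈ LL F S b) : f z ∈ LL F S' b := by
  have : LL F S b ≤ (LL F S' b).comap f := by
    apply LL_le_of
    intro i hi x
    simp only [Submodule.mem_comap, map_sub, h i hi]
    exact mem_LL F S' hi _
  exact this hz

theorem Sig_RR (B p i : ℕ) (h : i + p < B) (hp : ∀ j, j < p → far i (B - 1 - j)) (z : X →₀ F) :
    Sig F S B p (RR F S i z) = RR F S i (Sig F S B p z) := by
  induction p with
  | zero => rfl
  | succ p ih =>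
    rw [Sig_succ, Sig_succ, ih (by omega) (fun j hj => hp j (by omega)), map_sub,
      RR_comm F S (hp p (by omega))]

theorem Sig_RR' (B p i : ℕ) (h : i + p + 1 < B) (z : X →₀ F) :
    Sig F S B p (RR F S i z) = RR F S i (Sig F S B p z) :=
  Sig_RR F S B p i (by omega) (fun j hj => by unfold far; omega) z

theorem Sig_LL {B p : ℕ} {z : X →₀ F} (hz : z ∈ LL F S (B - p - 1)) :
    Sig F S B p z ∈ LL F S (B - p - 1) :=
  LL_map F S S _ (fun i hi x => Sig_RR' F S B p i (by omega) x) hz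

theorem Sig_Sig_aux (B p : ℕ) (h : p + 1 ≤ B) : ∃ T : (X →₀ F) →ₗ[F] (X →₀ F), ∀ z,
    Sig F S B p (Sig F S B (p + 1) z) = T z - RR F S (B - 1 - p) (T z) := by
  induction p with
  | zero => exact ⟨LinearMap.id, fun z => rfl⟩
  | succ p ih =>
    obtain ⟨T, hT⟩ := ih (by omega)
    refine ⟨Sig F S B (p + 1) + (RR F S (B - 1 - p)).comp ((RR F S (B - 1 - (p + 1))).comp T), ?_⟩
    intro z
    set s := B - 1 - (p + 1) with hs
    set t := B - 1 - p with ht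
    have hadj : adj s t := by unfold adj; omega
    have h1 : Sig F S B p (RR F S s (Sig F S B (p + 1) z))
        = RR F S s (T z) - RR F S s (RR F S t (T z)) := by
      rw [Sig_RR F S B p s (by omega) (fun j hj => by unfold far; omega), hT, map_sub]
    have h2 : Sig F S B (p + 1) (Sig F S B (p + 1 + 1) z)
        = Sig F S B (p + 1) z - RR F S s (Sig F S B (p + 1) z)
          + RR F S t (Sig F S B p (RR F S s (Sig F S B (p + 1) z))) := by
      rw [Sig_succ F S B (p + 1) z, map_sub,
        Sig_succ F S B p (RR F S (B - 1 - (p + 1)) (Sig F S B (p + 1) z))]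
      abel
    rw [h2, h1, map_sub]
    simp only [LinearMap.add_apply, LinearMap.comp_apply, map_add]
    rw [← RR_braid F S hadj]
    abel

theorem Sig_Sig {B p : ℕ} (h : p + 1 ≤ B) (z : X →₀ F) :
    Sig F S B p (Sig F S B (p + 1) z) ∈ LL F S (B - p) := by
  obtain ⟨T, hT⟩ := Sig_Sig_aux F S B p h
  rw [hT]
  exact mem_LL' F S (by omega) _

end ops

section exact
variable (F : Type) [CommRing F] {X : Type} (S : GS X)

open Classical in
/-- Reduction to minimal coset representatives. -/
def red (b : ℕ) (x : X) : X :=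
  if h : ∃ y, ∃ i, i < b ∧ x = S.r i y then red b h.choose else x
termination_by S.ln x
decreasing_by
  obtain ⟨i, _, hi⟩ := h.choose_spec
  have := S.ln_r i h.choose
  rw [← hi] at this
  omega

theorem red_of_irr {b : ℕ} {x : X} (h : ¬ ∃ y, ∃ i, i < b ∧ x = S.r i y) : red S b x = x := by
  rw [red, dif_neg h]

theorem red_r {b i : ℕ} (hi : i < b) : ∀ x, red S b (S.r i x) = red S b x := by
  have key : ∀ N x i, S.ln x < N → i < b → red S b (S.r i x) = red S b x := by
    intro N
    induction N with
    | zero => intro x i h; omega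
    | succ N ih =>
      intro x i hx hi
      have h : ∃ y, ∃ j, j < b ∧ S.r i x = S.r j y := ⟨x, i, hi, rfl⟩
      rw [red, dif_pos h]
      obtain ⟨j, hj, hxy⟩ := h.choose_spec
      set y := h.choose with hy
      rcases tri i j with rfl | hf | hf
      · rw [S.inj hxy]
      · obtain ⟨z, hz1, hz2⟩ := S.lcmfar hf hxy
        have := congrArg S.ln hz1
        rw [S.ln_r] at this
        rw [hz1, hz2, ih z i (by omega) hi, ih z j (by omega) hj]
      · obtain ⟨z, hz1, hz2⟩ := S.lcmadj hf hxy
        have := congrArg S.ln hz1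
        rw [S.ln_r, S.ln_r] at this
        rw [hz1, hz2, ih (S.r j z) i (by rw [S.ln_r]; omega) hi, ih z j (by omega) hj,
          ih (S.r i z) j (by rw [S.ln_r]; omega) hj, ih z i (by omega) hi]
  intro x
  exact key _ x i (Nat.lt_succ_self _) hi

theorem red_spec (b : ℕ) (x : X) : (¬ ∃ y, ∃ i, i < b ∧ red S b x = S.r i y) ∧
    S.ln (red S b x) ≤ S.ln x ∧
    Finsupp.single x (1 : F) - Finsupp.single (red S b x) 1 ∈ LL F S.toBrAct b := by
  have key : ∀ N x, S.ln x < N → (¬ ∃ y, ∃ i, i < b ∧ red S b x = S.r i y) ∧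
    S.ln (red S b x) ≤ S.ln x ∧
    Finsupp.single x (1 : F) - Finsupp.single (red S b x) 1 ∈ LL F S.toBrAct b := by
    intro N
    induction N with
    | zero => intro x h; omega
    | succ N ih =>
      intro x hx
      by_cases h : ∃ y, ∃ i, i < b ∧ x = S.r i y
      · obtain ⟨y, i, hi, rfl⟩ := h
        rw [S.ln_r] at hx
        obtain ⟨h1, h2, h3⟩ := ih y (by omega)
        rw [red_r S hi]
        refine ⟨h1, by rw [S.ln_r]; omega, ?_⟩
        have := mem_LL F S.toBrAct hi (Finsupp.single y 1)
        rw [RR_single] at this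
        have := add_mem this h3
        simpa using this
      · rw [red_of_irr S h]
        exact ⟨h, le_refl _, by simp⟩
  exact key _ x (Nat.lt_succ_self _)

/-- Linear extension of the reduction. -/
def redL (b : ℕ) : (X →₀ F) →ₗ[F] (X →₀ F) := Finsupp.lmapDomain F F (red S b)

theorem redL_single (b : ℕ) (x : X) (c : F) :
    redL F S b (Finsupp.single x c) = Finsupp.single (red S b x) c := by
  simp [redL, Finsupp.mapDomain_single]

theorem redL_LL {b : ℕ} {z : X →₀ F} (hz : z ∈ LL F S.toBrAct b) : redL F S b z = 0 := by
  have : LL F S.toBrAct b ≤ LinearMap.ker (redL F S b) := by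
    apply LL_le_of
    intro i hi x
    rw [LinearMap.mem_ker, map_sub, sub_eq_zero]
    induction x using Finsupp.induction_linear with
    | zero => simp
    | add f g hf hg => simp only [map_add, hf, hg]
    | single x c => rw [RR_single, redL_single, redL_single, red_r S hi]
  exact this hz

theorem sub_redL (b : ℕ) (z : X →₀ F) : z - redL F S b z ∈ LL F S.toBrAct b := by
  induction z using Finsupp.induction_linear with
  | zero => simp
  | add f g hf hg =>
    have := add_mem hf hg
    rw [map_add]; convert this using 1; abel
  | single x c =>
    rw [redL_single]
    have := Submodule.smul_mem _ c (red_spec F S b x).2.2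
    simpa [smul_sub] using this

/-- Chains of bounded length. -/
def Slt (N : ℕ) : Submodule F (X →₀ F) := Finsupp.supported F F {x | S.ln x < N}

theorem Slt_mono {N K : ℕ} (h : N ≤ K) : Slt F S N ≤ Slt F S K :=
  Finsupp.supported_mono (fun x (hx : S.ln x < N) => (lt_of_lt_of_le hx h : S.ln x < K))

theorem single_mem_Slt {N : ℕ} {x : X} {c : F} (h : S.ln x < N) :
    Finsupp.single x c ∈ Slt F S N := Finsupp.single_mem_supported F c h

theorem lmap_supported {Y Z : Type} (f : Y → Z) {s : Set Y} {t : Set Z} (h : ∀ y ∈ s, f y ∈ t)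
    {z : Y →₀ F} (hz : z ∈ Finsupp.supported F F s) :
    Finsupp.lmapDomain F F f z ∈ Finsupp.supported F F t := by
  classical
  intro y hy
  have := Finsupp.mapDomain_support hy
  simp only [Finset.mem_image] at this
  obtain ⟨x, hx, rfl⟩ := this
  exact h x (hz hx)

theorem RR_Slt {N i : ℕ} {z : X →₀ F} (hz : z ∈ Slt F S N) :
    RR F S.toBrAct i z ∈ Slt F S (N + 1) :=
  lmap_supported F _ (fun y (hy : S.ln y < N) => by
    show S.ln (S.r i y) < N + 1
    rw [S.ln_r]; omega) hz

theorem redL_Slt {N b : ℕ} {z : X →₀ F} (hz : z ∈ Slt F S N) :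
    redL F S b z ∈ Slt F S N :=
  lmap_supported F _ (fun y (hy : S.ln y < N) => by
    show S.ln (red S b y) < N
    have := (red_spec F S b y).2.1
    omega) hz

/-- Leading term. -/
def cc (B : ℕ) : ℕ → X → X
  | 0 => id
  | (p + 1) => fun x => S.r (B - 1 - p) (cc B p x)

theorem cc_succ (B p : ℕ) (x : X) : cc S B (p + 1) x = S.r (B - 1 - p) (cc S B p x) := rfl

theorem cc_ln (B p : ℕ) (x : X) : S.ln (cc S B p x) = S.ln x + p := by
  induction p with
  | zero => rfl
  | succ p ih => rw [cc_succ, S.ln_r, ih]; rfl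

theorem cc_inj (B p : ℕ) : Function.Injective (cc S B p) := by
  induction p with
  | zero => exact fun _ _ h => h
  | succ p ih => exact fun x y h => ih (S.inj h)

theorem cc_r {B p i : ℕ} (h : i + p + 1 < B) (x : X) :
    cc S B p (S.r i x) = S.r i (cc S B p x) := by
  induction p with
  | zero => rfl
  | succ p ih =>
    rw [cc_succ, ih (by omega), cc_succ, S.comm (by unfold far; omega)]

theorem cc_descA {B p j : ℕ} (h : j + p + 1 < B) {x y : X} (hxy : S.r j y = cc S B p x) :
    ∃ x', x = S.r j x' := by
  induction p generalizing y with
  | zero => exact ⟨y, hxy.symm⟩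
  | succ p ih =>
    obtain ⟨z, _, hz⟩ := S.lcmfar (by unfold far; omega) hxy
    exact ih (by omega) hz.symm

theorem cc_descB {B p : ℕ} (h : p + 1 ≤ B) {x y : X} (hxy : S.r (B - 1 - p) y = cc S B p x) :
    ∃ x', x = cc S B (p + 1) x' := by
  induction p generalizing x y with
  | zero => exact ⟨y, hxy.symm⟩
  | succ p ih =>
    obtain ⟨z, _, hz⟩ := S.lcmadj (by unfold adj; omega) hxy
    obtain ⟨x', rfl⟩ := cc_descA S (by omega) hz.symm
    rw [cc_r S (by omega)] at hz
    obtain ⟨x'', rfl⟩ := ih (by omega) (S.inj hz).symm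
    exact ⟨x'', rfl⟩

/-- Linear extension of the leading term. -/
def ccL (B p : ℕ) : (X →₀ F) →ₗ[F] (X →₀ F) := Finsupp.lmapDomain F F (cc S B p)

theorem ccL_succ (B p : ℕ) (z : X →₀ F) :
    ccL F S B (p + 1) z = RR F S.toBrAct (B - 1 - p) (ccL F S B p z) := by
  simp only [ccL, RR, Finsupp.lmapDomain_apply, ← Finsupp.mapDomain_comp]
  rfl

theorem lead (B p : ℕ) {N : ℕ} {z : X →₀ F} (hz : z ∈ Slt F S (N + 1)) :
    Sig F S.toBrAct B p z - (-1 : F) ^ p • ccL F S B p z ∈ Slt F S (N + p) := by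
  induction p with
  | zero => simp [Sig_zero, ccL, cc]
  | succ p ih =>
    have h1 := sub_mem (Slt_mono F S (show N + 1 ≤ N + (p + 1) by omega) hz)
      (RR_Slt F S (i := B - 1 - p) ih)
    convert h1 using 1
    rw [Sig_succ, ccL_succ, map_sub, map_smul, pow_succ]
    simp only [mul_neg, mul_one, neg_smul]
    abel

theorem neg_one_smul_cancel (p : ℕ) {Y : Type} [AddCommGroup Y] [Module F Y] (y : Y) :
    (-1 : F) ^ p • (-1 : F) ^ p • y = y := by
  rw [smul_smul, ← mul_pow]; simp

theorem exact_top {B p N : ℕ} (h : p + 1 ≤ B) {z : X →₀ F} (hz : z ∈ Slt F S (N + 1))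
    (hs : Sig F S.toBrAct B p z ∈ LL F S.toBrAct (B - p))
    (hirr : ∀ x, z x ≠ 0 → S.ln x = N → (¬ ∃ y, ∃ i, i < B - p - 1 ∧ x = S.r i y) ∧
      ¬ ∃ y, x = cc S B (p + 1) y) : z ∈ Slt F S N := by
  classical
  set w := z.filter (fun x => S.ln x = N) with hw
  have hzw : z - w ∈ Slt F S N := by
    intro x hx
    simp only [Finset.mem_coe, Finsupp.mem_support_iff, Finsupp.sub_apply] at hx
    have hzx : z x ≠ 0 := by
      intro h0; apply hx; rw [hw, Finsupp.filter_apply]; simp [h0]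
    have hlt : S.ln x < N + 1 := hz (Finsupp.mem_support_iff.2 hzx)
    have hne : S.ln x ≠ N := by
      intro h0; apply hx; rw [hw, Finsupp.filter_apply, if_pos h0, sub_self]
    show S.ln x < N
    omega
  have hwN : w ∈ Slt F S (N + 1) := by
    have := sub_mem hz (Slt_mono F S (Nat.le_succ N) hzw)
    simpa using this
  have hcw : ccL F S B p w ∈ Finsupp.supported F F {x | S.ln x = N + p} := by
    refine lmap_supported F _ (s := {x | S.ln x = N}) (fun y (hy : S.ln y = N) => ?_) ?_
    · show S.ln (cc S B p y) = N + p
      rw [cc_ln, hy]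
    · intro x hx
      simp only [hw, Finset.mem_coe, Finsupp.support_filter, Finset.mem_filter] at hx
      exact hx.2
  have hred : redL F S (B - p) (ccL F S B p w) = ccL F S B p w := by
    simp only [redL, ccL, Finsupp.lmapDomain_apply, ← Finsupp.mapDomain_comp]
    apply Finsupp.mapDomain_congr
    intro x hx
    simp only [hw, Finsupp.support_filter, Finset.mem_filter, Finsupp.mem_support_iff] at hx
    obtain ⟨h1, h2⟩ := hirr x hx.1 hx.2
    apply red_of_irr
    rintro ⟨y, i, hi, hy⟩
    rcases Nat.lt_or_ge i (B - p - 1) with hi' | hi'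
    · obtain ⟨x', hx'⟩ := cc_descA S (by omega) hy.symm
      exact h1 ⟨x', i, hi', hx'⟩
    · have : i = B - 1 - p := by omega
      subst this
      exact h2 (cc_descB S h hy.symm)
  have hsig : Sig F S.toBrAct B p z - (-1 : F) ^ p • ccL F S B p w ∈ Slt F S (N + p) := by
    have h1 := lead F S B p hz
    have h2 : ccL F S B p (z - w) ∈ Slt F S (N + p) :=
      lmap_supported F _ (fun y (hy : S.ln y < N) => by
        show S.ln (cc S B p y) < N + p
        rw [cc_ln]; omega) hzw
    have := add_mem h1 (Submodule.smul_mem _ ((-1 : F) ^ p) h2)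
    convert this using 1
    rw [map_sub, smul_sub]; abel
  have h3 := redL_Slt F S (b := B - p) hsig
  rw [map_sub, redL_LL F S hs, map_smul, hred, zero_sub] at h3
  have h4 : ccL F S B p w ∈ Slt F S (N + p) := by
    have := Submodule.smul_mem _ ((-1 : F) ^ p) (neg_mem h3)
    rwa [neg_neg, neg_one_smul_cancel] at this
  have h5 : ccL F S B p w = 0 := by
    ext x
    by_contra hx
    have hx' : x ∈ (ccL F S B p w).support := Finsupp.mem_support_iff.2 hx
    have a1 : S.ln x = N + p := hcw hx'
    have a2 : S.ln x < N + p := h4 hx'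
    omega
  have h6 : w = 0 := by
    apply Finsupp.mapDomain_injective (cc_inj S B p)
    rw [Finsupp.mapDomain_zero]; exact h5
  rw [h6, sub_zero] at hzw
  exact hzw

theorem exact_aux {B p : ℕ} (h : p + 1 ≤ B) (N : ℕ) : ∀ z : X →₀ F, z ∈ Slt F S N →
    Sig F S.toBrAct B p z ∈ LL F S.toBrAct (B - p) →
    ∃ y, z - Sig F S.toBrAct B (p + 1) y ∈ LL F S.toBrAct (B - p - 1) := by
  classical
  induction N with
  | zero =>
    intro z hz _
    refine ⟨0, ?_⟩
    have : z = 0 := by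
      ext x
      by_contra hx
      have : S.ln x < 0 := hz (Finsupp.mem_support_iff.2 hx)
      omega
    simp [this]
  | succ N ih =>
    intro z hz hs
    set z1 := redL F S (B - p - 1) z with hz1
    have hz1' : z1 ∈ Slt F S (N + 1) := redL_Slt F S hz
    have hd : z - z1 ∈ LL F S.toBrAct (B - p - 1) := sub_redL F S _ z
    have hs1 : Sig F S.toBrAct B p z1 ∈ LL F S.toBrAct (B - p) := by
      have := sub_mem hs (LL_mono F S.toBrAct (show B - p - 1 ≤ B - p by omega)
        (Sig_LL F S.toBrAct hd))
      rwa [map_sub, sub_sub_cancel] at this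
    have hirr1 : ∀ x, z1 x ≠ 0 → ¬ ∃ y, ∃ i, i < B - p - 1 ∧ x = S.r i y := by
      intro x hx
      have := Finsupp.mapDomain_support (Finsupp.mem_support_iff.2 hx)
      simp only [Finset.mem_image] at this
      obtain ⟨x0, _, rfl⟩ := this
      exact (red_spec F S _ x0).1
    set w := z1.filter (fun x => S.ln x = N ∧ ∃ y, x = cc S B (p + 1) y) with hw
    obtain ⟨y, hy⟩ : ∃ y, ccL F S B (p + 1) y = w := by
      have : w ∈ LinearMap.range (ccL F S B (p + 1)) := by
        rw [← Finsupp.sum_single w]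
        apply Submodule.sum_mem
        intro x hx
        simp only [hw, Finsupp.support_filter, Finset.mem_filter] at hx
        obtain ⟨_, _, y, rfl⟩ := hx
        exact ⟨Finsupp.single y _, by simp [ccL, Finsupp.mapDomain_single]; rfl⟩
      exact this
    have hyK : ∀ x, y x ≠ 0 → S.ln x + (p + 1) = N := by
      intro x hx
      have h1 : w (cc S B (p + 1) x) = y x := by
        rw [← hy]; exact Finsupp.mapDomain_apply (cc_inj S B (p + 1)) _ _
      by_contra hne
      apply hx
      rw [← h1, hw, Finsupp.filter_apply, if_neg]
      rintro ⟨h2, _⟩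
      rw [cc_ln] at h2
      exact hne h2
    have hlead : Sig F S.toBrAct B (p + 1) y - (-1 : F) ^ (p + 1) • w ∈ Slt F S N := by
      by_cases hN : p + 1 ≤ N
      · have hyS : y ∈ Slt F S (N - (p + 1) + 1) := by
          intro x hx
          have := hyK x (Finsupp.mem_support_iff.1 hx)
          show S.ln x < _
          omega
        have := lead F S B (p + 1) hyS
        rw [hy] at this
        rwa [Nat.sub_add_cancel hN] at this
      · have : y = 0 := by
          ext x
          by_contra hx
          have := hyK x hx
          omega
        rw [← hy, this]; simp
    set z2 := z1 - Sig F S.toBrAct B (p + 1) ((-1 : F) ^ (p + 1) • y) with hz2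
    have hlead2 : z2 - (z1 - w) ∈ Slt F S N := by
      have := Submodule.smul_mem _ ((-1 : F) ^ (p + 1)) (neg_mem hlead)
      convert this using 1
      rw [hz2, map_smul, neg_sub, smul_sub, neg_one_smul_cancel]
      abel
    have hz2' : z2 ∈ Slt F S N := by
      have hzw : z1 - w ∈ Slt F S (N + 1) := by
        intro x hx
        have hx' := Finsupp.mem_support_iff.1 hx
        apply hz1'
        apply Finsupp.mem_support_iff.2
        intro h0
        apply hx'
        rw [Finsupp.sub_apply, hw, Finsupp.filter_apply, h0]; simp
      refine exact_top F S h (N := N) ?_ ?_ ?_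
      · have := add_mem (Slt_mono F S (Nat.le_succ N) hlead2) hzw
        simpa using this
      · rw [hz2, map_sub]
        exact sub_mem hs1 (Sig_Sig F S.toBrAct h _)
      · intro x hx hxN
        have hval : z2 x = (z1 - w) x := by
          by_contra hne
          have : S.ln x < N := hlead2 (Finsupp.mem_support_iff.2 (by
            rw [Finsupp.sub_apply]; exact sub_ne_zero.2 hne))
          omega
        rw [hval, Finsupp.sub_apply, hw, Finsupp.filter_apply] at hx
        have hx1 : z1 x ≠ 0 := by
          intro h0; apply hx; simp [h0]
        refine ⟨hirr1 x hx1, fun hex => hx ?_⟩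
        rw [if_pos ⟨hxN, hex⟩, sub_self]
    obtain ⟨y2, hy2⟩ := ih z2 hz2' (by
      rw [hz2, map_sub]
      exact sub_mem hs1 (Sig_Sig F S.toBrAct h _))
    refine ⟨(-1 : F) ^ (p + 1) • y + y2, ?_⟩
    have := add_mem hd hy2
    convert this using 1
    rw [hz2, map_add]; abel

theorem GS_exact {B p : ℕ} (h : p + 1 ≤ B) (z : X →₀ F)
    (hs : Sig F S.toBrAct B p z ∈ LL F S.toBrAct (B - p)) :
    ∃ y, z - Sig F S.toBrAct B (p + 1) y ∈ LL F S.toBrAct (B - p - 1) := by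
  refine exact_aux F S h ((z.support.sup S.ln) + 1) z ?_ hs
  intro x hx
  show S.ln x < _
  have := Finset.le_sup (f := S.ln) hx
  omega

end exact

end BRS

namespace BRS

section center
variable {H : Type} [Monoid H]

/-- Elements satisfying the braid relations for indices below `b`. -/
structure BrFam (a : ℕ → H) (b : ℕ) : Prop where
  comm : ∀ i j, i + 1 < j → j < b → a i * a j = a j * a i
  braid : ∀ i, i + 1 < b → a i * a (i + 1) * a i = a (i + 1) * a i * a (i + 1)

/-- Products `a 0 ⋯ a (m-1)`. -/
def dl (a : ℕ → H) : ℕ → H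
  | 0 => 1
  | (m + 1) => dl a m * a m

/-- Products `a 1 ⋯ a m`. -/
def dsh (a : ℕ → H) : ℕ → H
  | 0 => 1
  | (m + 1) => dsh a m * a (m + 1)

theorem dsh_eq (a : ℕ → H) (m : ℕ) : a 0 * dsh a m = dl a (m + 1) := by
  induction m with
  | zero => simp [dsh, dl]
  | succ m ih => rw [dsh, ← mul_assoc, ih]; rfl

/-- Positive elements. -/
def Pos (a : ℕ → H) (b : ℕ) : Submonoid H := Submonoid.closure {x | ∃ i, i < b ∧ x = a i}

theorem mem_Pos {a : ℕ → H} {b i : ℕ} (h : i < b) : a i ∈ Pos a b :=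
  Submonoid.subset_closure ⟨i, h, rfl⟩

theorem Pos_mono {a : ℕ → H} {b c : ℕ} (h : b ≤ c) : Pos a b ≤ Pos a c := by
  apply Submonoid.closure_mono
  rintro x ⟨i, hi, rfl⟩
  exact ⟨i, by omega, rfl⟩

theorem dl_mem {a : ℕ → H} {b m : ℕ} (h : m ≤ b) : dl a m ∈ Pos a b := by
  induction m with
  | zero => exact one_mem _
  | succ m ih => exact mul_mem (ih (by omega)) (mem_Pos (by omega))

theorem dl_comm {a : ℕ → H} {b : ℕ} (hf : BrFam a b) {m i : ℕ} (h : m < i) (hi : i < b) :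
    a i * dl a m = dl a m * a i := by
  induction m with
  | zero => simp [dl]
  | succ m ih =>
    rw [dl, ← mul_assoc, ih (by omega), mul_assoc, ← hf.comm m i (by omega) hi, mul_assoc]

theorem dl_shift {a : ℕ → H} {b : ℕ} (hf : BrFam a b) {m i : ℕ} (h : i + 1 < m) (hm : m ≤ b) :
    dl a m * a i = a (i + 1) * dl a m := by
  induction m with
  | zero => omega
  | succ m ih =>
    by_cases h' : i + 1 < m
    · rw [dl, mul_assoc, ← hf.comm i m h' (by omega), ← mul_assoc, ih h' (by omega), mul_assoc]
    · have : m = i + 1 := by omega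
      subst this
      rw [dl, dl]
      have h1 := hf.braid i (by omega)
      have h2 := dl_comm hf (m := i) (i := i + 1) (by omega) (by omega)
      calc dl a i * a i * a (i + 1) * a i = dl a i * (a i * a (i + 1) * a i) := by
            simp only [mul_assoc]
        _ = dl a i * a (i + 1) * a i * a (i + 1) := by rw [h1]; simp only [mul_assoc]
        _ = _ := by rw [← h2]; simp only [mul_assoc]

theorem dl_dl {a : ℕ → H} {b : ℕ} (hf : BrFam a b) {m : ℕ} (hm : m + 1 ≤ b) :
    dl a b * dl a m = dsh a m * dl a b := by
  induction m with
  | zero => simp [dl, dsh]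
  | succ m ih =>
    rw [dl, ← mul_assoc, ih (by omega), mul_assoc, dl_shift hf (by omega) le_rfl, dsh, mul_assoc]

theorem dl_sq {a : ℕ → H} {c : ℕ} (hf : BrFam a (c + 1)) :
    dl a (c + 1) ^ 2 * a c = a 0 * dl a (c + 1) ^ 2 := by
  have h := dl_dl hf (m := c) le_rfl
  symm
  calc a 0 * dl a (c + 1) ^ 2 = a 0 * (dl a (c + 1) * dl a c) * a c := by
        rw [pow_two]; conv_lhs => rw [dl]
        simp only [dl, mul_assoc]
    _ = (a 0 * dsh a c) * dl a (c + 1) * a c := by rw [h]; simp only [mul_assoc]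
    _ = _ := by rw [dsh_eq, pow_two]

theorem dl_pow {a : ℕ → H} {b : ℕ} (hf : BrFam a b) (j i : ℕ) (h : i + j < b) :
    dl a b ^ j * a i = a (i + j) * dl a b ^ j := by
  induction j with
  | zero => simp
  | succ j ih =>
    rw [pow_succ', mul_assoc, ih (by omega), ← mul_assoc, dl_shift hf (by omega) le_rfl,
      mul_assoc]
    rfl

/-- A central positive element. -/
theorem center_exists {a : ℕ → H} {b : ℕ} (hf : BrFam a b) : ∃ z ∈ Pos a b,
    (∀ i, i < b → z * a i = a i * z) ∧ ∀ i, i < b → ∃ u ∈ Pos a b, z = u * a i := by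
  cases b with
  | zero => exact ⟨1, one_mem _, by simp, by simp⟩
  | succ c =>
    refine ⟨dl a (c + 1) ^ (c + 2), pow_mem (dl_mem le_rfl) _, ?_, ?_⟩
    · intro i hi
      obtain ⟨e, rfl⟩ : ∃ e, c = i + e := ⟨c - i, by omega⟩
      have h1 := dl_pow hf e i (by omega)
      have h2 := dl_sq hf
      have h3 := dl_pow hf i 0 (by omega)
      rw [zero_add] at h3
      set D := dl a (i + e + 1)
      have hD : D ^ (i + e + 2) = D ^ i * D ^ 2 * D ^ e := by
        rw [← pow_add, ← pow_add]; congr 1; omega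
      rw [hD]
      calc D ^ i * D ^ 2 * D ^ e * a i = D ^ i * (D ^ 2 * a (i + e)) * D ^ e := by
            rw [mul_assoc _ _ (a i), h1]; simp only [mul_assoc]
        _ = (D ^ i * a 0) * D ^ 2 * D ^ e := by rw [h2]; simp only [mul_assoc]
        _ = _ := by rw [h3]; simp only [mul_assoc]
    · intro i hi
      obtain ⟨e, rfl⟩ : ∃ e, c = i + e := ⟨c - i, by omega⟩
      have h1 := dl_pow hf e i (by omega)
      refine ⟨dl a (i + e + 1) ^ (i + 1) * dl a (i + e) * dl a (i + e + 1) ^ e,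
        mul_mem (mul_mem (pow_mem (dl_mem le_rfl) _) (dl_mem (by omega)))
          (pow_mem (dl_mem le_rfl) _), ?_⟩
      rw [mul_assoc, h1, mul_assoc, ← mul_assoc (dl a (i + e)) (a (i + e))]
      change _ = _ * (dl a (i + e + 1) * _)
      rw [← mul_assoc, ← pow_succ, ← pow_add]
      congr 1
      omega

theorem Pos_comm {a : ℕ → H} {b : ℕ} {z : H} (hz : ∀ i, i < b → z * a i = a i * z) (m : ℕ)
    {x : H} (hx : x ∈ Pos a b) : z ^ m * x = x * z ^ m := by
  have : x ∈ Submonoid.centralizer {z} := by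
    have hle : Pos a b ≤ Submonoid.centralizer {z} := by
      apply Submonoid.closure_le.2
      rintro x ⟨i, hi, rfl⟩
      rw [SetLike.mem_coe, Submonoid.mem_centralizer_iff]
      intro g hg
      rw [Set.mem_singleton_iff.1 hg]
      exact hz i hi
    exact hle hx
  rw [Submonoid.mem_centralizer_iff] at this
  exact (Commute.pow_left (this z rfl) m)

theorem Pos_ore {a : ℕ → H} {b : ℕ} (hf : BrFam a b) {x y : H} (hx : x ∈ Pos a b)
    (hy : y ∈ Pos a b) : ∃ w ∈ Pos a b, ∃ v ∈ Pos a b, w * x = v * y := by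
  obtain ⟨z, hz, hz1, hz2⟩ := center_exists hf
  have key : ∃ u ∈ Pos a b, ∃ m : ℕ, u * y = z ^ m := by
    induction hy using Submonoid.closure_induction_right with
    | one => exact ⟨1, one_mem _, 0, by simp⟩
    | mul_right y hy s hs ih =>
      obtain ⟨i, hi, rfl⟩ := hs
      obtain ⟨u, hu, m, hum⟩ := ih
      obtain ⟨v, hv, hvz⟩ := hz2 i hi
      refine ⟨v * u, mul_mem hv hu, m + 1, ?_⟩
      calc v * u * (y * a i) = v * (u * y * a i) := by simp only [mul_assoc]
        _ = v * a i * z ^ m := by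
          rw [hum, Pos_comm hz1 m (mem_Pos hi), mul_assoc]
        _ = _ := by rw [← hvz, pow_succ']
  obtain ⟨u, hu, m, hum⟩ := key
  exact ⟨z ^ m, pow_mem hz _, x * u, mul_mem hx hu, by rw [Pos_comm hz1 m hx, mul_assoc, hum]⟩

end center

theorem BM_fam (b : ℕ) : BrFam am b :=
  ⟨fun _ _ h _ => am_comm (Or.inl h), fun _ _ => am_braid (Or.inl rfl)⟩

theorem BM_Pos (x : BM) : ∃ b, x ∈ Pos am b := by
  induction x using BM_induction with
  | h1 => exact ⟨0, one_mem _⟩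
  | h2 x i ih =>
    obtain ⟨b, hb⟩ := ih
    exact ⟨max b (i + 1), mul_mem (Pos_mono (le_max_left _ _) hb) (mem_Pos (by omega))⟩

theorem BM_ore (x y : BM) : ∃ w v : BM, w * x = v * y := by
  obtain ⟨b, hb⟩ := BM_Pos x
  obtain ⟨c, hc⟩ := BM_Pos y
  obtain ⟨w, _, v, _, h⟩ := Pos_ore (BM_fam (max b c)) (Pos_mono (le_max_left _ _) hb)
    (Pos_mono (le_max_right _ _) hc)
  exact ⟨w, v, h⟩

instance oreBM : OreLocalization.OreSet (⊤ : Submonoid BM) where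
  ore_right_cancel r₁ r₂ s h := ⟨1, by rw [BM_right_cancel h]⟩
  oreNum r s := (BM_ore r s).choose_spec.choose
  oreDenom r s := ⟨(BM_ore r s).choose, trivial⟩
  ore_eq r s := (BM_ore r s).choose_spec.choose_spec

/-- The group of fractions of the braid monoid. -/
abbrev GG : Type := (OreLocalization (⊤ : Submonoid BM) BM)ˣ

/-- The inclusion of the braid monoid in its group of fractions. -/
def mg : BM →* GG :=
  IsUnit.liftRight OreLocalization.numeratorHom
    (fun x => OreLocalization.numerator_isUnit (⟨x, trivial⟩ : (⊤ : Submonoid BM)))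

theorem mg_val (x : BM) : (mg x : OreLocalization (⊤ : Submonoid BM) BM)
    = OreLocalization.oreDiv x 1 := rfl

theorem mg_inj : Function.Injective mg := by
  intro x y h
  have h' : OreLocalization.oreDiv x (1 : (⊤ : Submonoid BM)) = OreLocalization.oreDiv y 1 := by
    rw [← mg_val, ← mg_val, h]
  rw [OreLocalization.oreDiv_eq_iff] at h'
  obtain ⟨u, v, h1, h2⟩ := h'
  simp only [Submonoid.coe_one, mul_one] at h2
  subst h2
  exact (BM_left_cancel h1).symm

theorem mg_denom (g : GG) : ∃ m x : BM, mg m * g = mg x := by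
  obtain ⟨r, s, h⟩ : ∃ (r : BM) (s : (⊤ : Submonoid BM)),
      (g : OreLocalization (⊤ : Submonoid BM) BM) = OreLocalization.oreDiv r s := by
    induction g.val using OreLocalization.ind with
    | c r s => exact ⟨r, s, rfl⟩
  refine ⟨s, r, ?_⟩
  ext
  rw [Units.val_mul, h, mg_val, mg_val, OreLocalization.mul_cancel]

/-- The generators in the infinite braid group. -/
def sg (i : ℕ) : GG := mg (am i)

theorem sg_comm {i j : ℕ} (h : far i j) : sg i * sg j = sg j * sg i := by
  simp only [sg, ← map_mul, am_comm h]

theorem sg_braid {i j : ℕ} (h : adj i j) : sg i * sg j * sg i = sg j * sg i * sg j := by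
  simp only [sg, ← map_mul, am_braid h]

/-- Relations of the braid group. -/
def brels (n : ℕ) : Set (FreeGroup (Fin (n - 1))) :=
  {r | (∃ i j : Fin (n - 1), (i : ℕ) + 1 < j ∧
      r = FreeGroup.of i * FreeGroup.of j * (FreeGroup.of j * FreeGroup.of i)⁻¹) ∨
    (∃ i j : Fin (n - 1), (j : ℕ) = i + 1 ∧
      r = FreeGroup.of i * FreeGroup.of j * FreeGroup.of i *
        (FreeGroup.of j * FreeGroup.of i * FreeGroup.of j)⁻¹)}

/-- The braid group on `n` strands. -/
abbrev PG (n : ℕ) : Type := PresentedGroup (brels n)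

def pgen (n : ℕ) (i : Fin (n - 1)) : PG n := PresentedGroup.of i

theorem pgen_comm {n : ℕ} {i j : Fin (n - 1)} (h : (i : ℕ) + 1 < j) :
    pgen n i * pgen n j = pgen n j * pgen n i := by
  have : PresentedGroup.mk (brels n) (FreeGroup.of i * FreeGroup.of j *
      (FreeGroup.of j * FreeGroup.of i)⁻¹) = 1 :=
    PresentedGroup.one_of_mem (Or.inl ⟨i, j, h, rfl⟩)
  rw [map_mul, map_inv, mul_inv_eq_one] at this
  simp only [map_mul] at this
  exact this

theorem pgen_braid {n : ℕ} {i j : Fin (n - 1)} (h : (j : ℕ) = i + 1) :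
    pgen n i * pgen n j * pgen n i = pgen n j * pgen n i * pgen n j := by
  have : PresentedGroup.mk (brels n) (FreeGroup.of i * FreeGroup.of j * FreeGroup.of i *
      (FreeGroup.of j * FreeGroup.of i * FreeGroup.of j)⁻¹) = 1 :=
    PresentedGroup.one_of_mem (Or.inr ⟨i, j, h, rfl⟩)
  rw [map_mul, map_inv, mul_inv_eq_one] at this
  simp only [map_mul] at this
  exact this

/-- Universal property of the braid groups. -/
def PGlift {n : ℕ} {H : Type} [Group H] (f : Fin (n - 1) → H)
    (h1 : ∀ i j : Fin (n - 1), (i : ℕ) + 1 < (j : ℕ) → f i * f j = f j * f i)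
    (h2 : ∀ i j : Fin (n - 1), (j : ℕ) = (i : ℕ) + 1 → f i * f j * f i = f j * f i * f j) : PG n →* H :=
  PresentedGroup.toGroup (f := f) (by
    rintro r (⟨i, j, h, rfl⟩ | ⟨i, j, h, rfl⟩)
    · simp only [map_mul, map_inv, FreeGroup.lift_apply_of, mul_inv_eq_one]; exact h1 i j h
    · simp only [map_mul, map_inv, FreeGroup.lift_apply_of, mul_inv_eq_one]; exact h2 i j h)

theorem PGlift_pgen {n : ℕ} {H : Type} [Group H] (f : Fin (n - 1) → H) (h1) (h2) (i) :
    PGlift f h1 h2 (pgen n i) = f i := PresentedGroup.toGroup.of _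

/-- The map of braid groups to the infinite braid group. -/
def io (n : ℕ) : PG n →* GG :=
  PGlift (fun i => sg i) (fun _ _ h => sg_comm (Or.inl h)) (fun _ _ h => sg_braid (Or.inl h))

theorem io_pgen (n : ℕ) (i : Fin (n - 1)) : io n (pgen n i) = sg i := PGlift_pgen _ _ _ _

/-- Extended generators. -/
def pa (n : ℕ) (i : ℕ) : PG n := if h : i < n - 1 then pgen n ⟨i, h⟩ else 1

theorem pa_fam (n : ℕ) : BrFam (pa n) (n - 1) := by
  constructor
  · intro i j h hj
    rw [pa, pa, dif_pos (by omega), dif_pos hj]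
    exact pgen_comm h
  · intro i h
    rw [pa, pa, dif_pos (by omega), dif_pos h]
    exact pgen_braid rfl

theorem PG_frac {n : ℕ} (g : PG n) :
    ∃ u ∈ Pos (pa n) (n - 1), ∃ v ∈ Pos (pa n) (n - 1), u * g = v := by
  have hg : g ∈ Subgroup.closure (Set.range (PresentedGroup.of : Fin (n - 1) → PG n)) := by
    rw [PresentedGroup.closure_range_of]; trivial
  induction hg using Subgroup.closure_induction with
  | mem x hx =>
    obtain ⟨i, rfl⟩ := hx
    refine ⟨1, one_mem _, _, mem_Pos i.2, ?_⟩
    rw [pa, dif_pos i.2, one_mul]; rfl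
  | one => exact ⟨1, one_mem _, 1, one_mem _, by simp⟩
  | mul g h _ _ hg hh =>
    obtain ⟨u, hu, v, hv, e⟩ := hg
    obtain ⟨u', hu', v', hv', e'⟩ := hh
    obtain ⟨w, hw, w', hw', e''⟩ := Pos_ore (pa_fam n) hv hu'
    refine ⟨w * u, mul_mem hw hu, w' * v', mul_mem hw' hv', ?_⟩
    rw [← e', ← mul_assoc w', ← e'', ← e]; simp only [mul_assoc]
  | inv g _ hg =>
    obtain ⟨u, hu, v, hv, e⟩ := hg
    exact ⟨v, hv, u, hu, by rw [← e]; group⟩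

/-- Evaluation of words. -/
def wd (n : ℕ) : FreeMonoid ℕ →* PG n := FreeMonoid.lift (pa n)

def allLt (b : ℕ) (w : FreeMonoid ℕ) : Prop := ∀ i ∈ FreeMonoid.toList w, i < b

theorem allLt_mul (b : ℕ) (u v : FreeMonoid ℕ) : allLt b (u * v) ↔ allLt b u ∧ allLt b v := by
  simp only [allLt, FreeMonoid.toList_mul, List.mem_append]
  constructor
  · intro h; exact ⟨fun i hi => h i (Or.inl hi), fun i hi => h i (Or.inr hi)⟩
  · rintro ⟨h1, h2⟩ i (hi | hi)
    · exact h1 i hi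
    · exact h2 i hi

theorem allLt_of (b i : ℕ) : allLt b (FreeMonoid.of i) ↔ i < b := by
  simp [allLt]

theorem wd_step {n : ℕ} {u v : FreeMonoid ℕ} (h : Step u v) :
    (allLt (n - 1) u ↔ allLt (n - 1) v) ∧ (allLt (n - 1) u → wd n u = wd n v) := by
  obtain ⟨p, s, l, r, h, rfl, rfl⟩ := h
  have key : (allLt (n - 1) l ↔ allLt (n - 1) r) ∧ (allLt (n - 1) l → wd n l = wd n r) := by
    cases h with
    | comm i j h =>
      simp only [allLt_mul, allLt_of]
      refine ⟨by tauto, fun hh => ?_⟩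
      simp only [map_mul, wd, FreeMonoid.lift_eval_of]
      exact (pa_fam n).comm i j h hh.2
    | braid i =>
      simp only [allLt_mul, allLt_of]
      refine ⟨by tauto, fun hh => ?_⟩
      simp only [map_mul, wd, FreeMonoid.lift_eval_of]
      exact (pa_fam n).braid i hh.1.2
  simp only [allLt_mul, key.1]
  refine ⟨trivial, fun hh => ?_⟩
  rw [map_mul, map_mul, map_mul, map_mul, key.2 (key.1.2 hh.1.2)]

theorem wd_eqv {n : ℕ} {u v : FreeMonoid ℕ} (h : Relation.EqvGen Step u v) :
    (allLt (n - 1) u ↔ allLt (n - 1) v) ∧ (allLt (n - 1) u → wd n u = wd n v) := by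
  induction h with
  | rel _ _ h => exact wd_step h
  | refl _ => exact ⟨Iff.rfl, fun _ => rfl⟩
  | symm _ _ _ ih => exact ⟨ih.1.symm, fun h => (ih.2 (ih.1.2 h)).symm⟩
  | trans _ _ _ _ _ ih1 ih2 =>
    exact ⟨ih1.1.trans ih2.1, fun h => (ih1.2 h).trans (ih2.2 (ih1.1.1 h))⟩

theorem Pos_word {n : ℕ} {x : PG n} (hx : x ∈ Pos (pa n) (n - 1)) :
    ∃ w, allLt (n - 1) w ∧ wd n w = x ∧ io n x = mg (cl w) := by
  induction hx using Submonoid.closure_induction with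
  | mem x hx =>
    obtain ⟨i, hi, rfl⟩ := hx
    refine ⟨FreeMonoid.of i, (allLt_of _ _).2 hi, by simp [wd], ?_⟩
    rw [pa, dif_pos hi, io_pgen]; rfl
  | one => exact ⟨1, by simp [allLt], map_one _, by rw [map_one, cl_one, map_one]⟩
  | mul x y _ _ hx hy =>
    obtain ⟨u, hu1, hu2, hu3⟩ := hx
    obtain ⟨v, hv1, hv2, hv3⟩ := hy
    exact ⟨u * v, (allLt_mul _ _ _).2 ⟨hu1, hv1⟩, by rw [map_mul, hu2, hv2],
      by rw [map_mul, hu3, hv3, cl_mul, map_mul]⟩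

theorem io_inj (n : ℕ) : Function.Injective (io n) := by
  rw [injective_iff_map_eq_one]
  intro g hg
  obtain ⟨u, hu, v, hv, e⟩ := PG_frac g
  obtain ⟨w1, h1, h2, h3⟩ := Pos_word hu
  obtain ⟨w2, h1', h2', h3'⟩ := Pos_word hv
  have : mg (cl w1) = mg (cl w2) := by
    rw [← h3, ← h3', ← e, map_mul, hg, mul_one]
  have := (wd_eqv (n := n) (eqv_of_cl_eq (mg_inj this))).2 h1
  rw [h2, h2', ← e] at this
  simpa using this.symm

/-- Stabilization of braid groups. -/
def pst (n : ℕ) : PG (n - 1) →* PG n :=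
  PGlift (fun i => pgen n (Fin.castLE (by omega) i))
    (fun _ _ h => pgen_comm (by simpa using h)) (fun _ _ h => pgen_braid (by simpa using h))

theorem io_pst (n : ℕ) (g : PG (n - 1)) : io n (pst n g) = io (n - 1) g := by
  have : (io n).comp (pst n) = io (n - 1) := by
    apply PresentedGroup.ext
    intro x
    have h1 : pst n (pgen (n - 1) x) = pgen n (Fin.castLE (by omega) x) := PGlift_pgen _ _ _ _
    change io n (pst n (pgen (n - 1) x)) = io (n - 1) (pgen (n - 1) x)
    rw [h1, io_pgen, io_pgen]; rfl
  exact DFunLike.congr_fun this g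

end BRS

namespace BRS

/-- Iterated products, used for the simplices of the standard resolution. -/
def Tp (S : Type) : ℕ → Type
  | 0 => Unit
  | (q + 1) => S × Tp S q

def tcons {S : Type} {q : ℕ} (s : S) (w : Tp S q) : Tp S (q + 1) := (s, w)

def tm {S T : Type} (f : S → T) : ∀ q, Tp S q → Tp T q
  | 0, _ => ()
  | (q + 1), w => (f w.1, tm f q w.2)

theorem tm_id {S : Type} (q : ℕ) (w : Tp S q) : tm (fun s : S => s) q w = w := by
  induction q with
  | zero => rfl
  | succ q ih => exact Prod.ext rfl (ih w.2)

theorem tm_tm {S T U : Type} (f : S → T) (g : T → U) (q : ℕ) (w : Tp S q) :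
    tm g q (tm f q w) = tm (fun s => g (f s)) q w := by
  induction q with
  | zero => rfl
  | succ q ih => exact Prod.ext rfl (ih w.2)

section Pcx
variable (F : Type) [CommRing F]

/-- Chains. -/
abbrev Ch (S : Type) (q : ℕ) : Type := Tp S q →₀ F

def consL {S : Type} {q : ℕ} (s : S) : Ch F S q →ₗ[F] Ch F S (q + 1) :=
  Finsupp.lmapDomain F F (tcons s)

theorem consL_single {S : Type} {q : ℕ} (s : S) (w : Tp S q) (c : F) :
    consL F s (Finsupp.single w c) = Finsupp.single (tcons s w) c := by
  simp [consL, Finsupp.mapDomain_single]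

theorem Ch_induction {S : Type} {q : ℕ} {P : Ch F S (q + 1) → Prop}
    (h0 : P 0) (ha : ∀ x y, P x → P y → P (x + y)) (hs : ∀ s x, P (consL F s x))
    (x : Ch F S (q + 1)) : P x := by
  induction x using Finsupp.induction_linear with
  | zero => exact h0
  | add f g hf hg => exact ha _ _ hf hg
  | single w c =>
    have := hs w.1 (Finsupp.single w.2 c)
    rw [consL_single] at this
    exact this

theorem Ch_ext {S : Type} {q : ℕ} {M : Type} [AddCommGroup M] [Module F M]
    (f g : Ch F S (q + 1) →ₗ[F] M) (h : ∀ s x, f (consL F s x) = g (consL F s x)) (x) :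
    f x = g x := by
  induction x using Ch_induction with
  | h0 => simp
  | ha x y hx hy => rw [map_add, map_add, hx, hy]
  | hs s x => exact h s x

def TM {S T : Type} (f : S → T) (q : ℕ) : Ch F S q →ₗ[F] Ch F T q :=
  Finsupp.lmapDomain F F (tm f q)

theorem TM_single {S T : Type} (f : S → T) (q : ℕ) (w : Tp S q) (c : F) :
    TM F f q (Finsupp.single w c) = Finsupp.single (tm f q w) c := by
  simp [TM, Finsupp.mapDomain_single]

theorem TM_consL {S T : Type} (f : S → T) (q : ℕ) (s : S) (x : Ch F S q) :
    TM F f (q + 1) (consL F s x) = consL F (f s) (TM F f q x) := by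
  induction x using Finsupp.induction_linear with
  | zero => simp
  | add f g hf hg => simp only [map_add, hf, hg]
  | single w c => simp only [consL_single, TM_single]; rfl

theorem TM_TM {S T U : Type} (f : S → T) (g : T → U) (q : ℕ) (x : Ch F S q) :
    TM F g q (TM F f q x) = TM F (fun s => g (f s)) q x := by
  induction x using Finsupp.induction_linear with
  | zero => simp
  | add f g hf hg => simp only [map_add, hf, hg]
  | single w c => simp only [TM_single, tm_tm]

theorem TM_id {S : Type} (q : ℕ) (x : Ch F S q) : TM F (fun s : S => s) q x = x := by
  induction x using Finsupp.induction_linear with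
  | zero => simp
  | add f g hf hg => simp only [map_add, hf, hg]
  | single w c => simp only [TM_single, tm_id]

/-- A linear operator on chains from operators indexed by the head. -/
def headL {S M : Type} [AddCommGroup M] [Module F M] {q : ℕ} (f : S → (Ch F S q →ₗ[F] M)) :
    Ch F S (q + 1) →ₗ[F] M :=
  Finsupp.linearCombination F (fun w : Tp S (q + 1) => f w.1 (Finsupp.single w.2 1))

theorem headL_consL {S M : Type} [AddCommGroup M] [Module F M] {q : ℕ}
    (f : S → (Ch F S q →ₗ[F] M)) (s : S) (x : Ch F S q) :
    headL F f (consL F s x) = f s x := by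
  induction x using Finsupp.induction_linear with
  | zero => simp
  | add f g hf hg => simp only [map_add, hf, hg]
  | single w c =>
    rw [consL_single, headL, Finsupp.linearCombination_single]
    have : Finsupp.single w c = c • Finsupp.single w (1 : F) := by simp
    rw [this, map_smul]; rfl

/-- The differential. -/
def dd (S : Type) : ∀ q, Ch F S (q + 1) →ₗ[F] Ch F S q
  | 0 => headL F (fun _ => LinearMap.id)
  | (q + 1) => headL F (fun s => LinearMap.id - (consL F s).comp (dd S q))

theorem dd_zero (S : Type) (s : S) (x : Ch F S 0) : dd F S 0 (consL F s x) = x :=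
  headL_consL _ _ _ _

theorem dd_succ (S : Type) (q : ℕ) (s : S) (x : Ch F S (q + 1)) :
    dd F S (q + 1) (consL F s x) = x - consL F s (dd F S q x) :=
  headL_consL _ _ _ _

theorem dd_dd (S : Type) (q : ℕ) (x : Ch F S (q + 2)) : dd F S q (dd F S (q + 1) x) = 0 := by
  induction q with
  | zero =>
    refine Ch_ext F ((dd F S 0).comp (dd F S 1)) 0 ?_ x
    intro s x
    simp only [LinearMap.comp_apply, dd_succ, map_sub, LinearMap.zero_apply]
    rw [dd_zero, sub_self]
  | succ q ih =>
    refine Ch_ext F ((dd F S (q + 1)).comp (dd F S (q + 2))) 0 ?_ x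
    intro s x
    simp only [LinearMap.comp_apply, dd_succ, map_sub, LinearMap.zero_apply, ih]
    simp

theorem dd_TM {S T : Type} (f : S → T) (q : ℕ) (x : Ch F S (q + 1)) :
    dd F T q (TM F f (q + 1) x) = TM F f q (dd F S q x) := by
  induction q with
  | zero =>
    refine Ch_ext F ((dd F T 0).comp (TM F f 1)) ((TM F f 0).comp (dd F S 0)) ?_ x
    intro s x
    simp only [LinearMap.comp_apply, TM_consL, dd_zero]
  | succ q ih =>
    refine Ch_ext F ((dd F T (q + 1)).comp (TM F f (q + 2)))
      ((TM F f (q + 1)).comp (dd F S (q + 1))) ?_ x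
    intro s x
    simp only [LinearMap.comp_apply, TM_consL, dd_succ, ih, map_sub]

/-- The prism homotopy. -/
def prism {S T : Type} (f g : S → T) : ∀ q, Ch F S q →ₗ[F] Ch F T (q + 1)
  | 0 => 0
  | (q + 1) => headL F (fun s => (consL F (f s)).comp
      ((consL F (g s)).comp (TM F g q) - prism f g q))

theorem prism_consL {S T : Type} (f g : S → T) (q : ℕ) (s : S) (x : Ch F S q) :
    prism F f g (q + 1) (consL F s x) =
      consL F (f s) (consL F (g s) (TM F g q x) - prism F f g q x) :=
  headL_consL _ _ _ _

theorem prism_spec {S T : Type} (f g : S → T) (q : ℕ) (x : Ch F S (q + 1)) :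
    dd F T (q + 1) (prism F f g (q + 1) x) + prism F f g q (dd F S q x)
      = TM F g (q + 1) x - TM F f (q + 1) x := by
  induction q with
  | zero =>
    refine Ch_ext F ((dd F T 1).comp (prism F f g 1) + (prism F f g 0).comp (dd F S 0))
      (TM F g 1 - TM F f 1) ?_ x
    intro s x
    simp only [LinearMap.add_apply, LinearMap.comp_apply, LinearMap.sub_apply, prism_consL,
      TM_consL, dd_succ, map_sub, dd_zero]
    have h0 : ∀ y, prism F f g 0 y = 0 := fun _ => rfl
    have h1 : TM F g 0 x = TM F f 0 x := rfl
    rw [h0, h1]; simp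
  | succ q ih =>
    refine Ch_ext F ((dd F T (q + 2)).comp (prism F f g (q + 2)) +
      (prism F f g (q + 1)).comp (dd F S (q + 1)))
      (TM F g (q + 2) - TM F f (q + 2)) ?_ x
    intro s x
    have := ih x
    have h2 : dd F T (q + 1) (prism F f g (q + 1) x) =
      TM F g (q + 1) x - TM F f (q + 1) x - prism F f g q (dd F S q x) := by
      rw [← this]; abel
    simp only [LinearMap.add_apply, LinearMap.comp_apply, LinearMap.sub_apply, prism_consL,
      TM_consL, dd_succ, map_sub, h2, dd_TM]
    abel

theorem prism_TM {S T : Type} (f g : S → T) (a : S → S) (a' : T → T)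
    (hf : ∀ s, f (a s) = a' (f s)) (hg : ∀ s, g (a s) = a' (g s)) (q : ℕ) (x : Ch F S q) :
    prism F f g q (TM F a q x) = TM F a' (q + 1) (prism F f g q x) := by
  induction q with
  | zero =>
    have h0 : ∀ y, prism F f g 0 y = 0 := fun _ => rfl
    rw [h0, h0, map_zero]
  | succ q ih =>
    refine Ch_ext F ((prism F f g (q + 1)).comp (TM F a (q + 1)))
      ((TM F a' (q + 2)).comp (prism F f g (q + 1))) ?_ x
    intro s x
    simp only [LinearMap.comp_apply, prism_consL, TM_consL, map_sub, ih, TM_TM, hf, hg]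

end Pcx

/-- The diagonal action on tuples. -/
def tact {S : Type} (A : BrAct S) (q : ℕ) : BrAct (Tp S q) where
  r i := tm (A.r i) q
  comm := fun {i j} h x => by
    rw [tm_tm, tm_tm]; congr 1; funext s; exact A.comm h s
  braid := fun {i j} h x => by
    rw [tm_tm, tm_tm, tm_tm, tm_tm]; congr 1; funext s; exact A.braid h s

theorem RR_tact (F : Type) [CommRing F] {S : Type} (A : BrAct S) (q i : ℕ) :
    RR F (tact A q) i = TM F (A.r i) q := rfl

/-- The right action of positive braids on the braid group. -/
def gact : BrAct GG where
  r i g := g * sg i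
  comm := fun {i j} h x => by
    rw [mul_assoc, mul_assoc, sg_comm h.symm]
  braid := fun {i j} h x => by
    simp only [mul_assoc]; congr 1
    have := sg_braid h
    simpa only [mul_assoc] using this

end BRS

namespace BRS

/-- Free right actions of the braid monoid. -/
def fGS (T : Type) : GS (T × BM) where
  r i w := (w.1, w.2 * am i)
  comm := fun {i j} h x => by
    refine Prod.ext rfl ?_
    show x.2 * am j * am i = x.2 * am i * am j
    rw [mul_assoc, mul_assoc, am_comm h]
  braid := fun {i j} h x => by
    refine Prod.ext rfl ?_
    show x.2 * am i * am j * am i = x.2 * am j * am i * am j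
    have := am_braid h
    simp only [mul_assoc] at this ⊢
    rw [this]
  ln w := ln w.2
  ln_r i x := by simp only [ln_mul, ln_am]
  inj := fun {i x y} h => by
    have h1 := congrArg Prod.fst h
    have h2 := congrArg Prod.snd h
    exact Prod.ext h1 (am_right_cancel h2)
  lcmfar := fun {i j x y} h hh => by
    have h1 := congrArg Prod.fst hh
    have h2 := congrArg Prod.snd hh
    obtain ⟨z, e1, e2⟩ := C_far h (garside h2)
    exact ⟨(x.1, z), Prod.ext rfl e1, Prod.ext h1.symm e2⟩
  lcmadj := fun {i j x y} h hh => by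
    have h1 := congrArg Prod.fst hh
    have h2 := congrArg Prod.snd hh
    obtain ⟨z, e1, e2⟩ := C_adj h (garside h2)
    exact ⟨(x.1, z), Prod.ext rfl e1, Prod.ext h1.symm e2⟩

def fT (q : ℕ) (m : BM) (w : Tp GG q × BM) : Tp GG (q + 1) :=
  tcons ((mg m)⁻¹ * mg w.2) (tm (fun g => g * ((mg m)⁻¹ * mg w.2)) q w.1)

theorem tm_inj {S T : Type} {f : S → T} (hf : Function.Injective f) (q : ℕ) :
    Function.Injective (tm f q) := by
  induction q with
  | zero => intro x y _; rfl
  | succ q ih =>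
    intro x y h
    exact Prod.ext (hf (congrArg Prod.fst h)) (ih (congrArg Prod.snd h))

theorem fT_inj (q : ℕ) (m : BM) : Function.Injective (fT q m) := by
  rintro ⟨h, x⟩ ⟨h', x'⟩ e
  have e1 : (mg m)⁻¹ * mg x = (mg m)⁻¹ * mg x' := congrArg Prod.fst e
  have e1' : x = x' := mg_inj (mul_left_cancel e1)
  subst e1'
  have e2 : tm (fun g => g * ((mg m)⁻¹ * mg x)) q h = tm (fun g => g * ((mg m)⁻¹ * mg x)) q h' :=
    congrArg Prod.snd e
  rw [tm_inj (mul_left_injective _) q e2]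

theorem fT_act (q : ℕ) (m : BM) (i : ℕ) (w : Tp GG q × BM) :
    fT q m ((fGS (Tp GG q)).r i w) = (tact gact (q + 1)).r i (fT q m w) := by
  refine Prod.ext ?_ ?_
  · show (mg m)⁻¹ * mg (w.2 * am i) = (mg m)⁻¹ * mg w.2 * sg i
    rw [map_mul, mul_assoc]; rfl
  · show tm _ q _ = tm _ q (tm _ q _)
    rw [tm_tm]
    show tm (fun g => g * ((mg m)⁻¹ * mg (w.2 * am i))) q w.1 = _
    congr 1
    funext s
    show s * ((mg m)⁻¹ * mg (w.2 * am i)) = s * ((mg m)⁻¹ * mg w.2) * sg i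
    rw [map_mul, mul_assoc, mul_assoc]; rfl

def wT (T : Type) (v : BM) (w : T × BM) : T × BM := (w.1, v * w.2)

theorem wT_act (T : Type) (v : BM) (i : ℕ) (w : T × BM) :
    wT T v ((fGS T).r i w) = (fGS T).r i (wT T v w) :=
  Prod.ext rfl (mul_assoc _ _ _).symm

theorem fT_wT (q : ℕ) (m v : BM) (w : Tp GG q × BM) :
    fT q (v * m) (wT _ v w) = fT q m w := by
  have : (mg (v * m))⁻¹ * mg (v * w.2) = (mg m)⁻¹ * mg w.2 := by
    rw [map_mul, map_mul]; group
  simp only [fT, wT, this]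

theorem fT_surj (q : ℕ) (t : Tp GG (q + 1)) : ∃ m w, fT q m w = t := by
  obtain ⟨m, x, h⟩ := mg_denom t.1
  have h' : (mg m)⁻¹ * mg x = t.1 := by rw [← h]; group
  refine ⟨m, (tm (fun g => g * t.1⁻¹) q t.2, x), ?_⟩
  refine Prod.ext h' ?_
  show tm _ q (tm _ q _) = _
  rw [tm_tm]
  show tm (fun g => g * t.1⁻¹ * ((mg m)⁻¹ * mg x)) q t.2 = t.2
  rw [h']
  simp only [inv_mul_cancel_right, tm_id]

theorem Sig_map (F : Type) [CommRing F] {X Y : Type} (S : BrAct X) (S' : BrAct Y)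
    (f : (X →₀ F) →ₗ[F] (Y →₀ F)) (h : ∀ i x, f (RR F S i x) = RR F S' i (f x))
    (B p : ℕ) (x : X →₀ F) : f (Sig F S B p x) = Sig F S' B p (f x) := by
  induction p with
  | zero => rfl
  | succ p ih => rw [Sig_succ, Sig_succ, map_sub, h, ih]

theorem RR_lmap (F : Type) [CommRing F] {X Y : Type} (S : BrAct X) (S' : BrAct Y)
    (f : X → Y) (i : ℕ) (h : ∀ x, f (S.r i x) = S'.r i (f x)) (z : X →₀ F) :
    Finsupp.lmapDomain F F f (RR F S i z) = RR F S' i (Finsupp.lmapDomain F F f z) := by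
  induction z using Finsupp.induction_linear with
  | zero => simp
  | add f g hf hg => simp only [map_add, hf, hg]
  | single x c =>
    simp only [RR_single, Finsupp.lmapDomain_apply, Finsupp.mapDomain_single, h]

section transfer
variable (F : Type) [CommRing F] (q : ℕ)

def FT (m : BM) : (Tp GG q × BM →₀ F) →ₗ[F] Ch F GG (q + 1) := Finsupp.lmapDomain F F (fT q m)
def WT (v : BM) : (Tp GG q × BM →₀ F) →ₗ[F] (Tp GG q × BM →₀ F) :=
  Finsupp.lmapDomain F F (wT _ v)

theorem FT_WT (m v : BM) (z) : FT F q (v * m) (WT F q v z) = FT F q m z := by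
  induction z using Finsupp.induction_linear with
  | zero => simp
  | add f g hf hg => simp only [map_add, hf, hg]
  | single x c =>
    simp only [FT, WT, Finsupp.lmapDomain_apply, Finsupp.mapDomain_single, fT_wT]

theorem FT_RR (m : BM) (i : ℕ) (z) :
    FT F q m (RR F (fGS (Tp GG q)).toBrAct i z) = RR F (tact gact (q + 1)) i (FT F q m z) :=
  RR_lmap F _ _ _ i (fT_act q m i) z

theorem WT_RR (m : BM) (i : ℕ) (z) :
    WT F q m (RR F (fGS (Tp GG q)).toBrAct i z) = RR F (fGS (Tp GG q)).toBrAct i (WT F q m z) :=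
  RR_lmap F _ _ _ i (wT_act _ m i) z

theorem FT_inj (m : BM) : Function.Injective (FT F q m) :=
  Finsupp.mapDomain_injective (fT_inj q m)

theorem FT_surj (z : Ch F GG (q + 1)) : ∃ m y, FT F q m y = z := by
  induction z using Finsupp.induction_linear with
  | zero => exact ⟨1, 0, map_zero _⟩
  | add f g hf hg =>
    obtain ⟨m, y, rfl⟩ := hf
    obtain ⟨m', y', rfl⟩ := hg
    obtain ⟨w, v, e⟩ := BM_ore m m'
    refine ⟨w * m, WT F q w y + WT F q v y', ?_⟩
    rw [map_add, FT_WT, e, FT_WT]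
  | single x c =>
    obtain ⟨m, w, h⟩ := fT_surj q x
    exact ⟨m, Finsupp.single w c, by simp [FT, Finsupp.mapDomain_single, h]⟩

theorem FT_LL (b : ℕ) (z : Ch F GG (q + 1)) (hz : z ∈ LL F (tact gact (q + 1)) b) :
    ∃ m, ∃ y ∈ LL F (fGS (Tp GG q)).toBrAct b, FT F q m y = z := by
  induction hz using Submodule.span_induction with
  | mem x hx =>
    obtain ⟨i, hi, x, rfl⟩ := hx
    obtain ⟨m, y, rfl⟩ := FT_surj F q x
    exact ⟨m, _, mem_LL F _ hi y, by rw [map_sub, FT_RR]⟩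
  | zero => exact ⟨1, 0, zero_mem _, map_zero _⟩
  | add f g _ _ hf hg =>
    obtain ⟨m, y, hy, rfl⟩ := hf
    obtain ⟨m', y', hy', rfl⟩ := hg
    obtain ⟨w, v, e⟩ := BM_ore m m'
    refine ⟨w * m, WT F q w y + WT F q v y', add_mem ?_ ?_, ?_⟩
    · exact LL_map F _ _ _ (fun i _ x => WT_RR F q w i x) hy
    · exact LL_map F _ _ _ (fun i _ x => WT_RR F q v i x) hy'
    · rw [map_add, FT_WT, e, FT_WT]
  | smul c x _ hx =>
    obtain ⟨m, y, hy, rfl⟩ := hx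
    exact ⟨m, c • y, Submodule.smul_mem _ _ hy, by simp⟩

/-- Exactness of the complexes of cosets of the braid group. -/
theorem G_exact {B p : ℕ} (h : p + 1 ≤ B) (z : Ch F GG (q + 1))
    (hs : Sig F (tact gact (q + 1)) B p z ∈ LL F (tact gact (q + 1)) (B - p)) :
    ∃ y, z - Sig F (tact gact (q + 1)) B (p + 1) y ∈ LL F (tact gact (q + 1)) (B - p - 1) := by
  obtain ⟨m, z0, rfl⟩ := FT_surj F q z
  obtain ⟨m', l, hl, e⟩ := FT_LL F q _ _ hs
  obtain ⟨w, v, ee⟩ := BM_ore m m'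
  have h1 : Sig F (fGS (Tp GG q)).toBrAct B p (WT F q w z0) = WT F q v l := by
    apply FT_inj F q (w * m)
    rw [Sig_map F _ _ _ (fun i x => FT_RR F q (w * m) i x), FT_WT, ee, FT_WT, e]
  have h2 : WT F q v l ∈ LL F (fGS (Tp GG q)).toBrAct (B - p) :=
    LL_map F _ _ _ (fun i _ x => WT_RR F q v i x) hl
  rw [← h1] at h2
  obtain ⟨y, hy⟩ := GS_exact F (fGS (Tp GG q)) h _ h2
  refine ⟨FT F q (w * m) y, ?_⟩
  have := LL_map F _ (tact gact (q + 1)) _ (fun i _ x => FT_RR F q (w * m) i x) hy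
  rw [map_sub, FT_WT, Sig_map F _ _ _ (fun i x => FT_RR F q (w * m) i x)] at this
  exact this

end transfer

end BRS

namespace BRS

/-- A chain complex with a filtration of relations. -/
structure SD0 where
  P : ℕ → Type
  inst : ∀ q, AddCommGroup (P q)
  d : ∀ q, P (q + 1) →+ P q
  ddz : ∀ q x, d q (d (q + 1) x) = 0
  L : ∀ q, ℕ → AddSubgroup (P q)
  mono : ∀ q b c, b ≤ c → L q b ≤ L q c
  dL : ∀ q b x, x ∈ L (q + 1) b → d q x ∈ L q b

attribute [instance] SD0.inst

namespace SD0
variable (S : SD0)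

/-- Relative cycles. -/
def Cyc : ∀ (q b : ℕ), S.P q → Prop
  | 0, _, _ => True
  | (q + 1), b, x => S.d q x ∈ S.L q b

/-- Relative boundaries. -/
def Bd (q b : ℕ) (x : S.P q) : Prop := ∃ y, x - S.d q y ∈ S.L q b

variable {S} {q b : ℕ} {x y : S.P q}

theorem Cyc_add (hx : S.Cyc q b x) (hy : S.Cyc q b y) : S.Cyc q b (x + y) := by
  cases q with
  | zero => trivial
  | succ q => show S.d q (x + y) ∈ _; rw [map_add]; exact add_mem hx hy

theorem Cyc_sub (hx : S.Cyc q b x) (hy : S.Cyc q b y) : S.Cyc q b (x - y) := by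
  cases q with
  | zero => trivial
  | succ q => show S.d q (x - y) ∈ _; rw [map_sub]; exact sub_mem hx hy

theorem Cyc_L (hx : x ∈ S.L q b) : S.Cyc q b x := by
  cases q with
  | zero => trivial
  | succ q => exact S.dL _ _ _ hx

theorem Cyc_d (w : S.P (q + 1)) : S.Cyc q b (S.d q w) := by
  cases q with
  | zero => trivial
  | succ q => show S.d q _ ∈ _; rw [S.ddz]; exact zero_mem _

theorem Cyc_mono {c : ℕ} (h : b ≤ c) (hx : S.Cyc q b x) : S.Cyc q c x := by
  cases q with
  | zero => trivial
  | succ q => exact S.mono _ _ _ h hx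

theorem Bd_add (hx : S.Bd q b x) (hy : S.Bd q b y) : S.Bd q b (x + y) := by
  obtain ⟨u, hu⟩ := hx
  obtain ⟨v, hv⟩ := hy
  refine ⟨u + v, ?_⟩
  have := add_mem hu hv
  rw [map_add]; convert this using 1; abel

theorem Bd_neg (hx : S.Bd q b x) : S.Bd q b (-x) := by
  obtain ⟨u, hu⟩ := hx
  refine ⟨-u, ?_⟩
  have := neg_mem hu
  rw [map_neg]; convert this using 1; abel

theorem Bd_sub (hx : S.Bd q b x) (hy : S.Bd q b y) : S.Bd q b (x - y) := by
  rw [sub_eq_add_neg]; exact Bd_add hx (Bd_neg hy)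

theorem Bd_L (hx : x ∈ S.L q b) : S.Bd q b x := ⟨0, by simpa using hx⟩

theorem Bd_d (w : S.P (q + 1)) : S.Bd q b (S.d q w) := ⟨w, by simp⟩

theorem Bd_mono {c : ℕ} (h : b ≤ c) (hx : S.Bd q b x) : S.Bd q c x := by
  obtain ⟨u, hu⟩ := hx
  exact ⟨u, S.mono _ _ _ h hu⟩

end SD0

/-- The data from which stability follows. -/
structure SD extends SD0 where
  s : ∀ (q _B _p : ℕ), P q →+ P q
  ds : ∀ q B p x, d q (s (q + 1) B p x) = s q B p (d q x)
  s0 : ∀ q B x, s q B 0 x = x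
  sL : ∀ q B p x, x ∈ L q (B - p - 1) → s q B p x ∈ L q (B - p - 1)
  ss : ∀ q B p x, p + 1 ≤ B → s q B p (s q B (p + 1) x) ∈ L q (B - p)
  ex : ∀ q B p z, p + 1 ≤ B → s q B p z ∈ L q (B - p) → ∃ y, z - s q B (p + 1) y ∈ L q (B - p - 1)
  even : ∀ q B p z, Even p → toSD0.Cyc q (B - p - 1) z → toSD0.Bd q (B - p - 1) (s q B p z - z)
  odd : ∀ q B p z, ¬ Even p → toSD0.Cyc q (B - p - 1) z → toSD0.Bd q (B - p - 1) (s q B p z)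

namespace SD
variable (S : SD)
open SD0

def StI (B q : ℕ) : Prop := ∀ x, S.Cyc q (B - 1) x → S.Bd q B x → S.Bd q (B - 1) x
def StS (B q : ℕ) : Prop := ∀ y, S.Cyc q B y → ∃ x, S.Cyc q (B - 1) x ∧ S.Bd q B (y - x)
def VV (p q B : ℕ) : Prop := ∀ z, S.Cyc q (B - p - 1) z → S.s q B p z ∈ S.L q (B - p) →
  ∃ y, z - S.d q y ∈ S.L q (B - p - 1) ∧ S.s (q + 1) B p y ∈ S.L (q + 1) (B - p)

variable {S}

theorem CY {B p q : ℕ} (hI : ∀ B', B' < B → ∀ q, 2 * q ≤ B' → S.StI B' q)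
    (hV : ∀ q', q = q' + 2 → S.VV (p + 2) q' B) (hp : Even p) (hB : 2 * q + p ≤ B)
    (x : S.P q) (hx : S.Cyc q (B - p - 1) (S.s q B (p + 1) x)) :
    ∃ x', S.Cyc q (B - p - 2) x' ∧
      S.s q B (p + 1) x - S.s q B (p + 1) x' ∈ S.L q (B - p - 1) := by
  have e3 : B - (p + 2) - 1 = B - p - 2 - 1 := by omega
  have e2 : B - (p + 1) - 1 = B - p - 2 := by omega
  have e2' : B - (p + 2) = B - p - 2 := by omega
  have e1 : B - (p + 1) = B - p - 1 := by omega
  cases q with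
  | zero => exact ⟨x, trivial, by rw [sub_self]; exact zero_mem _⟩
  | succ q =>
    have hu : S.s q B (p + 1) (S.d q x) ∈ S.L q (B - (p + 1)) := by
      rw [← S.ds, e1]; exact hx
    obtain ⟨v, hv⟩ := S.ex q B (p + 1) _ (by omega) hu
    rw [e2] at hv
    obtain ⟨v', hc, hv'⟩ : ∃ v', S.Cyc q (B - p - 2 - 1) v' ∧
        S.d q x - S.s q B (p + 1 + 1) v' ∈ S.L q (B - p - 2) := by
      cases q with
      | zero => exact ⟨v, trivial, hv⟩
      | succ q =>
        have h1 : S.s q B (p + 2) (S.d q v) ∈ S.L q (B - (p + 2)) := by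
          have := S.dL _ _ _ hv
          rw [map_sub, S.ddz, S.ds, zero_sub] at this
          rw [e2']; simpa using neg_mem this
        obtain ⟨y, hy1, hy2⟩ := hV q rfl (S.d q v) (Cyc_d _) h1
        refine ⟨v - y, ?_, ?_⟩
        · show S.d q _ ∈ _
          rw [map_sub, ← e3]; exact hy1
        · rw [map_sub]
          rw [e2'] at hy2
          have := add_mem hv hy2
          convert this using 1
          show _ - (_ - S.s (q + 1) B (p + 2) y) = _
          abel
    have hev := S.even q B (p + 2) v' (hp.add even_two) (by rw [e3]; exact hc)
    rw [e3] at hev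
    have hbd : S.Bd q (B - p - 2) v' := by
      have h1 : S.Bd q (B - p - 2) (S.s q B (p + 2) v' - v') := Bd_mono (by omega) hev
      have h2 : S.Bd q (B - p - 2) (S.d q x - S.s q B (p + 2) v') := Bd_L hv'
      have h3 : S.Bd q (B - p - 2) (S.d q x) := Bd_d _
      have := Bd_sub (Bd_sub h3 h2) h1
      convert this using 1; abel
    obtain ⟨w, hw⟩ := hI (B - p - 2) (by omega) q (by omega) v' hc hbd
    refine ⟨x - S.s (q + 1) B (p + 2) w, ?_, ?_⟩
    · show S.d q _ ∈ _
      rw [map_sub, S.ds]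
      have h1 : S.s q B (p + 2) (v' - S.d q w) ∈ S.L q (B - p - 2) := by
        rw [← e3] at hw
        exact S.mono _ _ _ (by omega) (S.sL q B (p + 2) _ hw)
      have := add_mem hv' h1
      rw [map_sub] at this
      convert this using 1
      show _ = _ - S.s q B (p + 2) v' + _
      abel
    · have h1 := S.ss (q + 1) B (p + 1) w (by omega)
      rw [e1] at h1
      rw [map_sub]
      convert h1 using 1
      show _ - (_ - S.s (q + 1) B (p + 1) (S.s (q + 1) B (p + 2) w)) = _
      abel

theorem VV_all {B : ℕ} (hI : ∀ B', B' < B → ∀ q, 2 * q ≤ B' → S.StI B' q)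
    (hS : ∀ B', B' < B → ∀ q, 2 * q ≤ B' → S.StS B' q) (q : ℕ) :
    ∀ p, Even p → 2 * q + p + 2 ≤ B → S.VV p q B := by
  induction q using Nat.strong_induction_on with
  | _ q IH =>
    intro p hp hB z hz hsz
    have e3 : B - (p + 2) - 1 = B - p - 2 - 1 := by omega
    have e2 : B - (p + 1) - 1 = B - p - 2 := by omega
    have e1 : B - (p + 1) = B - p - 1 := by omega
    obtain ⟨x0, hx0⟩ := S.ex q B p z (by omega) hsz
    have hc0 : S.Cyc q (B - p - 1) (S.s q B (p + 1) x0) := by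
      have := Cyc_sub hz (Cyc_L hx0)
      convert this using 1; abel
    obtain ⟨x, hx, hxx⟩ := CY hI (fun q' hq' => IH q' (by omega) (p + 2) (hp.add even_two)
      (by omega)) hp (by omega) x0 hc0
    obtain ⟨t, ht, y, hy⟩ := hS (B - p - 2) (by omega) q (by omega) x hx
    obtain ⟨y', hy'⟩ := S.even q B (p + 2) t (hp.add even_two) (by rw [e3]; exact ht)
    rw [e3] at hy'
    have hl : x - S.s q B (p + 2) t - S.d q (y - y') ∈ S.L q (B - p - 2) := by
      have := sub_mem hy (S.mono _ _ (B - p - 2) (by omega) hy')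
      rw [map_sub]; convert this using 1; abel
    refine ⟨S.s (q + 1) B (p + 1) (y - y'), ?_, S.ss _ _ _ _ (by omega)⟩
    have h1 : S.s q B (p + 1) (x - S.s q B (p + 2) t - S.d q (y - y')) ∈ S.L q (B - p - 1) := by
      rw [← e2] at hl
      exact S.mono _ _ _ (by omega) (S.sL q B (p + 1) _ hl)
    have h2 := S.ss q B (p + 1) t (by omega)
    rw [e1] at h2
    have := add_mem (add_mem hx0 hxx) (add_mem h1 h2)
    rw [map_sub, map_sub, ← S.ds] at this
    convert this using 1
    show _ = _ + (_ + S.s q B (p + 1) (S.s q B (p + 2) t))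
    abel

theorem St_all (B : ℕ) : ∀ q, 2 * q ≤ B → S.StI B q ∧ S.StS B q := by
  induction B using Nat.strong_induction_on with
  | _ B IH =>
    have hI : ∀ B', B' < B → ∀ q, 2 * q ≤ B' → S.StI B' q := fun B' h q hq => (IH B' h q hq).1
    have hS : ∀ B', B' < B → ∀ q, 2 * q ≤ B' → S.StS B' q := fun B' h q hq => (IH B' h q hq).2
    have hV := VV_all hI hS
    intro q hq
    constructor
    · intro x hx hb
      obtain ⟨y, hy⟩ := hb
      rcases Nat.eq_zero_or_pos B with rfl | hB
      · exact ⟨y, hy⟩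
      have hcl : S.Cyc q (B - 1) (x - S.d q y) := Cyc_sub hx (Cyc_d _)
      set l := x - S.d q y with hl
      obtain ⟨x1, hx1⟩ := S.ex q B 0 l (by omega) (by rw [S.s0]; exact hy)
      have hc0 : S.Cyc q (B - 0 - 1) (S.s q B (0 + 1) x1) := by
        have := Cyc_sub (b := B - 0 - 1) hcl (Cyc_L hx1)
        rw [sub_sub_cancel] at this
        exact this
      obtain ⟨x', h1, h2⟩ := CY hI (fun q' hq' => hV q' 2 even_two (by omega)) Even.zero
        (by omega) x1 hc0
      have h3 := S.odd q B 1 x' (by decide) (by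
        have e : B - 1 - 1 = B - 0 - 2 := by omega
        rw [e]; exact h1)
      have h4 : S.Bd q (B - 1) (S.s q B 1 x') := Bd_mono (by omega) h3
      have := Bd_add (Bd_add (Bd_L hx1) (Bd_L h2)) (Bd_add h4 (Bd_d y))
      have key : x = l - S.s q B 1 x1 + (S.s q B 1 x1 - S.s q B 1 x') +
          (S.s q B 1 x' + S.d q y) := by
        rw [hl]; abel
      rw [key]; exact this
    · intro y hy
      cases q with
      | zero => exact ⟨y, trivial, by rw [sub_self]; exact Bd_L (zero_mem _)⟩
      | succ q =>
        obtain ⟨y', h1, h2⟩ := hV q 0 Even.zero (by omega) (S.d q y) (Cyc_d _)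
          (by rw [S.s0]; exact hy)
        rw [S.s0] at h2
        refine ⟨y - y', ?_, ?_⟩
        · show S.d q _ ∈ _
          rw [map_sub]; exact h1
        · rw [sub_sub_cancel]; exact Bd_L h2

end SD

end BRS

namespace BRS

section gdata
variable (F : Type) [CommRing F]

/-- The relations on chains of the braid group. -/
abbrev GLm (q b : ℕ) : Submodule F (Ch F GG q) := LL F (tact gact q) b

theorem dd_GL (q b : ℕ) {x : Ch F GG (q + 1)} (hx : x ∈ GLm F (q + 1) b) :
    dd F GG q x ∈ GLm F q b :=
  LL_map F _ _ _ (fun i _ x => by rw [RR_tact, RR_tact, dd_TM]) hx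

/-- The standard complex of the infinite braid group. -/
def gSD0 : SD0 where
  P q := Ch F GG (q + 1)
  inst q := inferInstance
  d q := (dd F GG (q + 1)).toAddMonoidHom
  ddz q x := dd_dd F GG (q + 1) x
  L q b := (GLm F (q + 1) b).toAddSubgroup
  mono q b c h := LL_mono F _ h
  dL q b x hx := dd_GL F (q + 1) b hx

theorem Bd_of_eq {q b : ℕ} {x y : Ch F GG (q + 1)} (h : x = y) (hy : (gSD0 F).Bd q b y) :
    (gSD0 F).Bd q b x := h ▸ hy

theorem prism_GL (f g : GG → GG) (b : ℕ) (hf : ∀ i, i < b → ∀ x, f (x * sg i) = f x * sg i)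
    (hg : ∀ i, i < b → ∀ x, g (x * sg i) = g x * sg i) (q : ℕ) {x : Ch F GG q}
    (hx : x ∈ GLm F q b) : prism F f g q x ∈ GLm F (q + 1) b :=
  LL_map F _ _ _ (fun i hi x => by
    rw [RR_tact, RR_tact]; exact prism_TM F f g _ _ (hf i hi) (hg i hi) q x) hx

theorem prism_Bd (f g : GG → GG) (b : ℕ) (hf : ∀ i, i < b → ∀ x, f (x * sg i) = f x * sg i)
    (hg : ∀ i, i < b → ∀ x, g (x * sg i) = g x * sg i) (q : ℕ) (x : Ch F GG (q + 1))
    (hx : (gSD0 F).Cyc q b x) :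
    (gSD0 F).Bd q b (show Ch F GG (q + 1) from (TM F g (q + 1) x - TM F f (q + 1) x)) := by
  refine ⟨prism F f g (q + 1) x, ?_⟩
  show TM F g (q + 1) x - TM F f (q + 1) x - dd F GG (q + 1) (prism F f g (q + 1) x)
    ∈ GLm F (q + 1) b
  rw [← prism_spec, add_sub_cancel_left]
  cases q with
  | zero => exact zero_mem _
  | succ q => exact prism_GL F f g b hf hg _ hx

theorem dd_Sig (q B p : ℕ) (x : Ch F GG (q + 1)) :
    dd F GG q (Sig F (tact gact (q + 1)) B p x) = Sig F (tact gact q) B p (dd F GG q x) :=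
  Sig_map F _ _ _ (fun i x => by rw [RR_tact, RR_tact, dd_TM]) B p x

theorem RR_Bd {b i : ℕ} (h : ∀ j, j < b → far j i) (q : ℕ) (x : Ch F GG (q + 1))
    (hx : (gSD0 F).Cyc q b x) :
    (gSD0 F).Bd q b (show Ch F GG (q + 1) from (RR F (tact gact (q + 1)) i x - x)) := by
  have := prism_Bd F (fun x => x) (fun x => x * sg i) b (fun _ _ _ => rfl)
    (fun j hj x => by rw [mul_assoc, sg_comm (h j hj), mul_assoc]) q x hx
  rw [TM_id] at this
  exact this

theorem Sig_Cyc {B p b : ℕ} (h : b ≤ B - p - 1) (q : ℕ) (x : Ch F GG (q + 1))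
    (hx : (gSD0 F).Cyc q b x) :
    (gSD0 F).Cyc q b (Sig F (tact gact (q + 1)) B p x) := by
  cases q with
  | zero => trivial
  | succ q =>
    show dd F GG (q + 1) _ ∈ GLm F (q + 1) b
    rw [dd_Sig]
    exact LL_map F _ _ _ (fun i hi x => Sig_RR' F _ B p i (by omega) x) hx

theorem Sig_Bd {B p b : ℕ} (h : b ≤ B - p - 1) (q : ℕ) (x : Ch F GG (q + 1))
    (hx : (gSD0 F).Cyc q b x) :
    (Even p → (gSD0 F).Bd q b
      (show Ch F GG (q + 1) from (Sig F (tact gact (q + 1)) B p x - x))) ∧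
    (¬ Even p → (gSD0 F).Bd q b (Sig F (tact gact (q + 1)) B p x)) := by
  induction p with
  | zero =>
    refine ⟨fun _ => ?_, fun h => absurd Even.zero h⟩
    have : (0 : Ch F GG (q + 1)) ∈ GLm F (q + 1) b := zero_mem _
    rw [Sig_zero, sub_self]
    exact SD0.Bd_L this
  | succ p ih =>
    obtain ⟨h1, h2⟩ := ih (by omega)
    have h3 := RR_Bd F (b := b) (i := B - 1 - p) (fun j hj => by unfold far; omega) q _
      (Sig_Cyc F (B := B) (p := p) (by omega) q x hx)
    rw [Sig_succ]
    constructor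
    · intro hp
      have hp' : ¬ Even p := by rw [Nat.even_add_one] at hp; exact hp
      have := SD0.Bd_neg (SD0.Bd_add h3 (h2 hp'))
      refine Bd_of_eq F ?_ this
      show _ - _ - _ = -(_ - Sig F (tact gact (q + 1)) B p x + Sig F (tact gact (q + 1)) B p x)
      abel
    · intro hp
      have hp' : Even p := by rw [Nat.even_add_one, not_not] at hp; exact hp
      have := SD0.Bd_neg (SD0.Bd_add h3 (h1 hp'))
      refine Bd_of_eq F ?_ this
      show _ - _ = -(_ - Sig F (tact gact (q + 1)) B p x + (Sig F (tact gact (q + 1)) B p x - x))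
      abel

/-- The stability data of braid groups. -/
def gSD : SD where
  toSD0 := gSD0 F
  s q B p := (Sig F (tact gact (q + 1)) B p).toAddMonoidHom
  ds q B p x := dd_Sig F (q + 1) B p x
  s0 q B x := rfl
  sL q B p x hx := Sig_LL F _ hx
  ss q B p x h := Sig_Sig F _ h x
  ex q B p z h hs := G_exact F q h z hs
  even q B p z hp hz := (Sig_Bd F le_rfl q z hz).1 hp
  odd q B p z hp hz := (Sig_Bd F le_rfl q z hz).2 hp

end gdata
end BRS

namespace BRS

/-- The empty tuple. -/
def t0 (S : Type) : Tp S 0 := ()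

section barP
variable (F : Type) [CommRing F] (H : Type) [Group H]

abbrev MA : Type := MonoidAlgebra F H
abbrev bC (q : ℕ) : Type := (barC F (MA F H) q : Type)

theorem groupAug_single (h : H) (c : F) : groupAug F H (MonoidAlgebra.single h c) = c := by
  simp [groupAug, MonoidAlgebra.lift_single]

/-- From homogeneous to bar generators. -/
def gb : ∀ q, Tp H (q + 1) → bC F H q
  | 0, _ => (1 : F)
  | (q + 1), w => (show MA F H ⊗[F] bC F H q from
      (MonoidAlgebra.single (w.1 * w.2.1⁻¹) 1) ⊗ₜ[F] (gb q w.2))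

def gam (q : ℕ) : Ch F H (q + 1) →ₗ[F] bC F H q := Finsupp.linearCombination F (gb F H q)

/-- `gam` in positive degrees, presented as a map to a tensor product. -/
def gamT (q : ℕ) : Ch F H (q + 2) →ₗ[F] MA F H ⊗[F] bC F H q := gam F H (q + 1)

theorem gam_single (q : ℕ) (w : Tp H (q + 1)) (c : F) :
    gam F H q (Finsupp.single w c) = c • gb F H q w :=
  Finsupp.linearCombination_single _ _ _

theorem gamT_single (q : ℕ) (s t : H) (v : Tp H q) (c : F) :
    gamT F H q (Finsupp.single (tcons s (tcons t v)) c) =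
      (MonoidAlgebra.single (s * t⁻¹) 1) ⊗ₜ[F] (gam F H q (Finsupp.single (tcons t v) c)) := by
  rw [gam_single, TensorProduct.tmul_smul]
  exact gam_single F H (q + 1) _ c

theorem gamT_cons (q : ℕ) (s t : H) (y : Ch F H q) :
    gamT F H q (consL F s (consL F t y)) =
      (MonoidAlgebra.single (s * t⁻¹) 1) ⊗ₜ[F] (gam F H q (consL F t y)) := by
  induction y using Finsupp.induction_linear with
  | zero => simp only [map_zero, TensorProduct.tmul_zero]
  | add f g hf hg => simp only [map_add, hf, hg, TensorProduct.tmul_add]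
  | single w c => simp only [consL_single, gamT_single]

theorem gam_zero_cons (s : H) (y : Ch F H 0) : gam F H 0 (consL F s y) = (y (t0 H) : F) := by
  induction y using Finsupp.induction_linear with
  | zero => simp only [map_zero]; rfl
  | add f g hf hg => simp only [map_add, hf, hg]; rfl
  | single w c =>
    rw [consL_single, gam_single]
    show c * 1 = _
    have hw : w = t0 H := rfl
    rw [mul_one, hw, Finsupp.single_eq_same]

theorem barActT_gamT (q : ℕ) (s t : H) (y : Ch F H (q + 1)) :
    barActT F (MA F H) (groupAug F H) q (MonoidAlgebra.single (s * t⁻¹) 1)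
      (gamT F H q (consL F t y)) = gamT F H q (consL F s y) := by
  refine Ch_ext F ((barActT F (MA F H) (groupAug F H) q (MonoidAlgebra.single (s * t⁻¹) 1)).comp
    ((gamT F H q).comp (consL F t))) ((gamT F H q).comp (consL F s)) ?_ y
  intro u y
  simp only [LinearMap.comp_apply, gamT_cons]
  rw [barActT_tmul, MonoidAlgebra.single_mul_single]
  congr 2 <;> group

theorem barB_gamT (q : ℕ) (s : H) (y : Ch F H (q + 1)) :
    barB F (MA F H) (groupAug F H) q (gamT F H q (consL F s y)) =
      - gam F H q (consL F s (dd F H q y)) := by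
  induction q generalizing s with
  | zero =>
    refine Ch_ext F ((barB F (MA F H) (groupAug F H) 0).comp ((gamT F H 0).comp (consL F s)))
      (-((gam F H 0).comp ((consL F s).comp (dd F H 0)))) ?_ y
    intro t y
    simp only [LinearMap.comp_apply, LinearMap.neg_apply, gamT_cons, dd_zero]
    rw [barB_zero_apply, groupAug_single, gam_zero_cons, gam_zero_cons]
    congr 1
    exact one_mul (y (t0 H) : F)
  | succ q ih =>
    refine Ch_ext F ((barB F (MA F H) (groupAug F H) (q + 1)).comp
      ((gamT F H (q + 1)).comp (consL F s)))
      (-((gam F H (q + 1)).comp ((consL F s).comp (dd F H (q + 1))))) ?_ y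
    intro t y
    simp only [LinearMap.comp_apply, LinearMap.neg_apply, gamT_cons, dd_succ]
    have h1 := barB_succ_apply F (MA F H) (groupAug F H) q (MonoidAlgebra.single (s * t⁻¹) 1)
      (gamT F H q (consL F t y))
    refine h1.trans ?_
    rw [barActT_gamT, ih]
    have h2 : gam F H (q + 1) (consL F s (y - consL F t (dd F H q y)))
        = gamT F H q (consL F s y) - gamT F H q (consL F s (consL F t (dd F H q y))) := by
      rw [← map_sub, ← map_sub]; rfl
    refine Eq.trans ?_ (congrArg Neg.neg h2).symm
    rw [gamT_cons, TensorProduct.tmul_neg]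
    show _ = -(_ - _)
    abel

theorem gam_dd (q : ℕ) (x : Ch F H (q + 2)) :
    bard F (MA F H) (groupAug F H) q (gamT F H q x) = gam F H q (dd F H (q + 1) x) := by
  refine Ch_ext F ((bard F (MA F H) (groupAug F H) q).comp (gamT F H q))
    ((gam F H q).comp (dd F H (q + 1))) ?_ x
  intro s y
  simp only [LinearMap.comp_apply, dd_succ, map_sub]
  rw [bard, LinearMap.add_apply, barB_gamT, ← sub_eq_add_neg]
  congr 1
  refine Ch_ext F ((TensorProduct.lift ((LinearMap.lsmul F (bC F H q)).comp
    (groupAug F H).toLinearMap)).comp ((gamT F H q).comp (consL F s))) (gam F H q) ?_ y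
  intro t y
  simp only [LinearMap.comp_apply, gamT_cons, TensorProduct.lift.tmul, LinearMap.lsmul_apply,
    AlgHom.toLinearMap_apply, groupAug_single, one_smul]

/-- Adding a vertex. -/
def kap (q : ℕ) (h : H) : Ch F H (q + 1) →ₗ[F] Ch F H (q + 2) :=
  Finsupp.lmapDomain F F (fun w : Tp H (q + 1) => tcons (h * w.1) w)

theorem kap_single (q : ℕ) (h : H) (w : Tp H (q + 1)) (c : F) :
    kap F H q h (Finsupp.single w c) = Finsupp.single (tcons (h * w.1) w) c := by
  simp [kap, Finsupp.mapDomain_single]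

/-- From bar generators to homogeneous ones. -/
def bet : ∀ q, bC F H q →ₗ[F] Ch F H (q + 1)
  | 0 => (show F →ₗ[F] Ch F H 1 from Finsupp.lsingle (tcons (1 : H) (t0 H)))
  | (q + 1) => (show MA F H ⊗[F] bC F H q →ₗ[F] Ch F H (q + 2) from
      TensorProduct.lift ((Finsupp.linearCombination F (fun h => (kap F H q h).comp (bet q))).comp
        (MonoidAlgebra.coeffLinearEquiv F).toLinearMap))

def betT (q : ℕ) : MA F H ⊗[F] bC F H q →ₗ[F] Ch F H (q + 2) := bet F H (q + 1)

theorem betT_tmul (q : ℕ) (h : H) (c : F) (x : bC F H q) :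
    betT F H q ((MonoidAlgebra.single h c) ⊗ₜ[F] x) = c • kap F H q h (bet F H q x) := by
  have : betT F H q = TensorProduct.lift
    ((Finsupp.linearCombination F (fun h => (kap F H q h).comp (bet F H q))).comp
        (MonoidAlgebra.coeffLinearEquiv F).toLinearMap) := rfl
  rw [this, TensorProduct.lift.tmul, LinearMap.comp_apply]
  have h2 : (MonoidAlgebra.coeffLinearEquiv F).toLinearMap (MonoidAlgebra.single h c)
    = Finsupp.single h c := rfl
  rw [h2, Finsupp.linearCombination_single]
  rfl

theorem MA_tensor_induction {M : Type} [AddCommGroup M] [Module F M] {P : MA F H ⊗[F] M → Prop}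
    (h0 : P 0) (ha : ∀ x y, P x → P y → P (x + y))
    (hs : ∀ h x, P ((MonoidAlgebra.single h 1) ⊗ₜ[F] x)) (x : MA F H ⊗[F] M) : P x := by
  induction x using TensorProduct.induction_on with
  | zero => exact h0
  | add x y hx hy => exact ha _ _ hx hy
  | tmul a x =>
    induction a using MonoidAlgebra.induction_linear with
    | zero => rw [TensorProduct.zero_tmul]; exact h0
    | add f g hf hg => rw [TensorProduct.add_tmul]; exact ha _ _ hf hg
    | single h c =>
      have : (MonoidAlgebra.single h c : MA F H) = c • MonoidAlgebra.single h 1 := by simp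
      rw [this, TensorProduct.smul_tmul]
      exact hs h _

theorem gamT_kap (q : ℕ) (h : H) (x : Ch F H (q + 1)) :
    gamT F H q (kap F H q h x) = (MonoidAlgebra.single h 1) ⊗ₜ[F] gam F H q x := by
  induction x using Finsupp.induction_linear with
  | zero => simp only [map_zero, TensorProduct.tmul_zero]
  | add f g hf hg => simp only [map_add, hf, hg, TensorProduct.tmul_add]
  | single w c =>
    rw [kap_single]
    have := gamT_single F H q (h * w.1) w.1 w.2 c
    rw [mul_inv_cancel_right] at this
    exact this

theorem gam_bet (q : ℕ) (x : bC F H q) : gam F H q (bet F H q x) = x := by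
  induction q with
  | zero =>
    have : bet F H 0 x = Finsupp.single (tcons (1 : H) (t0 H)) (show F from x) := rfl
    rw [this, gam_single]
    exact mul_one (show F from x)
  | succ q ih =>
    have key : ∀ y : MA F H ⊗[F] bC F H q, gamT F H q (betT F H q y) = y := by
      intro y
      induction y using MA_tensor_induction with
      | h0 => simp only [map_zero]
      | ha x y hx hy => rw [map_add, map_add, hx, hy]
      | hs h x => rw [betT_tmul, one_smul, gamT_kap, ih]
    exact key x

/-- The last entry. -/
def lst : ∀ q, Tp H (q + 1) → H
  | 0, w => w.1
  | (q + 1), w => lst q w.2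

theorem bet_gb (q : ℕ) (w : Tp H (q + 1)) :
    bet F H q (gb F H q w) = Finsupp.single (tm (fun g => g * (lst H q w)⁻¹) (q + 1) w) 1 := by
  induction q with
  | zero =>
    show Finsupp.single (tcons (1 : H) (t0 H)) (1 : F) = _
    congr 1
    refine Prod.ext ?_ rfl
    exact (mul_inv_cancel _).symm
  | succ q ih =>
    have h1 : bet F H (q + 1) (gb F H (q + 1) w) = betT F H q
      ((MonoidAlgebra.single (w.1 * w.2.1⁻¹) 1) ⊗ₜ[F] (gb F H q w.2)) := rfl
    rw [h1, betT_tmul, ih, kap_single, one_smul]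
    congr 1
    refine Prod.ext ?_ rfl
    show w.1 * w.2.1⁻¹ * (w.2.1 * (lst H q w.2)⁻¹) = w.1 * (lst H q w.2)⁻¹
    group

/-- Relations for the full group. -/
def LH (q : ℕ) : Submodule F (Ch F H q) :=
  Submodule.span F {v | ∃ h x, v = TM F (fun g : H => g * h) q x - x}

theorem bet_gam (q : ℕ) (x : Ch F H (q + 1)) : bet F H q (gam F H q x) - x ∈ LH F H (q + 1) := by
  induction x using Finsupp.induction_linear with
  | zero => simp only [map_zero, sub_zero]; exact zero_mem _
  | add f g hf hg =>
    have := add_mem hf hg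
    simp only [map_add]
    convert this using 1; abel
  | single w c =>
    rw [gam_single, map_smul, bet_gb]
    refine Submodule.subset_span ⟨(lst H q w)⁻¹, Finsupp.single w c, ?_⟩
    rw [TM_single]; simp

theorem gb_mul (q : ℕ) (w : Tp H (q + 1)) (h : H) :
    gb F H q (tm (fun g => g * h) (q + 1) w) = gb F H q w := by
  induction q with
  | zero => rfl
  | succ q ih =>
    show (MonoidAlgebra.single (w.1 * h * (w.2.1 * h)⁻¹) 1 : MA F H) ⊗ₜ[F]
      (gb F H q (tm (fun g => g * h) (q + 1) w.2)) =
      (MonoidAlgebra.single (w.1 * w.2.1⁻¹) 1) ⊗ₜ[F] (gb F H q w.2)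
    rw [ih]
    congr 2
    group

theorem gam_mul (q : ℕ) (x : Ch F H (q + 1)) (h : H) :
    gam F H q (TM F (fun g => g * h) (q + 1) x) = gam F H q x := by
  induction x using Finsupp.induction_linear with
  | zero => simp only [map_zero]
  | add f g hf hg => simp only [map_add, hf, hg]
  | single w c => rw [TM_single, gam_single, gam_single, gb_mul]

theorem bet_dd (q : ℕ) (x : MA F H ⊗[F] bC F H q) :
    bet F H q (bard F (MA F H) (groupAug F H) q x) - dd F H (q + 1) (betT F H q x)
      ∈ LH F H (q + 1) := by
  have h := gam_dd F H q (betT F H q x)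
  have h2 : gamT F H q (betT F H q x) = x := gam_bet F H (q + 1) x
  rw [h2] at h
  rw [h]
  exact bet_gam F H q _

end barP

theorem bet_nat (F : Type) [CommRing F] (H K : Type) [Group H] [Group K] (f : H →* K)
    (φ : MA F H →ₐ[F] MA F K)
    (hφ : ∀ h, φ (MonoidAlgebra.single h 1) = MonoidAlgebra.single (f h) 1) (q : ℕ)
    (x : bC F H q) : bet F K q (barMap F φ q x) = TM F f (q + 1) (bet F H q x) := by
  induction q with
  | zero =>
    show Finsupp.single (tcons (1 : K) (t0 K)) (show F from x) =
      TM F f 1 (Finsupp.single (tcons (1 : H) (t0 H)) (show F from x))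
    rw [TM_single]
    congr 1
    exact Prod.ext (map_one f).symm rfl
  | succ q ih =>
    have key : ∀ y : MA F H ⊗[F] bC F H q,
        betT F K q (TensorProduct.map φ.toLinearMap (barMap F φ q) y)
          = TM F f (q + 2) (betT F H q y) := by
      intro y
      induction y using MA_tensor_induction with
      | h0 => simp only [map_zero]
      | ha x y hx hy => simp only [map_add, hx, hy]
      | hs h x =>
        rw [TensorProduct.map_tmul, AlgHom.toLinearMap_apply, hφ, betT_tmul, betT_tmul, one_smul,
          one_smul, ih]
        induction bet F H q x using Finsupp.induction_linear with
        | zero => simp only [map_zero]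
        | add f g hf hg => simp only [map_add, hf, hg]
        | single w c =>
          rw [kap_single, TM_single, TM_single, kap_single]
          congr 1
          exact Prod.ext (map_mul f _ _).symm rfl
    exact key x

end BRS

namespace BRS

/-! Retraction of the infinite braid group onto a finite one. -/

open Classical in
/-- A representative of the coset of `g`. -/
def crep (n : ℕ) (g : GG) : GG :=
  if g ∈ (io n).range then 1 else Quotient.out (QuotientGroup.mk (s := (io n).range) g)

theorem crep_spec (n : ℕ) (g : GG) : ∃ h, io n h = (crep n g)⁻¹ * g := by
  unfold crep
  split_ifs with hg
  · obtain ⟨h, hh⟩ := hg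
    exact ⟨h, by rw [hh, inv_one, one_mul]⟩
  · have := QuotientGroup.mk_out_eq_mul (io n).range g
    obtain ⟨h, hh⟩ := this
    obtain ⟨u, hu⟩ := h.2
    refine ⟨u⁻¹, ?_⟩
    rw [hh, map_inv, hu]; group

theorem crep_mul (n : ℕ) (g : GG) (h : PG n) : crep n (g * io n h) = crep n g := by
  unfold crep
  have h1 : g * io n h ∈ (io n).range ↔ g ∈ (io n).range :=
    Subgroup.mul_mem_cancel_right _ ⟨h, rfl⟩
  have h2 : (QuotientGroup.mk (s := (io n).range) (g * io n h)) = QuotientGroup.mk g :=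
    QuotientGroup.mk_mul_of_mem _ ⟨h, rfl⟩
  rw [h2]
  by_cases hg : g ∈ (io n).range
  · rw [if_pos hg, if_pos (h1.2 hg)]
  · rw [if_neg hg, if_neg (fun h => hg (h1.1 h))]

/-- The retraction. -/
def rho (n : ℕ) (g : GG) : PG n := Classical.choose (crep_spec n g)

theorem io_rho (n : ℕ) (g : GG) : io n (rho n g) = (crep n g)⁻¹ * g :=
  Classical.choose_spec (crep_spec n g)

theorem rho_mul (n : ℕ) (g : GG) (h : PG n) : rho n (g * io n h) = rho n g * h := by
  apply io_inj n
  rw [io_rho, crep_mul, map_mul, io_rho, mul_assoc]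

theorem rho_io (n : ℕ) (h : PG n) : rho n (io n h) = h := by
  apply io_inj n
  rw [io_rho]
  have : crep n (io n h) = 1 := by
    have hm : io n h ∈ (io n).range := ⟨h, rfl⟩
    unfold crep; rw [if_pos hm]
  rw [this, inv_one, one_mul]

theorem rho_sg (n : ℕ) (g : GG) (i : Fin (n - 1)) : rho n (g * sg i) = rho n g * pgen n i := by
  rw [← io_pgen, rho_mul]

section stab
variable (F : Type) [CommRing F]

theorem PG_mem_GLm (n q : ℕ) (h : PG n) :
    ∀ x : Ch F GG q, TM F (fun g => g * io n h) q x - x ∈ GLm F q (n - 1) := by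
  have hh : h ∈ Subgroup.closure (Set.range (PresentedGroup.of (rels := brels n))) := by
    rw [PresentedGroup.closure_range_of]; trivial
  induction hh using Subgroup.closure_induction with
  | mem y hy =>
    obtain ⟨i, rfl⟩ := hy
    intro x
    have h1 : io n (PresentedGroup.of i) = sg i := io_pgen n i
    rw [h1]
    exact mem_LL F (tact gact q) i.2 x
  | one =>
    intro x
    simp only [map_one, mul_one, TM_id, sub_self]
    exact zero_mem _
  | mul a b _ _ ha hb =>
    intro x
    have e : TM F (fun g => g * io n (a * b)) q x
        = TM F (fun g => g * io n b) q (TM F (fun g => g * io n a) q x) := by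
      rw [TM_TM]; simp only [map_mul, mul_assoc]
    rw [e]
    have := add_mem (hb (TM F (fun g => g * io n a) q x)) (ha x)
    convert this using 1; abel
  | inv a _ ha =>
    intro x
    have := neg_mem (ha (TM F (fun g => g * io n a⁻¹) q x))
    rw [TM_TM] at this
    simp only [map_inv, inv_mul_cancel_right, TM_id] at this
    rw [neg_sub] at this
    simpa only [map_inv] using this

theorem TM_io_LH (n q : ℕ) {x : Ch F (PG n) q} (hx : x ∈ LH F (PG n) q) :
    TM F (io n) q x ∈ GLm F q (n - 1) := by
  have : LH F (PG n) q ≤ (GLm F q (n - 1)).comap (TM F (io n) q) := by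
    apply Submodule.span_le.2
    rintro v ⟨h, x, rfl⟩
    show TM F (io n) q (_ - _) ∈ GLm F q (n - 1)
    have := PG_mem_GLm F n q h (TM F (io n) q x)
    rw [map_sub]
    rw [TM_TM] at this ⊢
    simpa only [map_mul] using this
  exact this hx

/-- Restriction of chains to the bar complex of `PG n`. -/
def gn (n q : ℕ) : Ch F GG (q + 1) →ₗ[F] bC F (PG n) q :=
  (gam F (PG n) q).comp (TM F (rho n) (q + 1))

def gnT (n q : ℕ) : Ch F GG (q + 2) →ₗ[F] MA F (PG n) ⊗[F] bC F (PG n) q := gn F n (q + 1)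

def bn (n q : ℕ) : bC F (PG n) q →ₗ[F] Ch F GG (q + 1) :=
  (TM F (io n) (q + 1)).comp (bet F (PG n) q)

def bnT (n q : ℕ) : MA F (PG n) ⊗[F] bC F (PG n) q →ₗ[F] Ch F GG (q + 2) := bn F n (q + 1)

/-- The differential of the bar complex of `PG n`. -/
abbrev pd (n q : ℕ) : MA F (PG n) ⊗[F] bC F (PG n) q →ₗ[F] bC F (PG n) q :=
  bard F (MA F (PG n)) (groupAug F (PG n)) q

theorem gn_GLm (n q : ℕ) {x : Ch F GG (q + 1)} (hx : x ∈ GLm F (q + 1) (n - 1)) :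
    gn F n q x = 0 := by
  have : GLm F (q + 1) (n - 1) ≤ LinearMap.ker (gn F n q) := by
    apply LL_le_of
    intro i hi x
    rw [LinearMap.mem_ker, map_sub, RR_tact, sub_eq_zero]
    show gam F (PG n) q (TM F (rho n) (q + 1) (TM F (fun g => g * sg i) (q + 1) x)) =
      gam F (PG n) q (TM F (rho n) (q + 1) x)
    rw [TM_TM]
    have e : (fun s => rho n (s * sg i)) = fun s => rho n s * pgen n ⟨i, hi⟩ := by
      funext s; exact rho_sg n s ⟨i, hi⟩
    rw [e, ← TM_TM F (rho n) (fun g => g * pgen n ⟨i, hi⟩), gam_mul]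
  exact this hx

theorem gn_bn (n q : ℕ) (x : bC F (PG n) q) : gn F n q (bn F n q x) = x := by
  show gam F (PG n) q (TM F (rho n) (q + 1) (TM F (io n) (q + 1) (bet F (PG n) q x))) = x
  rw [TM_TM]
  simp only [rho_io, TM_id]
  exact gam_bet F (PG n) q x

theorem bn_gn (n q : ℕ) (x : Ch F GG (q + 1)) :
    bn F n q (gn F n q x) - TM F (fun g => io n (rho n g)) (q + 1) x ∈ GLm F (q + 1) (n - 1) := by
  have := TM_io_LH F n (q + 1) (bet_gam F (PG n) q (TM F (rho n) (q + 1) x))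
  rw [map_sub, TM_TM] at this
  exact this

theorem gn_dd (n q : ℕ) (x : Ch F GG (q + 2)) :
    pd F n q (gnT F n q x) = gn F n q (dd F GG (q + 1) x) := by
  have := gam_dd F (PG n) q (TM F (rho n) (q + 2) x)
  rw [dd_TM] at this
  exact this

theorem bn_dd (n q : ℕ) (x : MA F (PG n) ⊗[F] bC F (PG n) q) :
    bn F n q (pd F n q x) - dd F GG (q + 1) (bnT F n q x) ∈ GLm F (q + 1) (n - 1) := by
  have := TM_io_LH F n (q + 1) (bet_dd F (PG n) q x)
  rw [map_sub, ← dd_TM] at this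
  exact this

/-- The map of group algebras. -/
def pstA (n : ℕ) : MA F (PG (n - 1)) →ₐ[F] MA F (PG n) :=
  MonoidAlgebra.lift F (MA F (PG n)) (PG (n - 1)) ((MonoidAlgebra.of F (PG n)).comp (pst n))

theorem pstA_single (n : ℕ) (h : PG (n - 1)) :
    pstA F n (MonoidAlgebra.single h 1) = MonoidAlgebra.single (pst n h) 1 := by
  simp [pstA, MonoidAlgebra.lift_single]

theorem bn_nat (n q : ℕ) (x : bC F (PG (n - 1)) q) :
    bn F n q (barMap F (pstA F n) q x) = bn F (n - 1) q x := by
  have := bet_nat F _ _ (pst n) (pstA F n) (pstA_single F n) q x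
  show TM F (io n) (q + 1) (bet F (PG n) q _) = TM F (io (n - 1)) (q + 1) _
  rw [this, TM_TM]
  simp only [io_pst]

/-- Cycles of the bar complex of `PG n`. -/
abbrev pcyc (n q : ℕ) : Submodule F (bC F (PG n) q) :=
  barCycles F (MA F (PG n)) (groupAug F (PG n)) q

theorem bn_Cyc (n q : ℕ) {x : bC F (PG n) q} (hx : x ∈ pcyc F n q) :
    (gSD0 F).Cyc q (n - 1) (bn F n q x) := by
  cases q with
  | zero => trivial
  | succ q =>
    have hx' : pd F n q x = 0 := hx
    have := bn_dd F n q x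
    rw [hx', map_zero, zero_sub] at this
    have := neg_mem this
    rw [neg_neg] at this
    exact this

theorem gn_cyc (n q : ℕ) {x : Ch F GG (q + 1)} (hx : (gSD0 F).Cyc q (n - 1) x) :
    gn F n q x ∈ pcyc F n q := by
  cases q with
  | zero => trivial
  | succ q =>
    show pd F n q (gnT F n q x) = 0
    rw [gn_dd]
    exact gn_GLm F n q hx

theorem gn_Bd (n q : ℕ) {x : Ch F GG (q + 1)} (hx : (gSD0 F).Bd q (n - 1) x) :
    gn F n q x ∈ LinearMap.range (pd F n q) := by
  obtain ⟨y, hy⟩ := hx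
  have : gn F n q (x - dd F GG (q + 1) y) = 0 := gn_GLm F n q hy
  have h2 := gn_dd F n q y
  refine ⟨gnT F n q y, h2.trans ?_⟩
  rw [map_sub, sub_eq_zero] at this
  exact this.symm

theorem bn_Bd (n q : ℕ) {x : bC F (PG n) q} (hx : x ∈ LinearMap.range (pd F n q)) :
    (gSD0 F).Bd q (n - 1) (bn F n q x) := by
  obtain ⟨y, rfl⟩ := hx
  exact ⟨bnT F n q y, bn_dd F n q y⟩

theorem PG_inj (n q : ℕ) (h : 2 * q + 1 ≤ n) (x : bC F (PG (n - 1)) q)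
    (hx : x ∈ pcyc F (n - 1) q)
    (hb : barMap F (pstA F n) q x ∈ LinearMap.range (pd F n q)) :
    x ∈ LinearMap.range (pd F (n - 1) q) := by
  have h1 := bn_Bd F n q hb
  rw [bn_nat] at h1
  have h2 := (SD.St_all (S := gSD F) (n - 1) q (by omega)).1 (bn F (n - 1) q x)
    (bn_Cyc F (n - 1) q hx) h1
  have := gn_Bd F (n - 1) q h2
  rwa [gn_bn] at this

theorem aux_cancel {M : Type} [AddCommGroup M] (a b c t t' : M) (h : t' = t) :
    a - b = a - t - (b - c + (c - t')) := by
  rw [h]; abel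

theorem PG_surj (n q : ℕ) (h : 2 * q + 1 ≤ n) (y : bC F (PG n) q) (hy : y ∈ pcyc F n q) :
    ∃ x ∈ pcyc F (n - 1) q, y - barMap F (pstA F n) q x ∈ LinearMap.range (pd F n q) := by
  obtain ⟨t, ht, hb⟩ := (SD.St_all (S := gSD F) (n - 1) q (by omega)).2 (bn F n q y)
    (bn_Cyc F n q hy)
  have ht' : (gSD0 F).Cyc q (n - 1 - 1) t := ht
  refine ⟨gn F (n - 1) q t, gn_cyc F (n - 1) q ht', ?_⟩
  have h1 : (gSD0 F).Bd q (n - 1 - 1) _ := SD0.Bd_L (S := gSD0 F) (bn_gn F (n - 1) q t)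
  have h2 := prism_Bd F (fun x => x) (fun g => io (n - 1) (rho (n - 1) g)) (n - 1 - 1)
    (fun _ _ _ => rfl) (fun i hi g => by
      have := rho_sg (n - 1) g ⟨i, hi⟩
      simp only at this
      rw [this, map_mul, io_pgen]) q t ht'
  have h3 := SD0.Bd_mono (show n - 1 - 1 ≤ n - 1 by omega) (SD0.Bd_add h1 h2)
  have h4 := SD0.Bd_sub hb h3
  have h5 : (gSD0 F).Bd q (n - 1)
      (show Ch F GG (q + 1) from bn F n q y - bn F (n - 1) q (gn F (n - 1) q t)) := by
    refine Bd_of_eq F ?_ h4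
    exact aux_cancel _ _ _ _ _ (TM_id F (q + 1) t)
  have h6 := gn_Bd F n q h5
  rw [map_sub, gn_bn, ← bn_nat, gn_bn] at h6
  exact h6

end stab
end BRS

namespace BRS

section nxtsec
variable (F : Type) [CommRing F] (R : Type) [Ring R] [Algebra F R]
variable {N : Type} [AddCommGroup N] [Module F N]

/-- Left multiplication on a tensor product. -/
def lact : R ⊗[F] (R ⊗[F] N) →ₗ[F] R ⊗[F] N :=
  (TensorProduct.map (LinearMap.mul' F R) LinearMap.id).comp
    (TensorProduct.assoc F R R N).symm.toLinearMap

theorem lact_tmul (a b : R) (x : N) :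
    lact F R (a ⊗ₜ[F] (b ⊗ₜ[F] x)) = (a * b) ⊗ₜ[F] x := by
  simp [lact]

/-- The recursive step in the definition of `barB`. -/
def nxt (D : R ⊗[F] N →ₗ[F] N) : R ⊗[F] (R ⊗[F] N) →ₗ[F] R ⊗[F] N :=
  -(lact F R) - TensorProduct.map LinearMap.id D

theorem nxt_tmul (D : R ⊗[F] N →ₗ[F] N) (a : R) (x : R ⊗[F] N) :
    nxt F R D (a ⊗ₜ[F] x) = -(lact F R (a ⊗ₜ[F] x)) - a ⊗ₜ[F] D x := by
  simp [nxt]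

theorem barB_nxt (ε : R →ₐ[F] F) (q : ℕ) (x : R ⊗[F] (R ⊗[F] (barC F R q : Type))) :
    barB F R ε (q + 1) x = nxt F R (barB F R ε q) x := by
  induction x using TensorProduct.induction_on with
  | zero => rw [map_zero]; exact map_zero _
  | add x y hx hy => rw [map_add, ← hx, ← hy]; exact map_add (barB F R ε (q + 1)) x y
  | tmul a x =>
    rw [nxt_tmul]
    refine (barB_succ_apply F R ε q a x).trans ?_
    congr 2
    induction x using TensorProduct.induction_on with
    | zero => rw [map_zero, TensorProduct.tmul_zero, map_zero]
    | add x y hx hy => rw [map_add, TensorProduct.tmul_add, map_add, hx, hy]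
    | tmul b x => rw [lact_tmul, barActT_tmul]

end nxtsec

section htpy
variable (F : Type) [CommRing F] {R T : Type} [Ring R] [Algebra F R] [Ring T] [Algebra F T]
variable (θ₁ θ₂ : R →ₐ[F] T) (f : T)

/-- The recursive step of the homotopy. -/
def hnx {N M : Type} [AddCommGroup N] [Module F N] [AddCommGroup M] [Module F M]
    (t : N →ₗ[F] M) (h : N →ₗ[F] T ⊗[F] M) : R ⊗[F] N →ₗ[F] T ⊗[F] (T ⊗[F] M) :=
  (TensorProduct.mk F T (T ⊗[F] M) f).comp (TensorProduct.map θ₁.toLinearMap t) -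
    TensorProduct.map θ₂.toLinearMap h

theorem hnx_tmul {N M : Type} [AddCommGroup N] [Module F N] [AddCommGroup M] [Module F M]
    (t : N →ₗ[F] M) (h : N →ₗ[F] T ⊗[F] M) (a : R) (x : N) :
    hnx F θ₁ θ₂ f t h (a ⊗ₜ[F] x) = f ⊗ₜ[F] (θ₁ a ⊗ₜ[F] t x) - θ₂ a ⊗ₜ[F] h x := by
  simp [hnx]

theorem hnx_eq {N M : Type} [AddCommGroup N] [Module F N] [AddCommGroup M] [Module F M]
    (t : N →ₗ[F] M) (h : N →ₗ[F] T ⊗[F] M) (y : R ⊗[F] N) :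
    hnx F θ₁ θ₂ f t h y = f ⊗ₜ[F] (TensorProduct.map θ₁.toLinearMap t y) -
      TensorProduct.map θ₂.toLinearMap h y := rfl

theorem hnx_lact {N M : Type} [AddCommGroup N] [Module F N] [AddCommGroup M] [Module F M]
    (t : N →ₗ[F] M) (h : N →ₗ[F] T ⊗[F] M) (a : R) (x : R ⊗[F] N) :
    hnx F θ₁ θ₂ f t h (lact F R (a ⊗ₜ[F] x)) =
      f ⊗ₜ[F] (TensorProduct.map θ₁.toLinearMap t (lact F R (a ⊗ₜ[F] x)))
      + lact F T (θ₂ a ⊗ₜ[F] hnx F θ₁ θ₂ f t h x)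
      - (θ₂ a * f) ⊗ₜ[F] (TensorProduct.map θ₁.toLinearMap t x) := by
  induction x using TensorProduct.induction_on with
  | zero => simp only [map_zero, TensorProduct.tmul_zero]; abel
  | add x y hx hy => simp only [map_add, TensorProduct.tmul_add, hx, hy]; abel
  | tmul b x =>
    rw [lact_tmul, hnx_tmul, hnx_tmul, TensorProduct.map_tmul, TensorProduct.tmul_sub, map_sub,
      lact_tmul, lact_tmul, TensorProduct.map_tmul]
    simp only [AlgHom.toLinearMap_apply, map_mul]
    abel

theorem lact_map {N M : Type} [AddCommGroup N] [Module F N] [AddCommGroup M] [Module F M]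
    (t : N →ₗ[F] M) (a : R) (x : R ⊗[F] N) :
    TensorProduct.map θ₁.toLinearMap t (lact F R (a ⊗ₜ[F] x)) =
      lact F T (θ₁ a ⊗ₜ[F] TensorProduct.map θ₁.toLinearMap t x) := by
  induction x using TensorProduct.induction_on with
  | zero => simp only [map_zero, TensorProduct.tmul_zero]
  | add x y hx hy => simp only [map_add, TensorProduct.tmul_add, hx, hy]
  | tmul b x =>
    rw [lact_tmul, TensorProduct.map_tmul, TensorProduct.map_tmul, lact_tmul]
    simp only [AlgHom.toLinearMap_apply, map_mul]

theorem htpy_step (hf : ∀ a, θ₂ a * f = f * θ₁ a)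
    {N M : Type} [AddCommGroup N] [Module F N] [AddCommGroup M] [Module F M]
    (t₁ t₂ : N →ₗ[F] M) (h : N →ₗ[F] T ⊗[F] M)
    (D : R ⊗[F] N →ₗ[F] N) (E : T ⊗[F] M →ₗ[F] M)
    (hD : ∀ y, E (TensorProduct.map θ₁.toLinearMap t₁ y) = t₁ (D y))
    (key : ∀ y, nxt F T E (hnx F θ₁ θ₂ f t₁ h y) + h (D y) =
      - TensorProduct.map θ₂.toLinearMap t₂ y) (y : R ⊗[F] (R ⊗[F] N)) :
    nxt F T (nxt F T E) (hnx F θ₁ θ₂ f (TensorProduct.map θ₁.toLinearMap t₁)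
      (hnx F θ₁ θ₂ f t₁ h) y) + hnx F θ₁ θ₂ f t₁ h (nxt F R D y) =
      - TensorProduct.map θ₂.toLinearMap (TensorProduct.map θ₂.toLinearMap t₂) y := by
  induction y using TensorProduct.induction_on with
  | zero => simp only [map_zero]; simp
  | add x y hx hy =>
    simp only [map_add, neg_add, ← hx, ← hy]; abel
  | tmul a x =>
    rw [hnx_tmul, map_sub, nxt_tmul, nxt_tmul, lact_tmul, nxt_tmul, nxt_tmul, map_sub, map_neg,
      hnx_lact, hnx_tmul, hf, lact_map, TensorProduct.map_tmul, hD]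
    have := key x
    rw [AlgHom.toLinearMap_apply, ← neg_neg (TensorProduct.map θ₂.toLinearMap t₂ x), ← key x]
    simp only [TensorProduct.tmul_neg, TensorProduct.tmul_sub, TensorProduct.tmul_add]
    abel

theorem htpy_base (hf : ∀ a, θ₂ a * f = f * θ₁ a) (ε₁ : R →ₐ[F] F) (ε₂ : T →ₐ[F] F)
    (h1 : ∀ a, ε₂ (θ₁ a) = ε₁ a) (hε : ε₂ f = 1)
    (y : R ⊗[F] F) :
    nxt F T (-TensorProduct.lift ((LinearMap.lsmul F F).comp ε₂.toLinearMap))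
      (hnx F θ₁ θ₂ f LinearMap.id (TensorProduct.mk F T F f) y) +
      TensorProduct.mk F T F f ((-TensorProduct.lift
        ((LinearMap.lsmul F F).comp ε₁.toLinearMap)) y) =
      - TensorProduct.map θ₂.toLinearMap (LinearMap.id : F →ₗ[F] F) y := by
  induction y using TensorProduct.induction_on with
  | zero => simp only [map_zero]; simp
  | add x y hx hy =>
    simp only [map_add, neg_add, ← hx, ← hy]; abel
  | tmul a c =>
    rw [hnx_tmul, map_sub, nxt_tmul, nxt_tmul, lact_tmul, TensorProduct.mk_apply, lact_tmul, hf]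
    simp only [LinearMap.neg_apply, TensorProduct.lift.tmul, LinearMap.comp_apply,
      AlgHom.toLinearMap_apply, LinearMap.lsmul_apply, h1, hε, one_smul, LinearMap.id_apply,
      TensorProduct.map_tmul, TensorProduct.mk_apply, TensorProduct.tmul_neg]
    abel

/-- The homotopy. -/
def hT : ∀ q, (barC F R q : Type) →ₗ[F] T ⊗[F] (barC F T q : Type)
  | 0 => (show F →ₗ[F] T ⊗[F] F from TensorProduct.mk F T F f)
  | (q + 1) => (show R ⊗[F] (barC F R q : Type) →ₗ[F] T ⊗[F] (T ⊗[F] (barC F T q : Type)) from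
      hnx F θ₁ θ₂ f (barMap F θ₁ q) (hT q))

/-- The homotopy in positive degrees. -/
def hS (q : ℕ) : R ⊗[F] (barC F R q : Type) →ₗ[F] T ⊗[F] (T ⊗[F] (barC F T q : Type)) :=
  hnx F θ₁ θ₂ f (barMap F θ₁ q) (hT F θ₁ θ₂ f q)

theorem htpy_key (hf : ∀ a, θ₂ a * f = f * θ₁ a) (ε₁ : R →ₐ[F] F) (ε₂ : T →ₐ[F] F)
    (h1 : ε₂.comp θ₁ = ε₁) (hε : ε₂ f = 1) (q : ℕ) :
    ∀ y : R ⊗[F] (barC F R q : Type),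
    nxt F T (barB F T ε₂ q) (hS F θ₁ θ₂ f q y) + hT F θ₁ θ₂ f q (barB F R ε₁ q y) =
      - TensorProduct.map θ₂.toLinearMap (barMap F θ₂ q) y := by
  induction q with
  | zero => exact htpy_base F θ₁ θ₂ f hf ε₁ ε₂ (fun a => by rw [← h1]; rfl) hε
  | succ q ih =>
    intro y
    have e1 : barB F T ε₂ (q + 1) = nxt F T (barB F T ε₂ q) :=
      LinearMap.ext (barB_nxt F T ε₂ q)
    have e2 : barB F R ε₁ (q + 1) = nxt F R (barB F R ε₁ q) :=
      LinearMap.ext (barB_nxt F R ε₁ q)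
    have hh := htpy_step F θ₁ θ₂ f hf (barMap F θ₁ q) (barMap F θ₂ q) (hT F θ₁ θ₂ f q)
      (barB F R ε₁ q) (barB F T ε₂ q)
      (fun y => LinearMap.congr_fun (barB_comm F ε₁ ε₂ θ₁ h1 q) y) ih y
    rw [e1, e2]
    exact hh

theorem htpy_lin (ε₁ : R →ₐ[F] F) (ε₂ : T →ₐ[F] F)
    (h2 : ∀ a, ε₂ (θ₂ a) = ε₁ a) (hε : ε₂ f = 1)
    {N M : Type} [AddCommGroup N] [Module F N] [AddCommGroup M] [Module F M]
    (t : N →ₗ[F] M) (h : N →ₗ[F] T ⊗[F] M) (y : R ⊗[F] N) :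
    TensorProduct.lift ((LinearMap.lsmul F (T ⊗[F] M)).comp ε₂.toLinearMap)
      (hnx F θ₁ θ₂ f t h y) + h (TensorProduct.lift
        ((LinearMap.lsmul F N).comp ε₁.toLinearMap) y)
    = TensorProduct.map θ₁.toLinearMap t y := by
  induction y using TensorProduct.induction_on with
  | zero => simp only [map_zero]; simp
  | add x y hx hy => simp only [map_add, ← hx, ← hy]; abel
  | tmul a x =>
    rw [hnx_tmul, map_sub]
    simp only [TensorProduct.lift.tmul, LinearMap.comp_apply,
      AlgHom.toLinearMap_apply, LinearMap.lsmul_apply, h2, hε, one_smul, 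
      TensorProduct.map_tmul, map_smul]
    abel

theorem htpy_range (hf : ∀ a, θ₂ a * f = f * θ₁ a) (ε₁ : R →ₐ[F] F) (ε₂ : T →ₐ[F] F)
    (h1 : ε₂.comp θ₁ = ε₁) (h2 : ε₂.comp θ₂ = ε₁) (hε : ε₂ f = 1) (q : ℕ)
    (x : (barC F R q : Type)) (hx : x ∈ barCycles F R ε₁ q) :
    barMap F θ₁ q x - barMap F θ₂ q x ∈ LinearMap.range (bard F T ε₂ q) := by
  cases q with
  | zero =>
    have : barMap F θ₁ 0 x - barMap F θ₂ 0 x = 0 := sub_self (show F from x)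
    rw [this]; exact zero_mem _
  | succ q =>
    have key : ∀ y : R ⊗[F] (barC F R q : Type), bard F R ε₁ q y = 0 →
        TensorProduct.lift ((LinearMap.lsmul F (T ⊗[F] (barC F T q : Type))).comp ε₂.toLinearMap)
          (hS F θ₁ θ₂ f q y) + nxt F T (barB F T ε₂ q) (hS F θ₁ θ₂ f q y)
        = TensorProduct.map θ₁.toLinearMap (barMap F θ₁ q) y
          - TensorProduct.map θ₂.toLinearMap (barMap F θ₂ q) y := by
      intro y hy
      have k1 := htpy_lin F θ₁ θ₂ f ε₁ ε₂ (fun a => by rw [← h2]; rfl) hε (barMap F θ₁ q)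
        (hT F θ₁ θ₂ f q) y
      have k2 := htpy_key F θ₁ θ₂ f hf ε₁ ε₂ h1 hε q y
      have k3 : hT F θ₁ θ₂ f q (TensorProduct.lift
            ((LinearMap.lsmul F (barC F R q : Type)).comp ε₁.toLinearMap) y)
          + hT F θ₁ θ₂ f q (barB F R ε₁ q y) = 0 := by
        rw [← map_add]
        exact (congrArg (hT F θ₁ θ₂ f q) hy).trans (map_zero _)
      rw [← k1, sub_eq_add_neg, ← k2]
      have := eq_neg_of_add_eq_zero_right k3
      rw [this]
      unfold hS
      abel
    have e1 : barB F T ε₂ (q + 1) = nxt F T (barB F T ε₂ q) :=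
      LinearMap.ext (barB_nxt F T ε₂ q)
    refine ⟨hS F θ₁ θ₂ f q x, ?_⟩
    refine Eq.trans ?_ (key x hx)
    unfold bard
    rw [e1]
    rfl

end htpy
end BRS

namespace BRS

section bralg
variable (F : Type) [CommRing F] (n : ℕ) (e : F)

/-- Generators of the braided rook algebra. -/
def rb (i : Fin (n - 1)) : BRAlg F n e := RingQuot.mkAlgHom F (BRRel F n e) (BRb F n i)
def rbi (i : Fin (n - 1)) : BRAlg F n e := RingQuot.mkAlgHom F (BRRel F n e) (BRbi F n i)
def rp (j : Fin n) : BRAlg F n e := RingQuot.mkAlgHom F (BRRel F n e) (BRp F n j)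

theorem rb_rbi (i : Fin (n - 1)) : rb F n e i * rbi F n e i = 1 := by
  have := RingQuot.mkAlgHom_rel F (BRRel.b_inv_r (k := F) (ε := e) i)
  rwa [map_mul, map_one] at this

theorem rbi_rb (i : Fin (n - 1)) : rbi F n e i * rb F n e i = 1 := by
  have := RingQuot.mkAlgHom_rel F (BRRel.b_inv_l (k := F) (ε := e) i)
  rwa [map_mul, map_one] at this

theorem rb_braid {i j : Fin (n - 1)} (h : (j : ℕ) = (i : ℕ) + 1) :
    rb F n e i * rb F n e j * rb F n e i = rb F n e j * rb F n e i * rb F n e j := by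
  have := RingQuot.mkAlgHom_rel F (BRRel.b_braid (k := F) (ε := e) i j h)
  simp only [map_mul] at this; exact this

theorem rb_comm {i j : Fin (n - 1)} (h : (i : ℕ) + 1 < j) :
    rb F n e i * rb F n e j = rb F n e j * rb F n e i := by
  have := RingQuot.mkAlgHom_rel F (BRRel.bb_comm (k := F) (ε := e) i j h)
  simp only [map_mul] at this; exact this

theorem rp_sq (j : Fin n) : rp F n e j * rp F n e j = e • rp F n e j := by
  have := RingQuot.mkAlgHom_rel F (BRRel.p_sq (k := F) (ε := e) j)
  simp only [map_mul, map_smul] at this; exact this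

theorem rp_comm (i j : Fin n) : rp F n e i * rp F n e j = rp F n e j * rp F n e i := by
  rcases lt_trichotomy (i : ℕ) j with h | h | h
  · have := RingQuot.mkAlgHom_rel F (BRRel.pp_comm (k := F) (ε := e) i j h)
    simp only [map_mul] at this; exact this
  · rw [Fin.ext h]
  · have := RingQuot.mkAlgHom_rel F (BRRel.pp_comm (k := F) (ε := e) j i h)
    simp only [map_mul] at this; exact this.symm

theorem rb_rp_comm {i : Fin (n - 1)} {l : Fin n} (h : (l : ℕ) ≠ (i : ℕ) ∧ (l : ℕ) ≠ (i : ℕ) + 1) :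
    rb F n e i * rp F n e l = rp F n e l * rb F n e i := by
  have := RingQuot.mkAlgHom_rel F (BRRel.bp_comm (k := F) (ε := e) i l h)
  simp only [map_mul] at this; exact this

theorem rb_slide {i : Fin (n - 1)} {j j' : Fin n} (h : (j : ℕ) = (i : ℕ))
    (h' : (j' : ℕ) = (i : ℕ) + 1) :
    rb F n e i * rp F n e j = rp F n e j' * rb F n e i := by
  have := RingQuot.mkAlgHom_rel F (BRRel.bp_slide (k := F) (ε := e) i j j' h h')
  simp only [map_mul] at this; exact this

theorem rb_slide' {i : Fin (n - 1)} {j j' : Fin n} (h : (j : ℕ) = (i : ℕ))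
    (h' : (j' : ℕ) = (i : ℕ) + 1) :
    rb F n e i * rp F n e j' = rp F n e j * rb F n e i := by
  have := RingQuot.mkAlgHom_rel F (BRRel.bp_slide' (k := F) (ε := e) i j j' h h')
  simp only [map_mul] at this; exact this

theorem rb_rp_ex (i : Fin (n - 1)) (l : Fin n) :
    (∃ m, rb F n e i * rp F n e l = rp F n e m * rb F n e i) ∧
    (∃ m, rp F n e l * rb F n e i = rb F n e i * rp F n e m) := by
  have hi := i.2
  by_cases h1 : (l : ℕ) = i
  · exact ⟨⟨⟨i + 1, by omega⟩, rb_slide F n e h1 rfl⟩,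
      ⟨⟨i + 1, by omega⟩, (rb_slide' F n e h1 rfl).symm⟩⟩
  · by_cases h2 : (l : ℕ) = i + 1
    · exact ⟨⟨⟨i, by omega⟩, rb_slide' F n e rfl h2⟩,
        ⟨⟨i, by omega⟩, (rb_slide F n e rfl h2).symm⟩⟩
    · exact ⟨⟨l, rb_rp_comm F n e ⟨h1, h2⟩⟩, ⟨l, (rb_rp_comm F n e ⟨h1, h2⟩).symm⟩⟩

theorem BR_ext {R : Type} [Ring R] [Algebra F R] {f g : BRAlg F n e →ₐ[F] R}
    (h1 : ∀ i, f (rb F n e i) = g (rb F n e i)) (h2 : ∀ i, f (rbi F n e i) = g (rbi F n e i))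
    (h3 : ∀ i, f (rp F n e i) = g (rp F n e i)) : f = g := by
  apply RingQuot.ringQuot_ext'
  apply FreeAlgebra.hom_ext
  funext x
  cases x with
  | b i => exact h1 i
  | bi i => exact h2 i
  | p i => exact h3 i

/-- Induction principle on generators. -/
theorem BR_ind {P : BRAlg F n e → Prop} (hc : ∀ c : F, P (algebraMap F _ c))
    (h1 : ∀ i, P (rb F n e i)) (h2 : ∀ i, P (rbi F n e i)) (h3 : ∀ i, P (rp F n e i))
    (ha : ∀ x y, P x → P y → P (x + y)) (hm : ∀ x y, P x → P y → P (x * y))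
    (x : BRAlg F n e) : P x := by
  obtain ⟨y, rfl⟩ := RingQuot.mkAlgHom_surjective F (BRRel F n e) x
  induction y using FreeAlgebra.induction with
  | grade0 c => rw [AlgHom.commutes]; exact hc c
  | grade1 x =>
    cases x with
    | b i => exact h1 i
    | bi i => exact h2 i
    | p i => exact h3 i
  | mul a b ha hb => rw [map_mul]; exact hm _ _ ha hb
  | add a b hb hc => rw [map_add]; exact ha _ _ hb hc

/-! The idempotent. -/
variable (c : F)

/-- Partial products. -/
def fl : List (Fin n) → BRAlg F n e
  | [] => 1
  | (j :: l) => (1 - c • rp F n e j) * fl l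

theorem fl_comm (l : List (Fin n)) (j : Fin n) :
    fl F n e c l * rp F n e j = rp F n e j * fl F n e c l := by
  induction l with
  | nil => simp [fl]
  | cons i l ih =>
    have h : (1 - c • rp F n e i) * rp F n e j = rp F n e j * (1 - c • rp F n e i) := by
      rw [sub_mul, mul_sub, smul_mul_assoc, mul_smul_comm, rp_comm, one_mul, mul_one]
    rw [fl, mul_assoc, ih, ← mul_assoc, h, mul_assoc]

theorem fl_zero (hc : c * e = 1) (l : List (Fin n)) (j : Fin n) (hj : j ∈ l) :
    rp F n e j * fl F n e c l = 0 := by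
  induction l with
  | nil => simp at hj
  | cons i l ih =>
    rw [fl]
    rcases List.mem_cons.1 hj with rfl | h
    · rw [← mul_assoc, mul_sub, mul_smul_comm, rp_sq, smul_smul, hc, one_smul, mul_one, sub_self,
        zero_mul]
    · have h' : (1 - c • rp F n e i) * rp F n e j = rp F n e j * (1 - c • rp F n e i) := by
        rw [sub_mul, mul_sub, smul_mul_assoc, mul_smul_comm, rp_comm, one_mul, mul_one]
      rw [← mul_assoc, ← h', mul_assoc, ih h, mul_zero]

theorem fl_left (l : List (Fin n)) (z : BRAlg F n e) (hz : ∀ j, rp F n e j * z = 0) :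
    fl F n e c l * z = z := by
  induction l with
  | nil => simp [fl]
  | cons i l ih => rw [fl, mul_assoc, ih, sub_mul, smul_mul_assoc, hz, smul_zero, one_mul, sub_zero]

theorem fl_right (l : List (Fin n)) (z : BRAlg F n e) (hz : ∀ j, z * rp F n e j = 0) :
    z * fl F n e c l = z := by
  induction l with
  | nil => simp [fl]
  | cons i l ih =>
    rw [fl, ← mul_assoc, mul_sub, mul_smul_comm, hz, smul_zero, mul_one, sub_zero, ih]

/-- The idempotent. -/
def ff : BRAlg F n e := fl F n e c (List.finRange n)

theorem rp_ff (hc : c * e = 1) (j : Fin n) : rp F n e j * ff F n e c = 0 :=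
  fl_zero F n e c hc _ j (List.mem_finRange j)

theorem ff_rp (hc : c * e = 1) (j : Fin n) : ff F n e c * rp F n e j = 0 :=
  (fl_comm F n e c _ j).trans (rp_ff F n e c hc j)

theorem ff_rb (hc : c * e = 1) (i : Fin (n - 1)) :
    rb F n e i * ff F n e c = ff F n e c * rb F n e i := by
  have h1 : ff F n e c * (rb F n e i * ff F n e c) = rb F n e i * ff F n e c := by
    apply fl_left
    intro j
    obtain ⟨m, hm⟩ := (rb_rp_ex F n e i j).2
    rw [← mul_assoc, hm, mul_assoc, rp_ff F n e c hc, mul_zero]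
  have h2 : (ff F n e c * rb F n e i) * ff F n e c = ff F n e c * rb F n e i := by
    apply fl_right
    intro j
    obtain ⟨m, hm⟩ := (rb_rp_ex F n e i j).1
    rw [mul_assoc, hm, ← mul_assoc, ff_rp F n e c hc, zero_mul]
  rw [← h1, ← mul_assoc, h2]

theorem ff_rbi (hc : c * e = 1) (i : Fin (n - 1)) :
    rbi F n e i * ff F n e c = ff F n e c * rbi F n e i := by
  have h := ff_rb F n e c hc i
  calc rbi F n e i * ff F n e c
      = rbi F n e i * (ff F n e c * rb F n e i) * rbi F n e i := by
        rw [mul_assoc, mul_assoc, rb_rbi, mul_one]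
    _ = ff F n e c * rbi F n e i := by rw [← h, ← mul_assoc, rbi_rb, one_mul]

theorem ff_central (hc : c * e = 1) (x : BRAlg F n e) : x * ff F n e c = ff F n e c * x := by
  induction x using BR_ind with
  | hc r => exact Algebra.commutes r _
  | h1 i => exact ff_rb F n e c hc i
  | h2 i => exact ff_rbi F n e c hc i
  | h3 i => rw [rp_ff F n e c hc, ff_rp F n e c hc]
  | ha x y hx hy => rw [add_mul, mul_add, hx, hy]
  | hm x y hx hy => rw [mul_assoc, hy, ← mul_assoc, hx, mul_assoc]

theorem BRaug_rb (i : Fin (n - 1)) : BRaug F n e (rb F n e i) = 1 := by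
  simp [BRaug, rb, BRb, RingQuot.liftAlgHom_mkAlgHom_apply, FreeAlgebra.lift_ι_apply]
theorem BRaug_rbi (i : Fin (n - 1)) : BRaug F n e (rbi F n e i) = 1 := by
  simp [BRaug, rbi, BRbi, RingQuot.liftAlgHom_mkAlgHom_apply, FreeAlgebra.lift_ι_apply]
theorem BRaug_rp (i : Fin n) : BRaug F n e (rp F n e i) = 0 := by
  simp [BRaug, rp, BRp, RingQuot.liftAlgHom_mkAlgHom_apply, FreeAlgebra.lift_ι_apply]

theorem BRaug_ff : BRaug F n e (ff F n e c) = 1 := by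
  unfold ff
  induction (List.finRange n) with
  | nil => simp [fl]
  | cons i l ih => rw [fl, map_mul, ih, map_sub, map_smul, BRaug_rp]; simp

/-! Comparison with the group algebra. -/

/-- Images of generators. -/
def phG : BRGen n → MA F (PG n)
  | .b i => MonoidAlgebra.single (pgen n i) 1
  | .bi i => MonoidAlgebra.single (pgen n i)⁻¹ 1
  | .p _ => 0

/-- Projection to the group algebra. -/
def ph : BRAlg F n e →ₐ[F] MA F (PG n) :=
  RingQuot.liftAlgHom F ⟨FreeAlgebra.lift F (phG F n), by
    intro x y h
    cases h with
    | b_braid i j h =>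
      simp only [map_mul, FreeAlgebra.lift_ι_apply, phG, MonoidAlgebra.single_mul_single,
        pgen_braid h]
    | bb_comm i j h =>
      simp only [map_mul, FreeAlgebra.lift_ι_apply, phG, MonoidAlgebra.single_mul_single,
        pgen_comm h]
    | _ => simp [BRb, BRbi, BRp, FreeAlgebra.lift_ι_apply, phG, MonoidAlgebra.single_mul_single,
        MonoidAlgebra.one_def]⟩

theorem ph_rb (i : Fin (n - 1)) : ph F n e (rb F n e i) = MonoidAlgebra.single (pgen n i) 1 := by
  simp [ph, rb, BRb, RingQuot.liftAlgHom_mkAlgHom_apply, FreeAlgebra.lift_ι_apply, phG]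
theorem ph_rbi (i : Fin (n - 1)) :
    ph F n e (rbi F n e i) = MonoidAlgebra.single (pgen n i)⁻¹ 1 := by
  simp [ph, rbi, BRbi, RingQuot.liftAlgHom_mkAlgHom_apply, FreeAlgebra.lift_ι_apply, phG]
theorem ph_rp (i : Fin n) : ph F n e (rp F n e i) = 0 := by
  simp [ph, rp, BRp, RingQuot.liftAlgHom_mkAlgHom_apply, FreeAlgebra.lift_ι_apply, phG]

/-- The generators as units. -/
def bu (i : Fin (n - 1)) : (BRAlg F n e)ˣ :=
  ⟨rb F n e i, rbi F n e i, rb_rbi F n e i, rbi_rb F n e i⟩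

/-- The braid group in the units. -/
def pu : PG n →* (BRAlg F n e)ˣ :=
  PGlift (bu F n e) (fun _ _ h => Units.ext (rb_comm F n e h))
    (fun _ _ h => Units.ext (rb_braid F n e h))

theorem pu_pgen (i : Fin (n - 1)) : pu F n e (pgen n i) = bu F n e i := PGlift_pgen _ _ _ _

/-- The section. -/
def ps : MA F (PG n) →ₐ[F] BRAlg F n e :=
  MonoidAlgebra.lift F (BRAlg F n e) (PG n) ((Units.coeHom _).comp (pu F n e))

theorem ps_single (g : PG n) : ps F n e (MonoidAlgebra.single g 1) = (pu F n e g : BRAlg F n e) := by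
  simp [ps, MonoidAlgebra.lift_single]

theorem ph_pu (g : PG n) : ph F n e (pu F n e g) = MonoidAlgebra.single g 1 := by
  have : (Units.map (ph F n e : BRAlg F n e →* MA F (PG n))).comp (pu F n e) =
      MonoidHom.toHomUnits (MonoidAlgebra.of F (PG n)) := by
    apply PresentedGroup.ext
    intro i
    apply Units.ext
    change ph F n e (pu F n e (pgen n i)) = MonoidAlgebra.single (pgen n i) 1
    rw [pu_pgen]
    exact ph_rb F n e i
  exact congrArg Units.val (DFunLike.congr_fun this g)

theorem ph_ps : (ph F n e).comp (ps F n e) = AlgHom.id F (MA F (PG n)) := by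
  apply MonoidAlgebra.algHom_ext
  · intro g
    rw [AlgHom.comp_apply, ps_single, ph_pu]; rfl
  · exact AlgHom.ext fun r => by
      rw [Subsingleton.elim ((((ph F n e).comp (ps F n e)).comp MonoidAlgebra.singleOneAlgHom))
        (((AlgHom.id F (MA F (PG n))).comp MonoidAlgebra.singleOneAlgHom))]

theorem ph_aug : (groupAug F (PG n)).comp (ph F n e) = BRaug F n e := by
  apply BR_ext
  · intro i; rw [AlgHom.comp_apply, ph_rb, groupAug_single, BRaug_rb]
  · intro i; rw [AlgHom.comp_apply, ph_rbi, groupAug_single, BRaug_rbi]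
  · intro i; rw [AlgHom.comp_apply, ph_rp, map_zero, BRaug_rp]

theorem ps_aug : (BRaug F n e).comp (ps F n e) = groupAug F (PG n) := by
  rw [← ph_aug, AlgHom.comp_assoc, ph_ps, AlgHom.comp_id]

theorem ff_psph (hc : c * e = 1) (x : BRAlg F n e) :
    ff F n e c * x = ff F n e c * ps F n e (ph F n e x) := by
  induction x using BR_ind with
  | hc r => rw [AlgHom.commutes, AlgHom.commutes]
  | h1 i => rw [ph_rb, ps_single, pu_pgen]; rfl
  | h2 i => rw [ph_rbi, ps_single, map_inv, pu_pgen]; rfl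
  | h3 i => rw [ph_rp, map_zero, ff_rp F n e c hc, mul_zero]
  | ha x y hx hy => rw [map_add, map_add, mul_add, mul_add, hx, hy]
  | hm x y hx hy =>
    rw [map_mul, map_mul, ← mul_assoc, hx, ← ff_central F n e c hc, mul_assoc, hy, ← mul_assoc,
      ff_central F n e c hc, mul_assoc]

theorem ph_incl : (ph F n e).comp (BRincl F n e) = (pstA F n).comp (ph F (n - 1) e) := by
  have hp : ∀ i, pst n (pgen (n - 1) i) = pgen n (Fin.castLE (by omega) i) :=
    fun i => PGlift_pgen _ _ _ _
  have i1 : ∀ i, BRincl F n e (rb F (n - 1) e i) = rb F n e (Fin.castLE (by omega) i) := by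
    intro i
    simp [BRincl, rb, BRb, BRGenMap, RingQuot.liftAlgHom_mkAlgHom_apply, FreeAlgebra.lift_ι_apply]
  have i2 : ∀ i, BRincl F n e (rbi F (n - 1) e i) = rbi F n e (Fin.castLE (by omega) i) := by
    intro i
    simp [BRincl, rbi, BRbi, BRGenMap, RingQuot.liftAlgHom_mkAlgHom_apply,
      FreeAlgebra.lift_ι_apply]
  have i3 : ∀ i, BRincl F n e (rp F (n - 1) e i) = rp F n e (Fin.castLE (by omega) i) := by
    intro i
    simp [BRincl, rp, BRp, BRGenMap, RingQuot.liftAlgHom_mkAlgHom_apply, FreeAlgebra.lift_ι_apply]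
  apply BR_ext
  · intro i
    rw [AlgHom.comp_apply, AlgHom.comp_apply, i1, ph_rb, ph_rb, pstA_single, hp]
  · intro i
    rw [AlgHom.comp_apply, AlgHom.comp_apply, i2, ph_rbi, ph_rbi, pstA_single, map_inv, hp]
  · intro i
    rw [AlgHom.comp_apply, AlgHom.comp_apply, i3, ph_rp, ph_rp, map_zero]

end bralg

section fin
variable (F : Type) [CommRing F]

theorem barMap_comp {R S T : Type} [Ring R] [Algebra F R] [Ring S] [Algebra F S] [Ring T]
    [Algebra F T] (f : R →ₐ[F] S) (g : S →ₐ[F] T) (q : ℕ) (x : (barC F R q : Type)) :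
    barMap F g q (barMap F f q x) = barMap F (g.comp f) q x := by
  induction q with
  | zero => rfl
  | succ q ih =>
    have : ∀ y : R ⊗[F] (barC F R q : Type), TensorProduct.map g.toLinearMap (barMap F g q)
        (TensorProduct.map f.toLinearMap (barMap F f q) y)
        = TensorProduct.map (g.comp f).toLinearMap (barMap F (g.comp f) q) y := by
      intro y
      induction y using TensorProduct.induction_on with
      | zero => simp only [map_zero]
      | add x y hx hy => simp only [map_add, hx, hy]
      | tmul a x => simp only [TensorProduct.map_tmul, ih]; rfl
    exact this x

theorem barMap_id {R : Type} [Ring R] [Algebra F R] (q : ℕ) (x : (barC F R q : Type)) :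
    barMap F (AlgHom.id F R) q x = x := by
  induction q with
  | zero => rfl
  | succ q ih =>
    have : ∀ y : R ⊗[F] (barC F R q : Type), TensorProduct.map (AlgHom.id F R).toLinearMap
        (barMap F (AlgHom.id F R) q) y = y := by
      intro y
      induction y using TensorProduct.induction_on with
      | zero => simp only [map_zero]
      | add x y hx hy => simp only [map_add, hx, hy]
      | tmul a x => simp only [TensorProduct.map_tmul, ih]; rfl
    exact this x

theorem barMap_range {R S : Type} [Ring R] [Algebra F R] [Ring S] [Algebra F S]
    (ε₁ : R →ₐ[F] F) (ε₂ : S →ₐ[F] F) (f : R →ₐ[F] S) (h : ε₂.comp f = ε₁) (q : ℕ)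
    {x : (barC F R q : Type)} (hx : x ∈ LinearMap.range (bard F R ε₁ q)) :
    barMap F f q x ∈ LinearMap.range (bard F S ε₂ q) := by
  obtain ⟨y, rfl⟩ := hx
  exact ⟨_, LinearMap.congr_fun (barMap_comm F ε₁ ε₂ f h q) y⟩

variable (n q : ℕ) (e : F)

/-- Cycles and boundaries of braided rook algebras. -/
abbrev rcyc : Submodule F (barC F (BRAlg F n e) q : Type) := barCycles F _ (BRaug F n e) q
abbrev rbd : Submodule F (barC F (BRAlg F n e) q : Type) :=
  LinearMap.range (bard F _ (BRaug F n e) q)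

theorem BR_htpy (c : F) (hc : c * e = 1) {x : (barC F (BRAlg F n e) q : Type)}
    (hx : x ∈ rcyc F n q e) :
    barMap F (ps F n e) q (barMap F (ph F n e) q x) - x ∈ rbd F n q e := by
  have := htpy_range F ((ps F n e).comp (ph F n e)) (AlgHom.id F _) (ff F n e c)
    (fun a => by
      show a * _ = _ * ps F n e (ph F n e a)
      rw [ff_central F n e c hc, ff_psph F n e c hc])
    (BRaug F n e) (BRaug F n e)
    (by rw [← AlgHom.comp_assoc, ps_aug, ph_aug]) (AlgHom.comp_id _) (BRaug_ff F n e c) q x hx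
  rw [barMap_id] at this
  rwa [barMap_comp]

theorem BR_inj (c : F) (hc : c * e = 1) (h : 2 * q + 1 ≤ n)
    (x : (barC F (BRAlg F (n - 1) e) q : Type)) (hx : x ∈ rcyc F (n - 1) q e)
    (hb : barMap F (BRincl F n e) q x ∈ rbd F n q e) : x ∈ rbd F (n - 1) q e := by
  have h1 := barMap_range F _ _ (ph F n e) (ph_aug F n e) q hb
  rw [barMap_comp, ph_incl, ← barMap_comp] at h1
  have h2 := PG_inj F n q h _ (barMap_cycles F _ _ _ (ph_aug F (n - 1) e) q x hx) h1
  have h3 := barMap_range F _ _ (ps F (n - 1) e) (ps_aug F (n - 1) e) q h2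
  have h4 := sub_mem h3 (BR_htpy F (n - 1) q e c hc hx)
  rwa [sub_sub_cancel] at h4

theorem BR_surj (c : F) (hc : c * e = 1) (h : 2 * q + 1 ≤ n)
    (y : (barC F (BRAlg F n e) q : Type)) (hy : y ∈ rcyc F n q e) :
    ∃ x ∈ rcyc F (n - 1) q e, y - barMap F (BRincl F n e) q x ∈ rbd F n q e := by
  obtain ⟨x, hx, hb⟩ := PG_surj F n q h _ (barMap_cycles F _ _ _ (ph_aug F n e) q y hy)
  have hx' := barMap_cycles F _ _ _ (ps_aug F (n - 1) e) q x hx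
  refine ⟨barMap F (ps F (n - 1) e) q x, hx', ?_⟩
  have hz := barMap_cycles F _ _ _ (BRaug_incl F n e) q _ hx'
  have h1 := BR_htpy F n q e c hc hz
  have h2 := BR_htpy F n q e c hc hy
  have h3 := barMap_range F _ _ (ps F n e) (ps_aug F n e) q hb
  have e1 : barMap F (ph F n e) q (barMap F (BRincl F n e) q (barMap F (ps F (n - 1) e) q x))
      = barMap F (pstA F n) q x := by
    rw [barMap_comp, ph_incl, barMap_comp, AlgHom.comp_assoc, ph_ps, AlgHom.comp_id]
  rw [e1] at h1
  rw [map_sub] at h3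
  have h4 := add_mem (sub_mem h3 h2) h1
  convert h4 using 1
  abel

end fin
end BRS

/-- **Homological stability for braided rook algebras.**
Let `k` be a commutative unital ring and `ε ∈ k` invertible.  The morphism
`Tor_q^{BR_{n-1}(ε)}(𝟙,𝟙) → Tor_q^{BR_n(ε)}(𝟙,𝟙)` induced by the inclusion
`BR_{n-1}(ε) → BR_n(ε)` is an isomorphism for `n ≥ 2q+1`. -/
theorem braided_rook_homological_stability (k : Type) [CommRing k] (ε : k)
    (hε : IsUnit ε) (n q : ℕ) (h : 2 * q + 1 ≤ n) :
    Function.Bijective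
      (torMap k (BRaug k (n - 1) ε) (BRaug k n ε) (BRincl k n ε) (BRaug_incl k n ε) q) := by
  obtain ⟨c, hc⟩ := hε.exists_left_inv
  constructor
  · rw [injective_iff_map_eq_zero]
    intro a ha
    obtain ⟨x, rfl⟩ := Submodule.Quotient.mk_surjective _ a
    have h1 := (Submodule.Quotient.mk_eq_zero _).1 ha
    exact (Submodule.Quotient.mk_eq_zero _).2 (BRS.BR_inj k n q ε c hc h x.1 x.2 h1)
  · intro b
    obtain ⟨y, rfl⟩ := Submodule.Quotient.mk_surjective _ b
    obtain ⟨x, hx, hb⟩ := BRS.BR_surj k n q ε c hc h y.1 y.2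
    refine ⟨Submodule.Quotient.mk ⟨x, hx⟩, ?_⟩
    refine ((Submodule.Quotient.eq _).2 ?_).symm
    exact hb

end
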